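/- Every continuous self-map of the 2-sphere is realizable in ℝ⁴: for every continuous map f : S² → S² and every ε > 0 there exists a continuous injective map g : S² → ℝ³ × ℝ such that dist(g(x), ι(f(x))) < ε for all x ∈ S², where ι : S² → ℝ³ × ℝ is given by ι(y) = (y, 0). (Since S² is compact, such a g is automatically a topological embedding.) -/

import Mathlib

open scoped ComplexConjugate

/-- Positions in the plane such that each is strictly separated from the others by a line. -/
theorem exists_separated_points (ι : Type*) [Finite ι] :
    ∃ h : ι → ℂ, ∀ i, ∃ w : ℂ, ∀ j, j ≠ i → 4 * ‖w‖ < inner ℝ w (h j - h i) := by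
  obtain ⟨n, ⟨e⟩⟩ := Finite.exists_equiv_fin ι
  set K : ℝ := 4 * (2 * n + 1) + 1 with hK
  refine ⟨fun i => ⟨K * (e i : ℕ), K * ((e i : ℕ) : ℝ) ^ 2⟩, fun i => ⟨⟨-2 * (e i : ℕ), 1⟩, ?_⟩⟩
  intro j hj
  have hne : ((e j : ℕ) : ℤ) - (e i : ℕ) ≠ 0 := by
    intro h
    apply hj
    apply e.injective
    apply Fin.ext
    omega
  have h1 : (1 : ℝ) ≤ (((e j : ℕ) : ℝ) - (e i : ℕ)) ^ 2 := by
    have : (1 : ℤ) ≤ (((e j : ℕ) : ℤ) - (e i : ℕ)) ^ 2 := by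
      have := sq_nonneg (((e j : ℕ) : ℤ) - (e i : ℕ))
      have h2 : (((e j : ℕ) : ℤ) - (e i : ℕ)) ^ 2 ≠ 0 := pow_ne_zero 2 hne
      omega
    exact_mod_cast this
  have hn : ((e i : ℕ) : ℝ) ≤ n := by exact_mod_cast (e i).2.le
  have h0 : (0 : ℝ) ≤ (e i : ℕ) := Nat.cast_nonneg _
  have hw : ‖(⟨-2 * (e i : ℕ), 1⟩ : ℂ)‖ ≤ 2 * n + 1 := by
    refine (Complex.norm_le_abs_re_add_abs_im _).trans ?_
    simp only [abs_mul, abs_neg, abs_one, Nat.abs_cast]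
    norm_num
  have hin : inner ℝ (⟨-2 * (e i : ℕ), 1⟩ : ℂ)
      ((⟨K * (e j : ℕ), K * ((e j : ℕ) : ℝ) ^ 2⟩ : ℂ) - ⟨K * (e i : ℕ), K * ((e i : ℕ) : ℝ) ^ 2⟩)
      = K * (((e j : ℕ) : ℝ) - (e i : ℕ)) ^ 2 := by
    rw [Complex.inner]
    simp [Complex.mul_re]
    ring
  rw [hin]
  have hKpos : 0 < K := by positivity
  nlinarith

theorem lt_norm_of_mem_convexHull {ι : Type*} {h : ι → ℂ} {i : ι} {w : ℂ}
    (hw : ∀ j, j ≠ i → 4 * ‖w‖ < inner ℝ w (h j - h i)) {z : ℂ}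
    (hz : z ∈ convexHull ℝ (h '' {j | j ≠ i})) : 4 < ‖z - h i‖ := by
  have hc : Convex ℝ {z : ℂ | 4 * ‖w‖ < inner ℝ w (z - h i)} := by
    have : {z : ℂ | 4 * ‖w‖ < inner ℝ w (z - h i)}
        = {z : ℂ | 4 * ‖w‖ + inner ℝ w (h i) < innerSL ℝ w z} := by
      ext z
      simp only [Set.mem_ofPred_eq, inner_sub_right, innerSL_apply_apply]
      constructor <;> intro h <;> linarith
    rw [this]
    exact convex_halfSpace_gt (innerSL ℝ w).toLinearMap.isLinear _
  have hz' := convexHull_min (s := h '' {j | j ≠ i}) (by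
    rintro _ ⟨j, hj, rfl⟩
    exact hw j hj) hc hz
  simp only [Set.mem_ofPred_eq] at hz'
  have := real_inner_le_norm w (z - h i)
  have hpos : 0 < ‖w‖ := by
    rcases (norm_nonneg w).eq_or_lt with h0 | h0
    · rw [← h0] at hz' this; rw [zero_mul] at this; linarith
    · exact h0
  nlinarith

theorem exp_two_pi_div_inj {L t t' : ℝ} (hL : 0 < L) (ht : t ∈ Set.Icc 0 L) (ht' : t' ∈ Set.Icc 0 L)
    (h : Complex.exp ((2 * Real.pi * t / L : ℝ) * Complex.I)
      = Complex.exp ((2 * Real.pi * t' / L : ℝ) * Complex.I)) :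
    t = t' ∨ (t = 0 ∧ t' = L) ∨ (t = L ∧ t' = 0) := by
  rw [Complex.exp_eq_exp_iff_exists_int] at h
  obtain ⟨n, hn⟩ := h
  have h1 : (2 * Real.pi * t / L : ℝ) = 2 * Real.pi * t' / L + n * (2 * Real.pi) := by
    have h2 : ((2 * Real.pi * t / L : ℝ) : ℂ) * Complex.I
      = ((2 * Real.pi * t' / L + n * (2 * Real.pi) : ℝ) : ℂ) * Complex.I := by
      rw [hn]; push_cast; ring
    exact_mod_cast mul_right_cancel₀ Complex.I_ne_zero h2
  have h3 : t = t' + n * L := by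
    field_simp at h1
    have := Real.pi_pos
    nlinarith
  obtain ⟨ha, hb⟩ := ht
  obtain ⟨ha', hb'⟩ := ht'
  have hn1 : n ≤ 1 := by
    by_contra hc
    have : (2 : ℝ) ≤ n := by exact_mod_cast (by omega : 2 ≤ n)
    nlinarith
  have hn2 : -1 ≤ n := by
    by_contra hc
    have : (n : ℝ) ≤ -2 := by exact_mod_cast (by omega : n ≤ -2)
    nlinarith
  have : n = 0 ∨ n = 1 ∨ n = -1 := by omega
  rcases this with rfl | rfl | rfl
  · left; simpa using h3
  · right; right; push_cast at h3; constructor <;> linarith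
  · right; left; push_cast at h3; constructor <;> linarith

theorem nat_add_unit_eq {j j' : ℕ} {v v' : ℝ} (hv : v ∈ Set.Icc (0 : ℝ) 1)
    (hv' : v' ∈ Set.Icc (0 : ℝ) 1) (h : (j : ℝ) + v = j' + v') :
    (j = j' ∧ v = v') ∨ (j' = j + 1 ∧ v = 1 ∧ v' = 0) ∨ (j = j' + 1 ∧ v = 0 ∧ v' = 1) := by
  obtain ⟨ha, hb⟩ := hv
  obtain ⟨ha', hb'⟩ := hv'
  have h1 : j' ≤ j + 1 := by
    have : (j' : ℝ) ≤ j + 1 := by linarith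
    exact_mod_cast this
  have h2 : j ≤ j' + 1 := by
    have : (j : ℝ) ≤ j' + 1 := by linarith
    exact_mod_cast this
  have : j = j' ∨ j' = j + 1 ∨ j = j' + 1 := by omega
  rcases this with rfl | rfl | rfl
  · left; exact ⟨rfl, by linarith⟩
  · right; left; push_cast at h; exact ⟨rfl, by linarith, by linarith⟩
  · right; right; push_cast at h; exact ⟨rfl, by linarith, by linarith⟩

/-- The end of the unit interval over `ω` is glued to the beginning of the one over `γ ω`. -/
def CircleGlue {Φ : Type*} (γ : Equiv.Perm Φ) (p p' : Φ × ℝ) : Prop :=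
  p.2 = 1 ∧ p'.2 = 0 ∧ p'.1 = γ p.1

theorem circleGlue_of_coord {Φ : Type*} {γ : Equiv.Perm Φ} {a : Φ} {L : ℕ} (hL : (γ ^ L) a = a)
    {j j' : ℕ} (hj : j < L) (hj' : j' < L) {v v' : ℝ} (hv : v ∈ Set.Icc (0 : ℝ) 1)
    (hv' : v' ∈ Set.Icc (0 : ℝ) 1)
    (h : (j : ℝ) + v = j' + v' ∨ ((j : ℝ) + v = 0 ∧ (j' : ℝ) + v' = L) ∨
      ((j : ℝ) + v = L ∧ (j' : ℝ) + v' = 0)) :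
    ((γ ^ j) a, v) = ((γ ^ j') a, v') ∨ CircleGlue γ ((γ ^ j) a, v) ((γ ^ j') a, v') ∨
      CircleGlue γ ((γ ^ j') a, v') ((γ ^ j) a, v) := by
  have key : ∀ {j j' : ℕ}, j < L → j' < L → ∀ {v v' : ℝ}, v ∈ Set.Icc (0 : ℝ) 1 →
      v' ∈ Set.Icc (0 : ℝ) 1 → (j : ℝ) + v = L → (j' : ℝ) + v' = 0 →
      CircleGlue γ ((γ ^ j) a, v) ((γ ^ j') a, v') := by
    intro j j' hj hj' v v' hv hv' h1 h2
    have hj0 : (0 : ℝ) ≤ j' := Nat.cast_nonneg _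
    have e1 : (j' : ℝ) = 0 := by linarith [hv'.1]
    have e2 : j' = 0 := by exact_mod_cast e1
    have e3 : ((j + 1 : ℕ) : ℝ) ≤ L := by exact_mod_cast hj
    push_cast at e3
    have e5 : (j : ℝ) + 1 = L := by linarith [hv.2]
    have e4 : j + 1 = L := by exact_mod_cast e5
    refine ⟨?_, ?_, ?_⟩
    · simp only; linarith
    · simp only; linarith
    · simp only [e2, pow_zero, Equiv.Perm.one_apply]
      rw [← Equiv.Perm.mul_apply, ← pow_succ', e4, hL]
  rcases h with h | h | h
  · rcases nat_add_unit_eq hv hv' h with ⟨rfl, rfl⟩ | ⟨rfl, rfl, rfl⟩ | ⟨rfl, rfl, rfl⟩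
    · left; rfl
    · right; left
      exact ⟨rfl, rfl, by simp [pow_succ']⟩
    · right; right
      exact ⟨rfl, rfl, by simp [pow_succ']⟩
  · right; right; exact key hj' hj hv' hv h.2 h.1
  · right; left; exact key hj hj' hv hv' h.1 h.2

section Cycles

variable {Φ : Type*}

/-- The cycle of a permutation through a point. -/
def cycleSet (γ : Equiv.Perm Φ) (ω : Φ) : Set Φ := {x | γ.SameCycle ω x}

theorem cycleSet_nonempty (γ : Equiv.Perm Φ) (ω : Φ) : (cycleSet γ ω).Nonempty :=
  ⟨ω, Equiv.Perm.SameCycle.refl _ _⟩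

theorem cycleSet_eq_iff {γ : Equiv.Perm Φ} {ω ω' : Φ} :
    cycleSet γ ω = cycleSet γ ω' ↔ γ.SameCycle ω ω' := by
  constructor
  · intro h
    have : ω' ∈ cycleSet γ ω := h ▸ Equiv.Perm.SameCycle.refl γ ω'
    exact this
  · intro h
    ext x
    exact ⟨fun hx => h.symm.trans hx, fun hx => h.trans hx⟩

/-- A point of the cycle which depends only on the cycle as a set. -/
noncomputable def cycleBase (γ : Equiv.Perm Φ) (ω : Φ) : Φ := (cycleSet_nonempty γ ω).some

theorem cycleBase_congr {γ γ' : Equiv.Perm Φ} {ω ω' : Φ} (h : cycleSet γ ω = cycleSet γ' ω') :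
    cycleBase γ ω = cycleBase γ' ω' := by
  unfold cycleBase
  congr!

theorem sameCycle_cycleBase (γ : Equiv.Perm Φ) (ω : Φ) : γ.SameCycle ω (cycleBase γ ω) :=
  (cycleSet_nonempty γ ω).some_mem

/-- The number of steps from the base point of the cycle. -/
noncomputable def cycleIndex (γ : Equiv.Perm Φ) (ω : Φ) : ℕ :=
  sInf {n | (γ ^ n) (cycleBase γ ω) = ω}

theorem pow_cycleIndex [Finite Φ] (γ : Equiv.Perm Φ) (ω : Φ) :
    (γ ^ cycleIndex γ ω) (cycleBase γ ω) = ω := by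
  have h : {n | (γ ^ n) (cycleBase γ ω) = ω}.Nonempty :=
    (sameCycle_cycleBase γ ω).symm.exists_nat_pow_eq
  exact Nat.sInf_mem h

/-- The length of the cycle through a point. -/
noncomputable def cycleLength (γ : Equiv.Perm Φ) (ω : Φ) : ℕ := Function.minimalPeriod γ ω

theorem cycleLength_pos [Finite Φ] (γ : Equiv.Perm Φ) (ω : Φ) : 0 < cycleLength γ ω :=
  Function.minimalPeriod_pos_of_mem_periodicPts (γ.injective.mem_periodicPts ω)

theorem pow_cycleLength (γ : Equiv.Perm Φ) (ω : Φ) : (γ ^ cycleLength γ ω) ω = ω := by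
  rw [← Equiv.Perm.iterate_eq_pow]
  exact Function.iterate_minimalPeriod

theorem cycleLength_eq [Finite Φ] {γ : Equiv.Perm Φ} {ω ω' : Φ} (h : γ.SameCycle ω ω') :
    cycleLength γ ω' = cycleLength γ ω := by
  obtain ⟨n, rfl⟩ := h.exists_nat_pow_eq
  unfold cycleLength
  rw [← Equiv.Perm.iterate_eq_pow]
  exact Function.minimalPeriod_apply_iterate (γ.injective.mem_periodicPts ω) n

theorem mod_cycleLength_eq [Finite Φ] {γ : Equiv.Perm Φ} {ω : Φ} {m n : ℕ}
    (h : (γ ^ m) ω = (γ ^ n) ω) :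
    m % cycleLength γ ω = n % cycleLength γ ω := by
  have hp := cycleLength_pos γ ω
  apply Function.iterate_injOn_Iio_minimalPeriod (f := γ) (x := ω) (Nat.mod_lt _ hp)
    (Nat.mod_lt _ hp)
  simp only [Function.iterate_mod_minimalPeriod_eq, Equiv.Perm.iterate_eq_pow]
  exact h

theorem exists_lt_cycleLength [Finite Φ] {γ : Equiv.Perm Φ} {ω ω' : Φ} (h : γ.SameCycle ω ω') :
    ∃ j < cycleLength γ ω, (γ ^ j) ω = ω' := by
  obtain ⟨n, rfl⟩ := h.exists_nat_pow_eq
  refine ⟨n % cycleLength γ ω, Nat.mod_lt _ (cycleLength_pos γ ω), ?_⟩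
  simp only [← Equiv.Perm.iterate_eq_pow, cycleLength, Function.iterate_mod_minimalPeriod_eq]

/-- The unit circle parametrization of a cycle. -/
noncomputable def homeDir (γ : Equiv.Perm Φ) (ω : Φ) (v : ℝ) : ℂ :=
  Complex.exp ((2 * Real.pi * (cycleIndex γ ω + v) / cycleLength γ ω : ℝ) * Complex.I)

theorem norm_homeDir (γ : Equiv.Perm Φ) (ω : Φ) (v : ℝ) : ‖homeDir γ ω v‖ = 1 :=
  Complex.norm_exp_ofReal_mul_I _

theorem continuous_homeDir (γ : Equiv.Perm Φ) (ω : Φ) : Continuous (homeDir γ ω) := by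
  unfold homeDir
  fun_prop

theorem homeDir_pow [Finite Φ] (γ : Equiv.Perm Φ) (ω : Φ) (j : ℕ) (v : ℝ) :
    homeDir γ ((γ ^ j) ω) v = homeDir γ ω 0 *
      Complex.exp ((2 * Real.pi * (j + v) / cycleLength γ ω : ℝ) * Complex.I) := by
  have hs : γ.SameCycle ω ((γ ^ j) ω) := by
    rw [Equiv.Perm.sameCycle_pow_right]
  have hb : cycleBase γ ((γ ^ j) ω) = cycleBase γ ω :=
    cycleBase_congr (cycleSet_eq_iff.2 hs.symm)
  have h1 := pow_cycleIndex γ ((γ ^ j) ω)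
  rw [hb] at h1
  have h2 : (γ ^ (j + cycleIndex γ ω)) (cycleBase γ ω) = (γ ^ j) ω := by
    rw [pow_add, Equiv.Perm.mul_apply, pow_cycleIndex]
  have h3 := mod_cycleLength_eq (h1.trans h2.symm)
  rw [cycleLength_eq (sameCycle_cycleBase γ ω)] at h3
  obtain ⟨z, hz⟩ := (Nat.modEq_iff_dvd.1 h3.symm : _ ∣ _)
  have hL : (cycleLength γ ω : ℝ) ≠ 0 := by exact_mod_cast (cycleLength_pos γ ω).ne'
  unfold homeDir
  rw [cycleLength_eq hs, ← Complex.exp_add, Complex.exp_eq_exp_iff_exists_int]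
  refine ⟨z, ?_⟩
  have hz' : (cycleIndex γ ((γ ^ j) ω) : ℝ) = j + cycleIndex γ ω + cycleLength γ ω * z := by
    have : (cycleIndex γ ((γ ^ j) ω) : ℤ) = j + cycleIndex γ ω + cycleLength γ ω * z := by
      push_cast [-Equiv.Perm.coe_pow] at hz; linarith
    exact_mod_cast this
  have : (2 * Real.pi * (cycleIndex γ ((γ ^ j) ω) + v) / cycleLength γ ω : ℝ)
      = 2 * Real.pi * (cycleIndex γ ω + 0) / cycleLength γ ω
        + 2 * Real.pi * (j + v) / cycleLength γ ω + z * (2 * Real.pi) := by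
    rw [hz']; field_simp; ring
  rw [this]
  push_cast
  ring

theorem cycleSet_congr [Finite Φ] {γ δ : Equiv.Perm Φ} {ω : Φ}
    (h : ∀ n : ℕ, (γ ^ n) ω = (δ ^ n) ω) :
    cycleSet γ ω = cycleSet δ ω := by
  ext x
  constructor
  · intro hx
    obtain ⟨n, rfl⟩ := Equiv.Perm.SameCycle.exists_nat_pow_eq hx
    rw [h n]
    exact Equiv.Perm.sameCycle_pow_right.2 (Equiv.Perm.SameCycle.refl _ _)
  · intro hx
    obtain ⟨n, rfl⟩ := Equiv.Perm.SameCycle.exists_nat_pow_eq hx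
    rw [← h n]
    exact Equiv.Perm.sameCycle_pow_right.2 (Equiv.Perm.SameCycle.refl _ _)

theorem homeDir_congr [Finite Φ] {γ δ : Equiv.Perm Φ} {ω : Φ} (h : ∀ n : ℕ, (γ ^ n) ω = (δ ^ n) ω) :
    homeDir γ ω = homeDir δ ω := by
  have hb := cycleBase_congr (cycleSet_congr h)
  have hp : ∀ n : ℕ, (γ ^ n) (cycleBase γ ω) = (δ ^ n) (cycleBase γ ω) := by
    obtain ⟨m, hm⟩ := (sameCycle_cycleBase γ ω).exists_nat_pow_eq
    intro n
    rw [← hm, ← Equiv.Perm.mul_apply, ← pow_add, h, pow_add, Equiv.Perm.mul_apply, h]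
  have hi : cycleIndex γ ω = cycleIndex δ ω := by
    unfold cycleIndex
    simp only [hp, ← hb]
  have hl : cycleLength γ ω = cycleLength δ ω := by
    unfold cycleLength
    rw [Function.minimalPeriod_eq_minimalPeriod_iff]
    intro n
    simp only [Function.IsPeriodicPt, Function.IsFixedPt, Equiv.Perm.iterate_eq_pow, h]
  unfold homeDir
  rw [hi, hl]

/-- Two points of the same cycle with equal parametrization agree up to gluing. -/
theorem circleGlue_of_homeDir_eq [Finite Φ] {γ : Equiv.Perm Φ} {ω ω' : Φ} (hs : γ.SameCycle ω ω')
    {v v' : ℝ}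
    (hv : v ∈ Set.Icc (0 : ℝ) 1) (hv' : v' ∈ Set.Icc (0 : ℝ) 1)
    (h : homeDir γ ω v = homeDir γ ω' v') :
    (ω, v) = (ω', v') ∨ CircleGlue γ (ω, v) (ω', v') ∨ CircleGlue γ (ω', v') (ω, v) := by
  obtain ⟨j, hj, rfl⟩ := exists_lt_cycleLength hs
  have h0 := homeDir_pow γ ω 0 v
  rw [pow_zero, Equiv.Perm.one_apply] at h0
  rw [homeDir_pow, h0] at h
  have h1 := mul_left_cancel₀ (by
    rw [← norm_ne_zero_iff, norm_homeDir]; exact one_ne_zero) h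
  have hL : (0 : ℝ) < cycleLength γ ω := by exact_mod_cast cycleLength_pos γ ω
  have bd : ∀ {i : ℕ}, i < cycleLength γ ω → ∀ {u : ℝ}, u ∈ Set.Icc (0 : ℝ) 1 →
      (i : ℝ) + u ∈ Set.Icc (0 : ℝ) (cycleLength γ ω) := by
    intro i hi u hu
    have e3 : ((i + 1 : ℕ) : ℝ) ≤ cycleLength γ ω := by exact_mod_cast hi
    push_cast at e3
    exact ⟨add_nonneg (Nat.cast_nonneg _) hu.1, by linarith [hu.2]⟩
  have h2 := exp_two_pi_div_inj hL (bd (cycleLength_pos γ ω) hv) (bd hj hv') h1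
  simpa using circleGlue_of_coord (pow_cycleLength γ ω) (cycleLength_pos γ ω) hj hv hv' h2

theorem homeDir_glue [Finite Φ] (γ : Equiv.Perm Φ) (ω : Φ) : homeDir γ ω 1 = homeDir γ (γ ω) 0 := by
  have h0 := homeDir_pow γ ω 0 1
  have h1 := homeDir_pow γ ω 1 0
  simp only [pow_zero, Equiv.Perm.one_apply, pow_one] at h0 h1
  rw [h0, h1]
  norm_num

end Cycles

section Geometry

theorem exists_exp_mul_I_eq {z : ℂ} (hz : ‖z‖ = 1) :
    ∃ β : ℝ, Complex.exp (β * Complex.I) = z := by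
  refine ⟨z.arg, ?_⟩
  have := Complex.norm_mul_exp_arg_mul_I z
  rwa [hz, Complex.ofReal_one, one_mul] at this

theorem eq_of_sub_eq_two_mul {u u' w : ℂ} (hu : ‖u‖ = 1) (hu' : ‖u'‖ = 1) (hw : ‖w‖ = 1)
    (h : u' - u = 2 * w) : u' = w ∧ u = -w := by
  have h1 := parallelogram_law_with_norm ℝ w (u' - w)
  have e1 : w + (u' - w) = u' := by ring
  have e2 : w - (u' - w) = -u := by linear_combination -h
  rw [e1, e2, norm_neg, hu, hu', hw] at h1
  have h2 : ‖u' - w‖ = 0 := by nlinarith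
  have h3 : u' = w := sub_eq_zero.1 (norm_eq_zero.1 h2)
  exact ⟨h3, by rw [h3] at h; linear_combination -h⟩

/-- The polar angle along two tangent unit circles traversed one after the other in times
`L₁` and `L₂`, seen from the point of tangency. -/
noncomputable def eightAngle (L₁ L₂ t : ℝ) : ℝ :=
  -(Real.pi / 2) + Real.pi * min t L₁ / L₁ + Real.pi * max (t - L₁) 0 / L₂

theorem eightAngle_of_le {L₁ L₂ t : ℝ} (h : t ≤ L₁) :
    eightAngle L₁ L₂ t = -(Real.pi / 2) + Real.pi * t / L₁ := by
  unfold eightAngle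
  rw [min_eq_left h, max_eq_right (by linarith)]
  ring

theorem eightAngle_of_ge {L₁ L₂ t : ℝ} (hL : 0 < L₁) (h : L₁ ≤ t) :
    eightAngle L₁ L₂ t = Real.pi / 2 + Real.pi * (t - L₁) / L₂ := by
  unfold eightAngle
  rw [min_eq_right h, max_eq_left (by linarith), mul_div_assoc Real.pi L₁, div_self hL.ne']
  ring

theorem strictMono_eightAngle {L₁ L₂ : ℝ} (h₁ : 0 < L₁) (h₂ : 0 < L₂) :
    StrictMono (eightAngle L₁ L₂) := by
  have hpi := Real.pi_pos
  intro t t' htt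
  rcases le_or_gt t' L₁ with h | h
  · rw [eightAngle_of_le h, eightAngle_of_le (by linarith)]
    gcongr
  · rcases le_or_gt L₁ t with h' | h'
    · rw [eightAngle_of_ge h₁ h.le, eightAngle_of_ge h₁ h']
      gcongr
    · rw [eightAngle_of_ge h₁ h.le, eightAngle_of_le h'.le]
      have e1 : Real.pi * t / L₁ < Real.pi := by
        rw [div_lt_iff₀ h₁]; gcongr
      have e2 : 0 < Real.pi * (t' - L₁) / L₂ := by
        have : 0 < t' - L₁ := by linarith
        positivity
      linarith

theorem two_cos_mul_exp (x : ℝ) :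
    ((2 * Real.cos x : ℝ) : ℂ) * Complex.exp (x * Complex.I)
      = 1 + Complex.exp ((2 * x : ℝ) * Complex.I) := by
  push_cast
  rw [Complex.two_cos, add_mul, ← Complex.exp_add, ← Complex.exp_add]
  rw [show (x : ℂ) * Complex.I + x * Complex.I = 2 * x * Complex.I by ring,
    show -(x : ℂ) * Complex.I + x * Complex.I = 0 by ring, Complex.exp_zero]
  ring

theorem eight_of_le {L₁ L₂ t : ℝ} (h₁ : 0 < L₁) (h0 : 0 ≤ t) (h : t ≤ L₁) :
    ((2 * |Real.cos (eightAngle L₁ L₂ t)| : ℝ) : ℂ)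
        * Complex.exp ((eightAngle L₁ L₂ t : ℝ) * Complex.I)
      = 1 - Complex.exp ((2 * Real.pi * t / L₁ : ℝ) * Complex.I) := by
  have hpi := Real.pi_pos
  rw [eightAngle_of_le h, abs_of_nonneg, two_cos_mul_exp]
  · rw [show 2 * (-(Real.pi / 2) + Real.pi * t / L₁) = 2 * Real.pi * t / L₁ - Real.pi by ring]
    rw [Complex.ofReal_sub, sub_mul, Complex.exp_sub, Complex.exp_pi_mul_I]
    ring
  · apply Real.cos_nonneg_of_mem_Icc
    have e0 : 0 ≤ Real.pi * t / L₁ := by positivity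
    have e1 : Real.pi * t / L₁ ≤ Real.pi := by
      rw [div_le_iff₀ h₁]; gcongr
    constructor <;> linarith

theorem eight_of_ge {L₁ L₂ t : ℝ} (h₁ : 0 < L₁) (h₂ : 0 < L₂) (h0 : L₁ ≤ t) (h : t ≤ L₁ + L₂) :
    ((2 * |Real.cos (eightAngle L₁ L₂ t)| : ℝ) : ℂ)
        * Complex.exp ((eightAngle L₁ L₂ t : ℝ) * Complex.I)
      = -1 + Complex.exp ((2 * Real.pi * (t - L₁) / L₂ : ℝ) * Complex.I) := by
  have hpi := Real.pi_pos
  have ht : 0 ≤ t - L₁ := by linarith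
  rw [eightAngle_of_ge h₁ h0, abs_of_nonpos]
  · rw [show (2 * -Real.cos (Real.pi / 2 + Real.pi * (t - L₁) / L₂))
      = -(2 * Real.cos (Real.pi / 2 + Real.pi * (t - L₁) / L₂)) by ring, Complex.ofReal_neg,
      neg_mul, two_cos_mul_exp]
    rw [show 2 * (Real.pi / 2 + Real.pi * (t - L₁) / L₂)
      = Real.pi + 2 * Real.pi * (t - L₁) / L₂ by ring]
    rw [Complex.ofReal_add, add_mul, Complex.exp_add, Complex.exp_pi_mul_I]
    ring
  · have e0 : 0 ≤ Real.pi * (t - L₁) / L₂ := by positivity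
    have e1 : Real.pi * (t - L₁) / L₂ ≤ Real.pi := by
      rw [div_le_iff₀ h₂]; gcongr; linarith
    exact Real.cos_nonpos_of_pi_div_two_le_of_le (by linarith) (by linarith)

/-- A star-shaped closed curve interpolating between a figure eight (`s = 0`) and a round
circle (`s = 1`). -/
noncomputable def starCurve (L₁ L₂ θ α s t : ℝ) : ℂ :=
  ((s + (1 - s) * (2 * |Real.cos (eightAngle L₁ L₂ t)|) : ℝ) : ℂ) *
    Complex.exp ((s * (θ + 2 * Real.pi * t / (L₁ + L₂)) + (1 - s) * (α + eightAngle L₁ L₂ t) : ℝ)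
      * Complex.I)

theorem continuous_starCurve (L₁ L₂ θ α : ℝ) :
    Continuous (fun p : ℝ × ℝ => starCurve L₁ L₂ θ α p.1 p.2) := by
  unfold starCurve eightAngle
  fun_prop

theorem norm_starCurve_le {L₁ L₂ θ α s t : ℝ} (hs : s ∈ Set.Icc (0 : ℝ) 1) :
    ‖starCurve L₁ L₂ θ α s t‖ ≤ 2 := by
  unfold starCurve
  rw [norm_mul, Complex.norm_exp_ofReal_mul_I, mul_one, Complex.norm_real, Real.norm_eq_abs,
    abs_le]
  have h1 := Real.abs_cos_le_one (eightAngle L₁ L₂ t)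
  have h2 := abs_nonneg (Real.cos (eightAngle L₁ L₂ t))
  constructor <;> nlinarith [hs.1, hs.2]

theorem starCurve_period {L₁ L₂ : ℝ} (h₁ : 0 < L₁) (h₂ : 0 < L₂) (θ α s : ℝ) :
    starCurve L₁ L₂ θ α s (L₁ + L₂) = starCurve L₁ L₂ θ α s 0 := by
  unfold starCurve
  have hL : L₁ + L₂ ≠ 0 := by positivity
  have e : eightAngle L₁ L₂ (L₁ + L₂) = eightAngle L₁ L₂ 0 + 2 * Real.pi := by
    rw [eightAngle_of_ge h₁ (by linarith), eightAngle_of_le h₁.le]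
    field_simp
    ring
  rw [e, Real.cos_add_two_pi]
  congr 1
  rw [Complex.exp_eq_exp_iff_exists_int]
  refine ⟨1, ?_⟩
  have : s * (θ + 2 * Real.pi * (L₁ + L₂) / (L₁ + L₂)) + (1 - s) *
      (α + (eightAngle L₁ L₂ 0 + 2 * Real.pi))
      = s * (θ + 2 * Real.pi * 0 / (L₁ + L₂)) + (1 - s) * (α + eightAngle L₁ L₂ 0)
        + 2 * Real.pi := by
    field_simp
    ring
  rw [this]
  push_cast
  ring

theorem starCurve_inj {L₁ L₂ : ℝ} (h₁ : 0 < L₁) (h₂ : 0 < L₂) {θ α s : ℝ}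
    (hs : s ∈ Set.Ioc (0 : ℝ) 1) {t t' : ℝ} (ht : t ∈ Set.Icc 0 (L₁ + L₂))
    (ht' : t' ∈ Set.Icc 0 (L₁ + L₂)) (h : starCurve L₁ L₂ θ α s t = starCurve L₁ L₂ θ α s t') :
    t = t' ∨ (t = 0 ∧ t' = L₁ + L₂) ∨ (t = L₁ + L₂ ∧ t' = 0) := by
  have hpi := Real.pi_pos
  set Θ : ℝ → ℝ := fun t => s * (θ + 2 * Real.pi * t / (L₁ + L₂))
    + (1 - s) * (α + eightAngle L₁ L₂ t) with hΘ
  have hmono : StrictMono Θ := by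
    intro x y hxy
    have e1 := (strictMono_eightAngle h₁ h₂).monotone hxy.le
    have e2 : 2 * Real.pi * x / (L₁ + L₂) < 2 * Real.pi * y / (L₁ + L₂) := by gcongr
    simp only [hΘ]
    nlinarith [hs.1, hs.2]
  have hper : Θ (L₁ + L₂) = Θ 0 + 2 * Real.pi := by
    simp only [hΘ]
    rw [eightAngle_of_ge h₁ (by linarith), eightAngle_of_le h₁.le]
    field_simp
    ring
  have hrad : ∀ x, 0 < s + (1 - s) * (2 * |Real.cos (eightAngle L₁ L₂ x)|) := by
    intro x
    have := abs_nonneg (Real.cos (eightAngle L₁ L₂ x))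
    nlinarith [hs.1, hs.2, mul_nonneg (sub_nonneg.2 hs.2) this]
  have hexp : Complex.exp ((Θ t : ℝ) * Complex.I) = Complex.exp ((Θ t' : ℝ) * Complex.I) := by
    unfold starCurve at h
    have hn := congrArg norm h
    rw [norm_mul, norm_mul, Complex.norm_exp_ofReal_mul_I, Complex.norm_exp_ofReal_mul_I,
      Complex.norm_real, Complex.norm_real, Real.norm_eq_abs, Real.norm_eq_abs,
      abs_of_pos (hrad t), abs_of_pos (hrad t'), mul_one, mul_one] at hn
    rw [hn] at h
    exact mul_left_cancel₀ (by exact_mod_cast (hrad t').ne') h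
  rw [Complex.exp_eq_exp_iff_exists_int] at hexp
  obtain ⟨n, hn⟩ := hexp
  have h1 : Θ t = Θ t' + n * (2 * Real.pi) := by
    have h2 : ((Θ t : ℝ) : ℂ) * Complex.I = ((Θ t' + n * (2 * Real.pi) : ℝ) : ℂ) * Complex.I := by
      rw [hn]; push_cast; ring
    exact_mod_cast mul_right_cancel₀ Complex.I_ne_zero h2
  have b1 := hmono.monotone ht.1
  have b2 := hmono.monotone ht.2
  have b1' := hmono.monotone ht'.1
  have b2' := hmono.monotone ht'.2
  have hn1 : n ≤ 1 := by
    by_contra hc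
    have : (2 : ℝ) ≤ n := by exact_mod_cast (by omega : 2 ≤ n)
    nlinarith
  have hn2 : -1 ≤ n := by
    by_contra hc
    have : (n : ℝ) ≤ -2 := by exact_mod_cast (by omega : n ≤ -2)
    nlinarith
  have : n = 0 ∨ n = 1 ∨ n = -1 := by omega
  rcases this with rfl | rfl | rfl
  · left; exact hmono.injective (by simpa using h1)
  · right; right; push_cast at h1
    exact ⟨hmono.injective (by linarith), hmono.injective (by linarith)⟩
  · right; left; push_cast at h1
    exact ⟨hmono.injective (by linarith), hmono.injective (by linarith)⟩

theorem starCurve_zero (L₁ L₂ θ α t : ℝ) :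
    starCurve L₁ L₂ θ α 0 t = Complex.exp (α * Complex.I) *
      (((2 * |Real.cos (eightAngle L₁ L₂ t)| : ℝ) : ℂ)
        * Complex.exp ((eightAngle L₁ L₂ t : ℝ) * Complex.I)) := by
  unfold starCurve
  rw [mul_left_comm (Complex.exp _), ← Complex.exp_add]
  congr 2
  · ring
  · push_cast; ring

theorem starCurve_one (L₁ L₂ θ α t : ℝ) :
    starCurve L₁ L₂ θ α 1 t = Complex.exp (θ * Complex.I) *
      Complex.exp ((2 * Real.pi * t / (L₁ + L₂) : ℝ) * Complex.I) := by
  unfold starCurve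
  rw [← Complex.exp_add]
  push_cast
  ring_nf

end Geometry

section Merge

variable {Φ : Type*}

theorem pow_apply_ne_of_add_one_lt [Finite Φ] {δ : Equiv.Perm Φ} {d : Φ} {j : ℕ}
    (hj : j + 1 < cycleLength δ (δ d)) : (δ ^ j) (δ d) ≠ d := by
  intro h
  have h1 : (δ ^ (j + 1)) (δ d) = (δ ^ 0) (δ d) := by
    rw [pow_succ', Equiv.Perm.mul_apply, h]; simp
  have h2 := mod_cycleLength_eq h1
  rw [Nat.mod_eq_of_lt hj, Nat.zero_mod] at h2
  omega

theorem not_sameCycle_pow {δ : Equiv.Perm Φ} {d e : Φ} (h : ¬ δ.SameCycle d e) (j : ℕ) :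
    (δ ^ j) (δ d) ≠ e := by
  rintro rfl
  apply h
  rw [Equiv.Perm.sameCycle_pow_right, Equiv.Perm.sameCycle_apply_right]

theorem mul_swap_pow [Finite Φ] [DecidableEq Φ] {δ : Equiv.Perm Φ} {d e : Φ}
    (h : ¬ δ.SameCycle d e) {j : ℕ}
    (hj : j < cycleLength δ (δ d)) :
    ((δ * Equiv.swap d e) ^ j) (δ d) = (δ ^ j) (δ d) := by
  induction j with
  | zero => rfl
  | succ j ih =>
    rw [pow_succ', Equiv.Perm.mul_apply, ih (by omega), Equiv.Perm.mul_apply,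
      Equiv.swap_apply_of_ne_of_ne (pow_apply_ne_of_add_one_lt hj) (not_sameCycle_pow h j),
      pow_succ', Equiv.Perm.mul_apply]

theorem mul_swap_pow_length [Finite Φ] [DecidableEq Φ] {δ : Equiv.Perm Φ} {d e : Φ}
    (h : ¬ δ.SameCycle d e) :
    ((δ * Equiv.swap d e) ^ cycleLength δ (δ d)) (δ d) = δ e := by
  have hp := cycleLength_pos δ (δ d)
  obtain ⟨k, hk⟩ : ∃ k, cycleLength δ (δ d) = k + 1 := ⟨cycleLength δ (δ d) - 1, by omega⟩
  have h1 : (δ ^ k) (δ d) = d := by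
    have := pow_cycleLength δ (δ d)
    rw [hk, pow_succ', Equiv.Perm.mul_apply] at this
    exact δ.injective this
  rw [hk, pow_succ', Equiv.Perm.mul_apply, mul_swap_pow h (by omega), h1, Equiv.Perm.mul_apply,
    Equiv.swap_apply_left]

theorem mul_swap_pow_add [Finite Φ] [DecidableEq Φ] {δ : Equiv.Perm Φ} {d e : Φ}
    (h : ¬ δ.SameCycle d e) {j : ℕ}
    (hj : j < cycleLength δ (δ e)) :
    ((δ * Equiv.swap d e) ^ (cycleLength δ (δ d) + j)) (δ d) = (δ ^ j) (δ e) := by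
  rw [add_comm, pow_add, Equiv.Perm.mul_apply, mul_swap_pow_length h, Equiv.swap_comm,
    mul_swap_pow (fun h' => h h'.symm) hj]

theorem cycleLength_mul_swap [Finite Φ] [DecidableEq Φ] {δ : Equiv.Perm Φ} {d e : Φ}
    (h : ¬ δ.SameCycle d e) :
    cycleLength (δ * Equiv.swap d e) (δ d) = cycleLength δ (δ d) + cycleLength δ (δ e) := by
  have hper : ((δ * Equiv.swap d e) ^ (cycleLength δ (δ d) + cycleLength δ (δ e))) (δ d)
      = δ d := by
    rw [add_comm, pow_add, Equiv.Perm.mul_apply, mul_swap_pow_length h, Equiv.swap_comm,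
      mul_swap_pow_length (fun h' => h h'.symm)]
  have hle : cycleLength (δ * Equiv.swap d e) (δ d)
      ≤ cycleLength δ (δ d) + cycleLength δ (δ e) := by
    apply Function.IsPeriodicPt.minimalPeriod_le (by have := cycleLength_pos δ (δ d); omega)
    rw [Function.IsPeriodicPt, Function.IsFixedPt, Equiv.Perm.iterate_eq_pow]
    exact hper
  refine hle.antisymm (not_lt.1 fun hlt => ?_)
  have hk := pow_cycleLength (δ * Equiv.swap d e) (δ d)
  have hkpos := cycleLength_pos (δ * Equiv.swap d e) (δ d)
  rcases lt_or_ge (cycleLength (δ * Equiv.swap d e) (δ d)) (cycleLength δ (δ d)) with h1 | h1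
  · rw [mul_swap_pow h h1] at hk
    have h2 := mod_cycleLength_eq (n := 0) (hk.trans (by simp))
    rw [Nat.mod_eq_of_lt h1, Nat.zero_mod] at h2
    omega
  · obtain ⟨i, hi⟩ := Nat.exists_eq_add_of_le h1
    rw [hi, mul_swap_pow_add h (by omega)] at hk
    apply h
    have : δ.SameCycle (δ e) (δ d) := by
      rw [← hk, Equiv.Perm.sameCycle_pow_right]
    rw [Equiv.Perm.sameCycle_apply_left, Equiv.Perm.sameCycle_apply_right] at this
    exact this.symm

/-- Off the two cycles, multiplying by the transposition changes nothing. -/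
theorem mul_swap_pow_of_not_sameCycle [DecidableEq Φ] {δ : Equiv.Perm Φ} {d e ω : Φ}
    (hd : ¬ δ.SameCycle d ω)
    (he : ¬ δ.SameCycle e ω) (n : ℕ) : ((δ * Equiv.swap d e) ^ n) ω = (δ ^ n) ω := by
  induction n with
  | zero => rfl
  | succ n ih =>
    have h1 : (δ ^ n) ω ≠ d := by
      rintro rfl
      exact hd (Equiv.Perm.sameCycle_pow_left.2 (Equiv.Perm.SameCycle.refl _ _))
    have h2 : (δ ^ n) ω ≠ e := by
      rintro rfl
      exact he (Equiv.Perm.sameCycle_pow_left.2 (Equiv.Perm.SameCycle.refl _ _))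
    rw [pow_succ', Equiv.Perm.mul_apply, ih, Equiv.Perm.mul_apply,
      Equiv.swap_apply_of_ne_of_ne h1 h2, pow_succ', Equiv.Perm.mul_apply]

theorem exists_index_mul_swap [Finite Φ] [DecidableEq Φ] {δ : Equiv.Perm Φ} {d e ω : Φ}
    (h : ¬ δ.SameCycle d e)
    (hω : δ.SameCycle d ω ∨ δ.SameCycle e ω) :
    ∃ J < cycleLength (δ * Equiv.swap d e) (δ d), ((δ * Equiv.swap d e) ^ J) (δ d) = ω := by
  rw [cycleLength_mul_swap h]
  rcases hω with hω | hω
  · obtain ⟨j, hj, rfl⟩ := exists_lt_cycleLength (Equiv.Perm.sameCycle_apply_left.2 hω)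
    exact ⟨j, by omega, mul_swap_pow h hj⟩
  · obtain ⟨j, hj, rfl⟩ := exists_lt_cycleLength (Equiv.Perm.sameCycle_apply_left.2 hω)
    exact ⟨_, by omega, mul_swap_pow_add h hj⟩

theorem sameCycle_mul_swap_iff [Finite Φ] [DecidableEq Φ] {δ : Equiv.Perm Φ} {d e ω : Φ}
    (h : ¬ δ.SameCycle d e) :
    (δ * Equiv.swap d e).SameCycle (δ d) ω ↔ δ.SameCycle d ω ∨ δ.SameCycle e ω := by
  constructor
  · intro hs
    obtain ⟨J, hJ, rfl⟩ := exists_lt_cycleLength hs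
    rw [cycleLength_mul_swap h] at hJ
    rcases lt_or_ge J (cycleLength δ (δ d)) with h1 | h1
    · left
      rw [mul_swap_pow h h1, Equiv.Perm.sameCycle_pow_right, Equiv.Perm.sameCycle_apply_right]
    · right
      obtain ⟨i, rfl⟩ := Nat.exists_eq_add_of_le h1
      rw [mul_swap_pow_add h (by omega), Equiv.Perm.sameCycle_pow_right,
        Equiv.Perm.sameCycle_apply_right]
  · intro hω
    obtain ⟨J, -, rfl⟩ := exists_index_mul_swap h hω
    rw [Equiv.Perm.sameCycle_pow_right]

/-- Either the permutation or its product with the transposition has the two points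
in one cycle. -/
theorem not_sameCycle_mul_swap [Finite Φ] [DecidableEq Φ] {γ : Equiv.Perm Φ} {d e : Φ} (hne : d ≠ e)
    (h : γ.SameCycle d e) : ¬ (γ * Equiv.swap d e).SameCycle d e := by
  obtain ⟨J, hJ, hJe⟩ := exists_lt_cycleLength h
  have hJ0 : J ≠ 0 := by rintro rfl; exact hne (by simpa using hJe)
  have hp := cycleLength_pos γ d
  set S : Set Φ := {x | ∃ i, J < i ∧ i ≤ cycleLength γ d ∧ (γ ^ i) d = x} with hS
  have heS : e ∉ S := by
    rintro ⟨i, hi, hi', hie⟩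
    have h1 := mod_cycleLength_eq (hie.trans hJe.symm)
    rw [Nat.mod_eq_of_lt hJ] at h1
    rcases hi'.lt_or_eq with h2 | h2
    · rw [Nat.mod_eq_of_lt h2] at h1; omega
    · rw [h2, Nat.mod_self] at h1; omega
  have hdS : d ∈ S := ⟨cycleLength γ d, hJ, le_rfl, pow_cycleLength γ d⟩
  have hinv : ∀ x ∈ S, (γ * Equiv.swap d e) x ∈ S := by
    rintro x ⟨i, hi, hi', rfl⟩
    rcases hi'.lt_or_eq with h2 | h2
    · have hnd : (γ ^ i) d ≠ d := by
        intro hc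
        have h1 := mod_cycleLength_eq (n := 0) (hc.trans (by simp))
        rw [Nat.mod_eq_of_lt h2, Nat.zero_mod] at h1
        omega
      have hnee : (γ ^ i) d ≠ e := fun hc => heS ⟨i, hi, hi', hc⟩
      rw [Equiv.Perm.mul_apply, Equiv.swap_apply_of_ne_of_ne hnd hnee]
      exact ⟨i + 1, by omega, h2, by rw [pow_succ', Equiv.Perm.mul_apply]⟩
    · rw [h2, pow_cycleLength, Equiv.Perm.mul_apply, Equiv.swap_apply_left, ← hJe]
      exact ⟨J + 1, by omega, hJ, by rw [pow_succ', Equiv.Perm.mul_apply]⟩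
  intro hs
  obtain ⟨n, hn⟩ := hs.exists_nat_pow_eq
  have : ∀ n : ℕ, ((γ * Equiv.swap d e) ^ n) d ∈ S := by
    intro n
    induction n with
    | zero => exact hdS
    | succ n ih => rw [pow_succ', Equiv.Perm.mul_apply]; exact hinv _ ih
  exact heS (hn ▸ this n)

end Merge

section Transit

variable {Φ : Type*}

/-- Gluing along the permutation `γp` at nonnegative and `γm` at nonpositive times. -/
def TransitGlue (γm γp : Equiv.Perm Φ) (σ : ℝ) (x y : Φ × ℝ) : Prop :=
  (0 ≤ σ ∧ CircleGlue γp x y) ∨ (σ ≤ 0 ∧ CircleGlue γm x y)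

/-- The family `Q` deforms the circles of `γm` (time `-1`) to those of `γp` (time `1`), both in
their home positions, by a single saddle at time `0` which involves only the set `I`. -/
structure IsTransit (h : Set Φ → ℂ) (γm γp : Equiv.Perm Φ) (I : Set Φ)
    (Q : Φ → ℝ → ℝ → ℂ) : Prop where
  cont : ∀ ω, Continuous fun p : ℝ × ℝ => Q ω p.1 p.2
  top : ∀ ω, ∀ v ∈ Set.Icc (0 : ℝ) 1, Q ω 1 v = h (cycleSet γp ω) + homeDir γp ω v
  bot : ∀ ω, ∀ v ∈ Set.Icc (0 : ℝ) 1, Q ω (-1) v = h (cycleSet γm ω) + homeDir γm ω v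
  static : ∀ ω, ω ∉ I → ∀ σ, ∀ v ∈ Set.Icc (0 : ℝ) 1, Q ω σ v = h (cycleSet γp ω) + homeDir γp ω v
  pow_eq : ∀ ω, ω ∉ I → ∀ n : ℕ, (γm ^ n) ω = (γp ^ n) ω
  mem_top : ∀ ω, γp ω ∈ I ↔ ω ∈ I
  mem_bot : ∀ ω, γm ω ∈ I ↔ ω ∈ I
  glue_top : ∀ ω ∈ I, ∀ σ ∈ Set.Icc (0 : ℝ) 1, Q ω σ 1 = Q (γp ω) σ 0
  glue_bot : ∀ ω ∈ I, ∀ σ ∈ Set.Icc (-1 : ℝ) 0, Q ω σ 1 = Q (γm ω) σ 0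
  inj : ∀ σ ∈ Set.Icc (-1 : ℝ) 1, ∀ ω ∈ I, ∀ ω' ∈ I, ∀ v ∈ Set.Icc (0 : ℝ) 1,
    ∀ v' ∈ Set.Icc (0 : ℝ) 1, Q ω σ v = Q ω' σ v' →
      Relation.EqvGen (TransitGlue γm γp σ) (ω, v) (ω', v')
  sep : ∀ σ ∈ Set.Icc (-1 : ℝ) 1, ∀ ω ∈ I, ∀ ω', ω' ∉ I → ∀ v,
    1 < ‖Q ω σ v - h (cycleSet γp ω')‖

theorem eqvGen_mono {α : Type*} {r r' : α → α → Prop} (h : ∀ x y, r x y → r' x y) {x y : α}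
    (hxy : Relation.EqvGen r x y) : Relation.EqvGen r' x y := by
  induction hxy with
  | rel x y hr => exact .rel _ _ (h x y hr)
  | refl x => exact .refl x
  | symm x y _ ih => exact ih.symm
  | trans x y z _ _ ih₁ ih₂ => exact ih₁.trans _ _ _ ih₂

theorem IsTransit.reverse [Finite Φ] {h : Set Φ → ℂ} {γm γp : Equiv.Perm Φ} {I : Set Φ}
    {Q : Φ → ℝ → ℝ → ℂ} (H : IsTransit h γm γp I Q) :
    IsTransit h γp γm I (fun ω σ v => Q ω (-σ) v) where
  cont ω := (H.cont ω).comp (by fun_prop : Continuous fun p : ℝ × ℝ => (-p.1, p.2))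
  top := H.bot
  bot ω v hv := by simpa using H.top ω v hv
  static ω hω σ v hv := by
    rw [H.static ω hω _ v hv, cycleSet_congr (H.pow_eq ω hω), homeDir_congr (H.pow_eq ω hω)]
  pow_eq ω hω n := (H.pow_eq ω hω n).symm
  mem_top := H.mem_bot
  mem_bot := H.mem_top
  glue_top ω hω σ hσ := H.glue_bot ω hω (-σ) ⟨by linarith [hσ.2], by linarith [hσ.1]⟩
  glue_bot ω hω σ hσ := H.glue_top ω hω (-σ) ⟨by linarith [hσ.2], by linarith [hσ.1]⟩
  inj σ hσ ω hω ω' hω' v hv v' hv' he := by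
    have hσ' : -σ ∈ Set.Icc (-1 : ℝ) 1 := ⟨by linarith [hσ.2], by linarith [hσ.1]⟩
    refine eqvGen_mono ?_ (H.inj (-σ) hσ' ω hω ω' hω' v hv v' hv' he)
    rintro p p' (⟨h0, hg⟩ | ⟨h0, hg⟩)
    · exact Or.inr ⟨by linarith, hg⟩
    · exact Or.inl ⟨by linarith, hg⟩
  sep σ hσ ω hω ω' hω' v := by
    rw [cycleSet_congr (H.pow_eq ω' hω')]
    exact H.sep (-σ) ⟨by linarith [hσ.2], by linarith [hσ.1]⟩ ω hω ω' hω' v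

theorem eqvGen_of_circleGlue {γ : Equiv.Perm Φ} {r : Φ × ℝ → Φ × ℝ → Prop}
    (hr : ∀ p p', CircleGlue γ p p' → r p p') {p p' : Φ × ℝ}
    (h : p = p' ∨ CircleGlue γ p p' ∨ CircleGlue γ p' p) : Relation.EqvGen r p p' := by
  rcases h with rfl | h | h
  · exact .refl _
  · exact .rel _ _ (hr _ _ h)
  · exact (Relation.EqvGen.rel _ _ (hr _ _ h)).symm

theorem exists_isTransit_of_not_sameCycle [Finite Φ] [DecidableEq Φ] {h : Set Φ → ℂ}
    (hsep : ∀ S, ∃ w : ℂ, ∀ T, T ≠ S → 4 * ‖w‖ < inner ℝ w (h T - h S))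
    {δ : Equiv.Perm Φ} {d e : Φ} (hn : ¬ δ.SameCycle d e) :
    ∃ Q, IsTransit h (δ * Equiv.swap d e) δ {ω | δ.SameCycle d ω ∨ δ.SameCycle e ω} Q := by
  classical
  set γ := δ * Equiv.swap d e with hγ
  have hne0 : ∀ (γ : Equiv.Perm Φ) (ω : Φ) (v : ℝ), homeDir γ ω v ≠ 0 := fun γ ω v => by
    rw [← norm_ne_zero_iff, norm_homeDir]; exact one_ne_zero
  -- Disjoint homes for the circles.
  have hclear : ∀ S z, z ∈ convexHull ℝ (h '' {T | T ≠ S}) → 4 < ‖z - h S‖ := by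
    intro S z hz
    obtain ⟨w, hw⟩ := hsep S
    exact lt_norm_of_mem_convexHull hw hz
  set h₁ := h (cycleSet δ (δ d)) with hh₁
  set h₂ := h (cycleSet δ (δ e)) with hh₂
  set h₃ := h (cycleSet γ (δ d)) with hh₃
  have hne12 : cycleSet δ (δ d) ≠ cycleSet δ (δ e) := by
    intro hc
    rw [cycleSet_eq_iff, Equiv.Perm.sameCycle_apply_left, Equiv.Perm.sameCycle_apply_right] at hc
    exact hn hc
  have hD : 4 < ‖h₁ - h₂‖ :=
    hclear _ _ (subset_convexHull ℝ _ ⟨_, hne12, rfl⟩)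
  set D := ‖h₁ - h₂‖ with hDdef
  have hD0 : (D : ℂ) ≠ 0 := by exact_mod_cast (by linarith : D ≠ 0)
  set w : ℂ := (h₁ - h₂) / D with hw
  have hw1 : ‖w‖ = 1 := by
    rw [hw, norm_div, Complex.norm_real, Real.norm_eq_abs, abs_of_pos (by linarith), ← hDdef,
      div_self (by linarith)]
  have hw0 : w ≠ 0 := by rw [← norm_ne_zero_iff, hw1]; exact one_ne_zero
  have hDw : h₁ - h₂ = D * w := by rw [hw]; field_simp
  obtain ⟨α, hα⟩ := exists_exp_mul_I_eq hw1
  obtain ⟨β₁, hβ₁⟩ : ∃ β : ℝ, Complex.exp (β * Complex.I) = -w * (homeDir δ (δ d) 0)⁻¹ :=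
    exists_exp_mul_I_eq (by rw [norm_mul, norm_neg, norm_inv, norm_homeDir, hw1]; norm_num)
  obtain ⟨β₂, hβ₂⟩ : ∃ β : ℝ, Complex.exp (β * Complex.I) = w * (homeDir δ (δ e) 0)⁻¹ :=
    exists_exp_mul_I_eq (by rw [norm_mul, norm_inv, norm_homeDir, hw1]; norm_num)
  obtain ⟨θ, hθ⟩ := exists_exp_mul_I_eq (norm_homeDir γ (δ d) 0)
  set L₁ := cycleLength δ (δ d) with hL₁
  set L₂ := cycleLength δ (δ e) with hL₂
  have hL₁p : (0 : ℝ) < L₁ := by exact_mod_cast cycleLength_pos δ (δ d)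
  have hL₂p : (0 : ℝ) < L₂ := by exact_mod_cast cycleLength_pos δ (δ e)
  have hLen : cycleLength γ (δ d) = L₁ + L₂ := cycleLength_mul_swap hn
  set I : Set Φ := {ω | δ.SameCycle d ω ∨ δ.SameCycle e ω} with hI
  have hJex : ∀ ω, ∃ J, ω ∈ I → J < L₁ + L₂ ∧ (γ ^ J) (δ d) = ω := by
    intro ω
    by_cases hω : ω ∈ I
    · obtain ⟨J, hJ, hJ'⟩ := exists_index_mul_swap hn hω
      exact ⟨J, fun _ => ⟨hLen ▸ hJ, hJ'⟩⟩
    · exact ⟨0, fun hc => absurd hc hω⟩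
  choose J hJ using hJex
  -- The two families.
  set X : Φ → ℝ → ℝ → ℂ := fun ω s v =>
    if δ.SameCycle d ω then h₂ + ((2 + s * (D - 2) : ℝ) : ℂ) * w
      + Complex.exp (((1 - s) * β₁ : ℝ) * Complex.I) * homeDir δ ω v
    else if δ.SameCycle e ω then h₂
      + Complex.exp (((1 - s) * β₂ : ℝ) * Complex.I) * homeDir δ ω v
    else h (cycleSet δ ω) + homeDir δ ω v with hX
  set Y : Φ → ℝ → ℝ → ℂ := fun ω s v =>
    if ω ∈ I then ((1 - s : ℝ) : ℂ) * (h₂ + w) + (s : ℂ) * h₃ + starCurve L₁ L₂ θ α s (J ω + v)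
    else h (cycleSet δ ω) + homeDir δ ω v with hY
  have hXd : ∀ ω, δ.SameCycle d ω → ∀ s v, X ω s v = h₂ + ((2 + s * (D - 2) : ℝ) : ℂ) * w
      + Complex.exp (((1 - s) * β₁ : ℝ) * Complex.I) * homeDir δ ω v := by
    intro ω hω s v; simp only [hX, if_pos hω]
  have hXe : ∀ ω, δ.SameCycle e ω → ∀ s v, X ω s v = h₂
      + Complex.exp (((1 - s) * β₂ : ℝ) * Complex.I) * homeDir δ ω v := by
    intro ω hω s v
    have : ¬ δ.SameCycle d ω := fun hc => hn (hc.trans hω.symm)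
    simp only [hX, if_neg this, if_pos hω]
  have hXo : ∀ ω, ω ∉ I → ∀ s v, X ω s v = h (cycleSet δ ω) + homeDir δ ω v := by
    intro ω hω s v
    simp only [hI, Set.mem_ofPred_eq, not_or] at hω
    simp only [hX, if_neg hω.1, if_neg hω.2]
  have hYi : ∀ ω, ω ∈ I → ∀ s v, Y ω s v = ((1 - s : ℝ) : ℂ) * (h₂ + w) + (s : ℂ) * h₃
      + starCurve L₁ L₂ θ α s (J ω + v) := by
    intro ω hω s v; simp only [hY, if_pos hω]
  have hYo : ∀ ω, ω ∉ I → ∀ s v, Y ω s v = h (cycleSet δ ω) + homeDir δ ω v := by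
    intro ω hω s v; simp only [hY, if_neg hω]
  have hXc : ∀ ω, Continuous fun p : ℝ × ℝ => X ω p.1 p.2 := by
    intro ω
    have := continuous_homeDir δ ω
    simp only [hX]
    split_ifs <;> fun_prop
  have hYc : ∀ ω, Continuous fun p : ℝ × ℝ => Y ω p.1 p.2 := by
    intro ω
    have h1 := continuous_homeDir δ ω
    have h2 : Continuous fun p : ℝ × ℝ => starCurve L₁ L₂ θ α p.1 (J ω + p.2) :=
      (continuous_starCurve L₁ L₂ θ α).comp
        (by fun_prop : Continuous fun p : ℝ × ℝ => (p.1, (J ω : ℝ) + p.2))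
    simp only [hY]
    split_ifs <;> fun_prop
  have hdI : ∀ ω, δ.SameCycle d ω → cycleSet δ ω = cycleSet δ (δ d) := fun ω hω =>
    cycleSet_eq_iff.2 (Equiv.Perm.sameCycle_apply_right.2 hω.symm)
  have heI : ∀ ω, δ.SameCycle e ω → cycleSet δ ω = cycleSet δ (δ e) := fun ω hω =>
    cycleSet_eq_iff.2 (Equiv.Perm.sameCycle_apply_right.2 hω.symm)
  have hX1 : ∀ ω v, X ω 1 v = h (cycleSet δ ω) + homeDir δ ω v := by
    intro ω v
    by_cases hd : δ.SameCycle d ω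
    · rw [hXd ω hd, hdI ω hd, ← hh₁]
      simp only [sub_self, zero_mul, Complex.ofReal_zero, Complex.exp_zero, one_mul]
      push_cast
      linear_combination -hDw
    · by_cases he : δ.SameCycle e ω
      · rw [hXe ω he, heI ω he, ← hh₂]
        simp
      · exact hXo ω (by simp [hI, hd, he]) 1 v
  have hout : ∀ ω, ω ∉ I → ∀ n : ℕ, (γ ^ n) ω = (δ ^ n) ω := by
    intro ω hω
    simp only [hI, Set.mem_ofPred_eq, not_or] at hω
    exact mul_swap_pow_of_not_sameCycle hω.1 hω.2
  have hY1 : ∀ ω v, Y ω 1 v = h (cycleSet γ ω) + homeDir γ ω v := by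
    intro ω v
    by_cases hω : ω ∈ I
    · obtain ⟨hJ1, hJ2⟩ := hJ ω hω
      have hc : cycleSet γ ω = cycleSet γ (δ d) := by
        rw [cycleSet_eq_iff, ← hJ2, Equiv.Perm.sameCycle_pow_left]
      rw [hYi ω hω, hc, ← hh₃, starCurve_one, hθ]
      have := homeDir_pow γ (δ d) (J ω) v
      rw [hJ2, hLen] at this
      rw [this]
      push_cast
      ring
    · rw [hYo ω hω, cycleSet_congr (hout ω hω), homeDir_congr (hout ω hω)]
  have hu1 : ∀ u : ℂ, Complex.exp (((1 - 0) * β₁ : ℝ) * Complex.I) * (homeDir δ (δ d) 0 * u)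
      = -w * u := by
    intro u
    rw [sub_zero, one_mul, hβ₁]
    field_simp [hne0 δ (δ d) 0]
  have hu2 : ∀ u : ℂ, Complex.exp (((1 - 0) * β₂ : ℝ) * Complex.I) * (homeDir δ (δ e) 0 * u)
      = w * u := by
    intro u
    rw [sub_zero, one_mul, hβ₂]
    field_simp [hne0 δ (δ e) 0]
  have hXY : ∀ ω, ∀ v ∈ Set.Icc (0 : ℝ) 1, X ω 0 v = Y ω 0 v := by
    intro ω v hv
    by_cases hω : ω ∈ I
    · obtain ⟨hJ1, hJ2⟩ := hJ ω hω
      rw [hYi ω hω, starCurve_zero, hα]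
      rcases lt_or_ge (J ω) L₁ with hlt | hge
      · have hlt' : ((J ω + 1 : ℕ) : ℝ) ≤ L₁ := by exact_mod_cast hlt
        push_cast at hlt'
        rw [eight_of_le hL₁p (add_nonneg (Nat.cast_nonneg _) hv.1) (by linarith [hv.2])]
        rw [mul_swap_pow hn hlt] at hJ2
        have hd : δ.SameCycle d ω := by
          rw [← hJ2, Equiv.Perm.sameCycle_pow_right, Equiv.Perm.sameCycle_apply_right]
        have hp := homeDir_pow δ (δ d) (J ω) v
        rw [hJ2] at hp
        rw [hXd ω hd, hp, hu1]
        push_cast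
        ring
      · obtain ⟨i, hi⟩ := Nat.exists_eq_add_of_le hge
        have hi2 : i < L₂ := by omega
        have hi' : ((i + 1 : ℕ) : ℝ) ≤ L₂ := by exact_mod_cast hi2
        push_cast at hi'
        have hiJ : (J ω : ℝ) = L₁ + i := by rw [hi]; push_cast; ring
        have hi0 : (0 : ℝ) ≤ i := Nat.cast_nonneg _
        rw [eight_of_ge hL₁p hL₂p (by linarith [hv.1]) (by linarith [hv.2])]
        rw [hi, mul_swap_pow_add hn hi2] at hJ2
        have he : δ.SameCycle e ω := by
          rw [← hJ2, Equiv.Perm.sameCycle_pow_right, Equiv.Perm.sameCycle_apply_right]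
        have hp := homeDir_pow δ (δ e) i v
        rw [hJ2] at hp
        rw [hXe ω he, hp, hu2, show (J ω : ℝ) + v - L₁ = i + v by rw [hiJ]; ring]
        push_cast
        ring
    · rw [hXo ω hω, hYo ω hω]
  set cl : ℝ → ℝ := fun v => max 0 (min 1 v) with hcl
  have hclI : ∀ v, cl v ∈ Set.Icc (0 : ℝ) 1 := fun v =>
    ⟨le_max_left _ _, max_le zero_le_one (min_le_left _ _)⟩
  have hcle : ∀ v ∈ Set.Icc (0 : ℝ) 1, cl v = v := fun v hv => by
    simp only [hcl]; rw [min_eq_right hv.2, max_eq_right hv.1]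
  set Q : Φ → ℝ → ℝ → ℂ := fun ω σ v => if 0 ≤ σ then X ω σ (cl v) else Y ω (-σ) (cl v) with hQ
  have hQX : ∀ ω σ, 0 ≤ σ → ∀ v ∈ Set.Icc (0 : ℝ) 1, Q ω σ v = X ω σ v := by
    intro ω σ hσ v hv; simp only [hQ, if_pos hσ, hcle v hv]
  have hQY : ∀ ω σ, σ ≤ 0 → ∀ v ∈ Set.Icc (0 : ℝ) 1, Q ω σ v = Y ω (-σ) v := by
    intro ω σ hσ v hv
    rcases hσ.lt_or_eq with h0 | rfl
    · simp only [hQ, if_neg (not_le.2 h0), hcle v hv]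
    · rw [hQX ω 0 le_rfl v hv, neg_zero, hXY ω v hv]
  have h01 : (0 : ℝ) ∈ Set.Icc (0 : ℝ) 1 := ⟨le_rfl, zero_le_one⟩
  have h11 : (1 : ℝ) ∈ Set.Icc (0 : ℝ) 1 := ⟨zero_le_one, le_rfl⟩
  have hnorm : ∀ (x : ℝ) ω v, ‖Complex.exp (x * Complex.I) * homeDir δ ω v‖ = 1 := by
    intro x ω v
    rw [norm_mul, Complex.norm_exp_ofReal_mul_I, norm_homeDir, one_mul]
  have hmemp : ∀ ω, δ ω ∈ I ↔ ω ∈ I := by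
    intro ω
    simp only [hI, Set.mem_ofPred_eq, Equiv.Perm.sameCycle_apply_right]
  have hmemm : ∀ ω, γ ω ∈ I ↔ ω ∈ I := by
    intro ω
    simp only [hI, Set.mem_ofPred_eq, ← sameCycle_mul_swap_iff hn,
      Equiv.Perm.sameCycle_apply_right, hγ]
  have hJ1 : ∀ ω ∈ I, ∀ v ∈ Set.Icc (0 : ℝ) 1, (J ω : ℝ) + v ∈ Set.Icc (0 : ℝ) (L₁ + L₂) := by
    intro ω hω v hv
    have e3 : ((J ω + 1 : ℕ) : ℝ) ≤ ((L₁ + L₂ : ℕ) : ℝ) := by exact_mod_cast (hJ ω hω).1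
    push_cast at e3
    exact ⟨add_nonneg (Nat.cast_nonneg _) hv.1, by linarith [hv.2]⟩
  have hYinj : ∀ s ∈ Set.Ioc (0 : ℝ) 1, ∀ ω ∈ I, ∀ ω' ∈ I, ∀ v ∈ Set.Icc (0 : ℝ) 1,
      ∀ v' ∈ Set.Icc (0 : ℝ) 1, Y ω s v = Y ω' s v' →
      (ω, v) = (ω', v') ∨ CircleGlue γ (ω, v) (ω', v') ∨ CircleGlue γ (ω', v') (ω, v) := by
    intro s hs ω hω ω' hω' v hv v' hv' heq
    rw [hYi ω hω, hYi ω' hω'] at heq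
    have h1 := starCurve_inj hL₁p hL₂p hs (hJ1 ω hω v hv) (hJ1 ω' hω' v' hv')
      (add_left_cancel heq)
    have hper := pow_cycleLength γ (δ d)
    rw [hLen] at hper
    have h2 := circleGlue_of_coord hper (hJ ω hω).1 (hJ ω' hω').1 hv hv' (by push_cast; exact h1)
    rwa [(hJ ω hω).2, (hJ ω' hω').2] at h2
  have hγe : γ e = δ d := by rw [hγ, Equiv.Perm.mul_apply, Equiv.swap_apply_right]
  have hcross : ∀ s ∈ Set.Icc (0 : ℝ) 1, ∀ ω, δ.SameCycle d ω → ∀ ω', δ.SameCycle e ω' →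
      ∀ v ∈ Set.Icc (0 : ℝ) 1, ∀ v' ∈ Set.Icc (0 : ℝ) 1, X ω s v = X ω' s v' →
      Relation.EqvGen (TransitGlue γ δ s) (ω, v) (ω', v') := by
    intro s hs ω hω ω' hω' v hv v' hv' heq
    rw [hXd ω hω, hXe ω' hω'] at heq
    set u := Complex.exp (((1 - s) * β₁ : ℝ) * Complex.I) * homeDir δ ω v with hu
    set u' := Complex.exp (((1 - s) * β₂ : ℝ) * Complex.I) * homeDir δ ω' v' with hu'
    have hsub : u' - u = ((2 + s * (D - 2) : ℝ) : ℂ) * w := by linear_combination -heq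
    have hs0 : s = 0 := by
      have h1 : ‖u' - u‖ ≤ 2 := by
        refine (norm_sub_le _ _).trans ?_
        rw [hu, hu', hnorm, hnorm]; norm_num
      rw [hsub, norm_mul, hw1, mul_one, Complex.norm_real, Real.norm_eq_abs] at h1
      have h2 := (le_abs_self _).trans h1
      nlinarith [hs.1]
    subst hs0
    obtain ⟨e1, e2⟩ := eq_of_sub_eq_two_mul (hnorm _ _ _) (hnorm _ _ _) hw1
      (hsub.trans (by push_cast; ring))
    have e3 : homeDir δ ω v = homeDir δ (δ d) 0 := by
      have := hu1 1
      rw [mul_one, mul_one, ← e2] at this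
      exact (mul_left_cancel₀ (Complex.exp_ne_zero _) this).symm
    have e4 : homeDir δ ω' v' = homeDir δ (δ e) 0 := by
      have := hu2 1
      rw [mul_one, mul_one, ← e1] at this
      exact (mul_left_cancel₀ (Complex.exp_ne_zero _) this).symm
    have r1 : Relation.EqvGen (TransitGlue γ δ 0) (ω, v) (δ d, 0) :=
      eqvGen_of_circleGlue (fun p p' hp => Or.inl ⟨le_rfl, hp⟩)
        (circleGlue_of_homeDir_eq (Equiv.Perm.sameCycle_apply_right.2 hω.symm) hv h01 e3)
    have r2 : Relation.EqvGen (TransitGlue γ δ 0) (ω', v') (δ e, 0) :=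
      eqvGen_of_circleGlue (fun p p' hp => Or.inl ⟨le_rfl, hp⟩)
        (circleGlue_of_homeDir_eq (Equiv.Perm.sameCycle_apply_right.2 hω'.symm) hv' h01 e4)
    have r3 : Relation.EqvGen (TransitGlue γ δ 0) (e, 1) (δ d, 0) :=
      .rel _ _ (Or.inr ⟨le_rfl, rfl, rfl, hγe.symm⟩)
    have r4 : Relation.EqvGen (TransitGlue γ δ 0) (e, 1) (δ e, 0) :=
      .rel _ _ (Or.inl ⟨le_rfl, rfl, rfl, rfl⟩)
    exact ((r1.trans _ _ _ r3.symm).trans _ _ _ r4).trans _ _ _ r2.symm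
  have hXinj : ∀ s ∈ Set.Icc (0 : ℝ) 1, ∀ ω ∈ I, ∀ ω' ∈ I, ∀ v ∈ Set.Icc (0 : ℝ) 1,
      ∀ v' ∈ Set.Icc (0 : ℝ) 1, X ω s v = X ω' s v' →
      Relation.EqvGen (TransitGlue γ δ s) (ω, v) (ω', v') := by
    intro s hs ω hω ω' hω' v hv v' hv' heq
    rcases hω with hω | hω <;> rcases hω' with hω' | hω'
    · rw [hXd ω hω, hXd ω' hω'] at heq
      exact eqvGen_of_circleGlue (fun p p' hp => Or.inl ⟨hs.1, hp⟩)
        (circleGlue_of_homeDir_eq (hω.symm.trans hω') hv hv'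
          (mul_left_cancel₀ (Complex.exp_ne_zero _) (add_left_cancel heq)))
    · exact hcross s hs ω hω ω' hω' v hv v' hv' heq
    · exact (hcross s hs ω' hω' ω hω v' hv' v hv heq.symm).symm
    · rw [hXe ω hω, hXe ω' hω'] at heq
      exact eqvGen_of_circleGlue (fun p p' hp => Or.inl ⟨hs.1, hp⟩)
        (circleGlue_of_homeDir_eq (hω.symm.trans hω') hv hv'
          (mul_left_cancel₀ (Complex.exp_ne_zero _) (add_left_cancel heq)))
  have hhull : ∀ ω', ω' ∉ I → ∀ z, z ∈ convexHull ℝ {h₁, h₂, h₃} →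
      4 < ‖z - h (cycleSet δ ω')‖ := by
    intro ω' hω' z hz
    refine hclear _ _ (convexHull_mono ?_ hz)
    have hno : ∀ S : Set Φ, ω' ∉ S → S ≠ cycleSet δ ω' := by
      rintro S hS rfl
      exact hS (Equiv.Perm.SameCycle.refl _ _)
    have hω'' := hω'
    simp only [hI, Set.mem_ofPred_eq, not_or] at hω''
    rintro _ (rfl | rfl | rfl)
    · refine ⟨_, hno _ ?_, rfl⟩
      simpa [cycleSet] using hω''.1
    · refine ⟨_, hno _ ?_, rfl⟩
      simpa [cycleSet] using hω''.2
    · refine ⟨_, hno _ ?_, rfl⟩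
      intro hc
      exact hω' ((sameCycle_mul_swap_iff hn).1 hc)
  have hcv := convex_convexHull ℝ ({h₁, h₂, h₃} : Set ℂ)
  have hm1 : h₁ ∈ convexHull ℝ ({h₁, h₂, h₃} : Set ℂ) := subset_convexHull ℝ _ (by simp)
  have hm2 : h₂ ∈ convexHull ℝ ({h₁, h₂, h₃} : Set ℂ) := subset_convexHull ℝ _ (by simp)
  have hm3 : h₃ ∈ convexHull ℝ ({h₁, h₂, h₃} : Set ℂ) := subset_convexHull ℝ _ (by simp)
  have hline : ∀ x ∈ Set.Icc (0 : ℝ) D,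
      h₂ + (x : ℂ) * w ∈ convexHull ℝ ({h₁, h₂, h₃} : Set ℂ) := by
    intro x hx
    have hDp : 0 < D := by linarith
    have h1 := hcv hm2 hm1 (a := 1 - x / D) (b := x / D)
      (by rw [sub_nonneg, div_le_one hDp]; exact hx.2) (div_nonneg hx.1 hDp.le) (by ring)
    convert h1 using 1
    simp only [Complex.real_smul]
    push_cast
    have : h₁ = h₂ + D * w := by linear_combination hDw
    rw [this]
    field_simp
    ring
  have hnear : ∀ ω', ω' ∉ I → ∀ z p, z ∈ convexHull ℝ {h₁, h₂, h₃} → ‖p‖ ≤ 2 →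
      1 < ‖z + p - h (cycleSet δ ω')‖ := by
    intro ω' hω' z p hz hp
    have h1 := hhull ω' hω' z hz
    have h2 := norm_sub_le (z + p - h (cycleSet δ ω')) p
    rw [show z + p - h (cycleSet δ ω') - p = z - h (cycleSet δ ω') by ring] at h2
    linarith
  refine ⟨Q, ?_, ?_, ?_, ?_, hout, hmemp, hmemm, ?_, ?_, ?_, ?_⟩
  · intro ω
    have hclc : Continuous cl := by simp only [hcl]; fun_prop
    simp only [hQ]
    refine Continuous.if_le ?_ ?_ continuous_const continuous_fst ?_
    · exact (hXc ω).comp (by fun_prop : Continuous fun p : ℝ × ℝ => (p.1, cl p.2))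
    · exact (hYc ω).comp (by fun_prop : Continuous fun p : ℝ × ℝ => (-p.1, cl p.2))
    · rintro ⟨σ, v⟩ h0
      simp only at h0
      subst h0
      rw [neg_zero]
      exact hXY ω _ (hclI v)
  · intro ω v hv
    rw [hQX ω 1 zero_le_one v hv, hX1]
  · intro ω v hv
    rw [hQY ω (-1) (by norm_num) v hv, neg_neg, hY1]
  · intro ω hω σ v hv
    rcases le_total 0 σ with h0 | h0
    · rw [hQX ω σ h0 v hv, hXo ω hω]
    · rw [hQY ω σ h0 v hv, hYo ω hω]
  · intro ω hω σ hσ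
    rw [hQX ω σ hσ.1 1 h11, hQX (δ ω) σ hσ.1 0 h01]
    rcases hω with hω | hω
    · rw [hXd ω hω, hXd (δ ω) (Equiv.Perm.sameCycle_apply_right.2 hω), homeDir_glue]
    · rw [hXe ω hω, hXe (δ ω) (Equiv.Perm.sameCycle_apply_right.2 hω), homeDir_glue]
  · intro ω hω σ hσ
    have hω' := (hmemm ω).2 hω
    rw [hQY ω σ hσ.2 1 h11, hQY (γ ω) σ hσ.2 0 h01, hYi ω hω, hYi (γ ω) hω', add_zero]
    congr 1
    have hmod : (γ ^ (J (γ ω))) (δ d) = (γ ^ (J ω + 1)) (δ d) := by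
      rw [(hJ _ hω').2, pow_succ']
      change γ ω = γ ((γ ^ J ω) (δ d))
      rw [(hJ _ hω).2]
    have hmod' := mod_cycleLength_eq hmod
    rw [hLen, Nat.mod_eq_of_lt (hJ _ hω').1] at hmod'
    rcases (Nat.succ_le_of_lt (hJ _ hω).1).lt_or_eq with h1 | h1
    · rw [Nat.mod_eq_of_lt h1] at hmod'
      rw [hmod']
      push_cast
      rfl
    · rw [Nat.succ_eq_add_one] at h1
      rw [h1, Nat.mod_self] at hmod'
      have h2 : (J ω : ℝ) + 1 = L₁ + L₂ := by exact_mod_cast h1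
      rw [hmod', h2, starCurve_period hL₁p hL₂p, Nat.cast_zero]
  · intro σ hσ ω hω ω' hω' v hv v' hv' heq
    rcases le_or_gt 0 σ with h0 | h0
    · rw [hQX ω σ h0 v hv, hQX ω' σ h0 v' hv'] at heq
      exact hXinj σ ⟨h0, hσ.2⟩ ω hω ω' hω' v hv v' hv' heq
    · rw [hQY ω σ h0.le v hv, hQY ω' σ h0.le v' hv'] at heq
      exact eqvGen_of_circleGlue (fun p p' hp => Or.inr ⟨h0.le, hp⟩)
        (hYinj (-σ) ⟨by linarith, by linarith [hσ.1]⟩ ω hω ω' hω' v hv v' hv' heq)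
  · intro σ hσ ω hω ω' hω' v
    by_cases h0 : 0 ≤ σ
    · simp only [hQ, if_pos h0]
      rcases hω with hω | hω
      · rw [hXd ω hω]
        refine hnear ω' hω' _ _ (hline _ ⟨?_, ?_⟩) (by rw [hnorm]; norm_num)
        · nlinarith
        · nlinarith [hσ.2]
      · rw [hXe ω hω]
        exact hnear ω' hω' _ _ hm2 (by rw [hnorm]; norm_num)
    · have h0' : σ < 0 := not_le.1 h0
      simp only [hQ, if_neg h0]
      rw [hYi ω hω]
      refine hnear ω' hω' _ _ ?_
        (norm_starCurve_le ⟨by linarith, by linarith [hσ.1]⟩)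
      have hpe := hline 1 ⟨zero_le_one, by linarith⟩
      have h1 := hcv hpe hm3 (a := 1 - -σ) (b := -σ) (by linarith [hσ.1]) (by linarith) (by ring)
      convert h1 using 1
      simp only [Complex.real_smul]
      push_cast
      ring

theorem exists_isTransit [Finite Φ] [DecidableEq Φ] {h : Set Φ → ℂ}
    (hsep : ∀ S, ∃ w : ℂ, ∀ T, T ≠ S → 4 * ‖w‖ < inner ℝ w (h T - h S))
    (γ : Equiv.Perm Φ) {d e : Φ} (hne : d ≠ e) :
    ∃ Q, IsTransit h (γ * Equiv.swap d e) γ {ω | γ.SameCycle d ω ∨ γ.SameCycle e ω} Q := by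
  by_cases hs : γ.SameCycle d e
  · have hn := not_sameCycle_mul_swap hne hs
    obtain ⟨Q, hQ⟩ := exists_isTransit_of_not_sameCycle hsep hn
    have hmul : γ * Equiv.swap d e * Equiv.swap d e = γ := by
      rw [mul_assoc, Equiv.swap_mul_self, mul_one]
    have hset : {ω | (γ * Equiv.swap d e).SameCycle d ω ∨ (γ * Equiv.swap d e).SameCycle e ω}
        = {ω | γ.SameCycle d ω ∨ γ.SameCycle e ω} := by
      ext ω
      have h1 := sameCycle_mul_swap_iff (ω := ω) hn
      rw [hmul, Equiv.Perm.mul_apply, Equiv.swap_apply_left,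
        Equiv.Perm.sameCycle_apply_left] at h1
      simp only [Set.mem_ofPred_eq, ← h1]
      exact ⟨fun h => Or.inr h, fun h => h.elim (fun h => hs.symm.trans h) id⟩
    rw [hmul, hset] at hQ
    exact ⟨_, hQ.reverse⟩
  · exact exists_isTransit_of_not_sameCycle hsep hs

end Transit

section Levels

variable {Φ : Type*}

/-- Round discs with centres `C ω` and boundary arcs `C ω + B ω v` which are glued cyclically along
both permutations `γ` and `γ'`; over the set `Act` only the boundary arcs are considered. -/
structure IsConfig (γ γ' : Equiv.Perm Φ) (Act : Set Φ) (C : Φ → ℂ) (B : Φ → ℝ → ℂ) : Prop where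
  glue : ∀ (ω : Φ) (r : ℝ), (r = 1 ∨ ω ∉ Act) → C ω + r * B ω 1 = C (γ ω) + r * B (γ ω) 0
  glue' : ∀ (ω : Φ) (r : ℝ), (r = 1 ∨ ω ∉ Act) → C ω + r * B ω 1 = C (γ' ω) + r * B (γ' ω) 0
  inj : ∀ ω ω' : Φ, ∀ r ∈ Set.Icc (0 : ℝ) 1, ∀ r' ∈ Set.Icc (0 : ℝ) 1, ∀ v ∈ Set.Icc (0 : ℝ) 1,
    ∀ v' ∈ Set.Icc (0 : ℝ) 1, (r = 1 ∨ ω ∉ Act) → (r' = 1 ∨ ω' ∉ Act) →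
    C ω + r * B ω v = C ω' + r' * B ω' v' →
    (r = 0 ∧ r' = 0 ∧ γ.SameCycle ω ω') ∨ (0 < r ∧ 0 < r' ∧
      Relation.EqvGen (fun p p' => CircleGlue γ p p' ∨ CircleGlue γ' p p') (ω, v) (ω', v'))

theorem home_inj [Finite Φ] {h : Set Φ → ℂ}
    (hsep : ∀ S, ∃ w : ℂ, ∀ T, T ≠ S → 4 * ‖w‖ < inner ℝ w (h T - h S))
    {γ : Equiv.Perm Φ} {ω ω' : Φ} {r r' v v' : ℝ} (hr : r ∈ Set.Icc (0 : ℝ) 1)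
    (hr' : r' ∈ Set.Icc (0 : ℝ) 1) (hv : v ∈ Set.Icc (0 : ℝ) 1) (hv' : v' ∈ Set.Icc (0 : ℝ) 1)
    (he : h (cycleSet γ ω) + r * homeDir γ ω v = h (cycleSet γ ω') + r' * homeDir γ ω' v') :
    γ.SameCycle ω ω' ∧ ((r = 0 ∧ r' = 0) ∨ (0 < r ∧ 0 < r' ∧
      ((ω, v) = (ω', v') ∨ CircleGlue γ (ω, v) (ω', v') ∨ CircleGlue γ (ω', v') (ω, v)))) := by
  have hnorm : ∀ (s : ℝ) (ω : Φ) (v : ℝ), 0 ≤ s → ‖(s : ℂ) * homeDir γ ω v‖ = s := by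
    intro s ω v hs
    rw [norm_mul, norm_homeDir, mul_one, Complex.norm_real, Real.norm_eq_abs, abs_of_nonneg hs]
  have hs : γ.SameCycle ω ω' := by
    by_contra hcon
    rw [← cycleSet_eq_iff] at hcon
    obtain ⟨w, hw⟩ := hsep (cycleSet γ ω')
    have h4 := lt_norm_of_mem_convexHull hw (subset_convexHull ℝ _ ⟨_, hcon, rfl⟩)
    have h5 : h (cycleSet γ ω) - h (cycleSet γ ω') = r' * homeDir γ ω' v' - r * homeDir γ ω v := by
      linear_combination he
    rw [h5] at h4
    have h6 := norm_sub_le ((r' : ℂ) * homeDir γ ω' v') (r * homeDir γ ω v)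
    rw [hnorm _ _ _ hr.1, hnorm _ _ _ hr'.1] at h6
    linarith [hr.2, hr'.2]
  refine ⟨hs, ?_⟩
  rw [cycleSet_eq_iff.2 hs, add_right_inj] at he
  have hrr : r = r' := by
    have := congrArg norm he
    rwa [hnorm _ _ _ hr.1, hnorm _ _ _ hr'.1] at this
  subst hrr
  rcases hr.1.eq_or_lt with h0 | h0
  · exact Or.inl ⟨h0.symm, h0.symm⟩
  · have hne : (r : ℂ) ≠ 0 := by exact_mod_cast h0.ne'
    exact Or.inr ⟨h0, h0, circleGlue_of_homeDir_eq hs hv hv' (mul_left_cancel₀ hne he)⟩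

theorem isConfig_home [Finite Φ] {h : Set Φ → ℂ}
    (hsep : ∀ S, ∃ w : ℂ, ∀ T, T ≠ S → 4 * ‖w‖ < inner ℝ w (h T - h S))
    (γ : Equiv.Perm Φ) (Act : Set Φ) :
    IsConfig γ γ Act (fun ω => h (cycleSet γ ω)) (homeDir γ) := by
  have hg : ∀ (ω : Φ) (r : ℝ), h (cycleSet γ ω) + r * homeDir γ ω 1 =
      h (cycleSet γ (γ ω)) + r * homeDir γ (γ ω) 0 := by
    intro ω r
    rw [homeDir_glue, cycleSet_eq_iff.2 (Equiv.Perm.sameCycle_apply_right.2 (.refl γ ω))]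
  refine ⟨fun ω r _ => hg ω r, fun ω r _ => hg ω r, ?_⟩
  intro ω ω' r hr r' hr' v hv v' hv' _ _ he
  obtain ⟨hs, ⟨h1, h2⟩ | ⟨h1, h2, h3⟩⟩ := home_inj hsep hr hr' hv hv' he
  · exact Or.inl ⟨h1, h2, hs⟩
  · exact Or.inr ⟨h1, h2, eqvGen_of_circleGlue (fun p p' hp => Or.inl hp) h3⟩

theorem IsConfig.congr {γ γ' : Equiv.Perm Φ} {Act : Set Φ} {C C' : Φ → ℂ} {B B' : Φ → ℝ → ℂ}
    (H : IsConfig γ γ' Act C B) (hC : ∀ ω, C' ω = C ω)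
    (hB : ∀ ω, ∀ v ∈ Set.Icc (0 : ℝ) 1, B' ω v = B ω v) : IsConfig γ γ' Act C' B' := by
  have h0 : (0 : ℝ) ∈ Set.Icc (0 : ℝ) 1 := by simp
  have h1 : (1 : ℝ) ∈ Set.Icc (0 : ℝ) 1 := by simp
  refine ⟨fun ω r hr => ?_, fun ω r hr => ?_, fun ω ω' r hr r' hr' v hv v' hv' ha ha' he => ?_⟩
  · rw [hC, hC, hB _ _ h0, hB _ _ h1, H.glue ω r hr]
  · rw [hC, hC, hB _ _ h0, hB _ _ h1, H.glue' ω r hr]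
  · rw [hC, hC, hB _ _ hv, hB _ _ hv'] at he
    exact H.inj ω ω' r hr r' hr' v hv v' hv' ha ha' he

/-- The centres of the discs during a saddle move. -/
noncomputable def transitCentre (h : Set Φ → ℂ) (γm γp : Equiv.Perm Φ) (ω : Φ) (σ : ℝ) : ℂ :=
  ((1 + σ) / 2 : ℝ) * h (cycleSet γp ω) + ((1 - σ) / 2 : ℝ) * h (cycleSet γm ω)

theorem IsTransit.transitCentre_eq [Finite Φ] {h : Set Φ → ℂ} {γm γp : Equiv.Perm Φ}
    {I : Set Φ} {Q : Φ → ℝ → ℝ → ℂ} (H : IsTransit h γm γp I Q) {ω : Φ} (hω : ω ∉ I) (σ : ℝ) :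
    transitCentre h γm γp ω σ = h (cycleSet γp ω) := by
  rw [transitCentre, cycleSet_congr (H.pow_eq ω hω)]
  push_cast
  ring

theorem IsTransit.isConfig [Finite Φ] {h : Set Φ → ℂ}
    (hsep : ∀ S, ∃ w : ℂ, ∀ T, T ≠ S → 4 * ‖w‖ < inner ℝ w (h T - h S))
    {γm γp γ γ' : Equiv.Perm Φ} {I : Set Φ} {Q : Φ → ℝ → ℝ → ℂ} (H : IsTransit h γm γp I Q)
    {σ : ℝ} (hσ : σ ∈ Set.Icc (-1 : ℝ) 1)
    (hγ : (0 < σ ∧ γ = γp ∧ γ' = γp) ∨ (σ = 0 ∧ γ = γp ∧ γ' = γm) ∨ (σ < 0 ∧ γ = γm ∧ γ' = γm)) :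
    IsConfig γ γ' I (fun ω => transitCentre h γm γp ω σ)
      (fun ω v => Q ω σ v - transitCentre h γm γp ω σ) := by
  have h01 : (0 : ℝ) ∈ Set.Icc (0 : ℝ) 1 := by simp
  have h11 : (1 : ℝ) ∈ Set.Icc (0 : ℝ) 1 := by simp
  have hout : ∀ ω, ω ∉ I → ∀ r : ℝ, ∀ v ∈ Set.Icc (0 : ℝ) 1, transitCentre h γm γp ω σ +
      r * (Q ω σ v - transitCentre h γm γp ω σ) = h (cycleSet γp ω) + r * homeDir γp ω v := by
    intro ω hω r v hv
    rw [H.transitCentre_eq hω, H.static ω hω σ v hv, add_sub_cancel_left]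
  have hin : ∀ ω (v : ℝ), transitCentre h γm γp ω σ +
      ((1 : ℝ) : ℂ) * (Q ω σ v - transitCentre h γm γp ω σ) = Q ω σ v := by
    intro ω v
    push_cast
    ring
  have hmp : ∀ ω, ω ∉ I → γm ω = γp ω := fun ω hω => by simpa using H.pow_eq ω hω 1
  have hglue_out : ∀ ω, ω ∉ I → ∀ r : ℝ, h (cycleSet γp ω) + r * homeDir γp ω 1 =
      transitCentre h γm γp (γp ω) σ +
        r * (Q (γp ω) σ 0 - transitCentre h γm γp (γp ω) σ) := by
    intro ω hω r
    rw [hout (γp ω) (by rwa [H.mem_top]) r 0 h01, homeDir_glue,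
      cycleSet_eq_iff.2 (Equiv.Perm.sameCycle_apply_right.2 (.refl γp ω))]
  have hgp : 0 ≤ σ → ∀ (ω : Φ) (r : ℝ), (r = 1 ∨ ω ∉ I) → transitCentre h γm γp ω σ +
      r * (Q ω σ 1 - transitCentre h γm γp ω σ) = transitCentre h γm γp (γp ω) σ +
        r * (Q (γp ω) σ 0 - transitCentre h γm γp (γp ω) σ) := by
    intro h0 ω r hr
    by_cases hω : ω ∈ I
    · obtain rfl : r = 1 := hr.resolve_right (not_not_intro hω)
      rw [hin, hin, H.glue_top ω hω σ ⟨h0, hσ.2⟩]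
    · rw [hout ω hω r 1 h11, hglue_out ω hω]
  have hgm : σ ≤ 0 → ∀ (ω : Φ) (r : ℝ), (r = 1 ∨ ω ∉ I) → transitCentre h γm γp ω σ +
      r * (Q ω σ 1 - transitCentre h γm γp ω σ) = transitCentre h γm γp (γm ω) σ +
        r * (Q (γm ω) σ 0 - transitCentre h γm γp (γm ω) σ) := by
    intro h0 ω r hr
    by_cases hω : ω ∈ I
    · obtain rfl : r = 1 := hr.resolve_right (not_not_intro hω)
      rw [hin, hin, H.glue_bot ω hω σ ⟨hσ.1, h0⟩]
    · rw [hout ω hω r 1 h11, hmp ω hω, hglue_out ω hω]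
  have hγpm : ∀ ω, ω ∉ I → γ ω = γp ω ∧ cycleSet γ ω = cycleSet γp ω := by
    intro ω hω
    rcases hγ with ⟨-, rfl, -⟩ | ⟨-, rfl, -⟩ | ⟨-, rfl, -⟩
    · exact ⟨rfl, rfl⟩
    · exact ⟨rfl, rfl⟩
    · exact ⟨hmp ω hω, cycleSet_congr (H.pow_eq ω hω)⟩
  refine ⟨?_, ?_, ?_⟩
  · rcases hγ with ⟨h0, rfl, -⟩ | ⟨h0, rfl, -⟩ | ⟨h0, rfl, -⟩
    exacts [hgp h0.le, hgp h0.ge, hgm h0.le]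
  · rcases hγ with ⟨h0, -, rfl⟩ | ⟨h0, -, rfl⟩ | ⟨h0, -, rfl⟩
    exacts [hgp h0.le, hgm h0.le, hgm h0.le]
  · intro ω ω' r hr r' hr' v hv v' hv' ha ha' he
    have hmixed : ∀ ω ∈ I, ∀ ω', ω' ∉ I → ∀ v : ℝ, ∀ r' ∈ Set.Icc (0 : ℝ) 1, ∀ v',
        Q ω σ v ≠ h (cycleSet γp ω') + r' * homeDir γp ω' v' := by
      intro ω hω ω' hω' v r' hr' v' he
      have := H.sep σ hσ ω hω ω' hω' v
      rw [he, add_sub_cancel_left, norm_mul, norm_homeDir, mul_one, Complex.norm_real,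
        Real.norm_eq_abs, abs_of_nonneg hr'.1] at this
      linarith [hr'.2]
    by_cases hω : ω ∈ I <;> by_cases hω' : ω' ∈ I
    · obtain rfl : r = 1 := ha.resolve_right (not_not_intro hω)
      obtain rfl : r' = 1 := ha'.resolve_right (not_not_intro hω')
      rw [hin, hin] at he
      refine Or.inr ⟨one_pos, one_pos, eqvGen_mono ?_ (H.inj σ hσ ω hω ω' hω' v hv v' hv' he)⟩
      rintro p p' (⟨h1, h2⟩ | ⟨h1, h2⟩) <;>
        rcases hγ with ⟨h0, rfl, rfl⟩ | ⟨h0, rfl, rfl⟩ | ⟨h0, rfl, rfl⟩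
      · exact Or.inl h2
      · exact Or.inl h2
      · linarith
      · linarith
      · exact Or.inr h2
      · exact Or.inl h2
    · obtain rfl : r = 1 := ha.resolve_right (not_not_intro hω)
      rw [hin, hout ω' hω' _ _ hv'] at he
      exact absurd he (hmixed ω hω ω' hω' v r' hr' v')
    · obtain rfl : r' = 1 := ha'.resolve_right (not_not_intro hω')
      rw [hin, hout ω hω _ _ hv] at he
      exact absurd he.symm (hmixed ω' hω' ω hω v' r hr v)
    · rw [hout ω hω _ _ hv, hout ω' hω' _ _ hv'] at he
      obtain ⟨hs, ⟨h1, h2⟩ | ⟨h1, h2, h3⟩⟩ := home_inj hsep hr hr' hv hv' he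
      · refine Or.inl ⟨h1, h2, ?_⟩
        rw [← cycleSet_eq_iff, (hγpm ω hω).2, (hγpm ω' hω').2, cycleSet_eq_iff]
        exact hs
      · refine Or.inr ⟨h1, h2, ?_⟩
        rcases h3 with h3 | ⟨h3, h4, h5⟩ | ⟨h3, h4, h5⟩
        · rw [h3]
          exact .refl _
        · exact .rel _ _ (Or.inl ⟨h3, h4, h5.trans (hγpm ω hω).1.symm⟩)
        · exact .symm _ _ (.rel _ _ (Or.inl ⟨h3, h4, h5.trans (hγpm ω' hω').1.symm⟩))

theorem exists_isConfig_family [Finite Φ] [DecidableEq Φ] {γ γ' : ℝ → Equiv.Perm Φ} {E : Set ℝ}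
    {δ : ℝ} (hδ : 0 < δ) (hE : ∀ ε ∈ E, ∀ ε' ∈ E, ε ≠ ε' → 4 * δ ≤ |ε - ε'|) {d e : ℝ → Φ}
    (hde : ∀ ε ∈ E, d ε ≠ e ε) (hswap : ∀ ε ∈ E, γ' ε = γ ε * Equiv.swap (d ε) (e ε))
    (hnot : ∀ c, c ∉ E → γ' c = γ c)
    (hloc : ∀ c c', c ≤ c' → (∀ ε ∈ E, c < ε → c' < ε) → γ c = γ c')
    (hbelow : ∀ c, ∀ ε ∈ E, c < ε → (∀ ε' ∈ E, c < ε' → ε ≤ ε') → γ c = γ' ε) :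
    ∃ (C : Φ → ℝ → ℂ) (B : Φ → ℝ → ℝ → ℂ), (∀ ω, Continuous (C ω)) ∧
      (∀ ω, Continuous fun p : ℝ × ℝ => B ω p.1 p.2) ∧
      ∀ c, IsConfig (γ c) (γ' c) {ω | ∃ ε ∈ E, |c - ε| < 2 * δ ∧
        ((γ ε).SameCycle (d ε) ω ∨ (γ ε).SameCycle (e ε) ω)} (fun ω => C ω c) (fun ω => B ω c) := by
  classical
  obtain ⟨h, hsep⟩ := exists_separated_points (Set Φ)
  have hT : ∀ ε, ε ∈ E → ∃ Q, IsTransit h (γ' ε) (γ ε)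
      {ω | (γ ε).SameCycle (d ε) ω ∨ (γ ε).SameCycle (e ε) ω} Q := by
    intro ε hε
    rw [hswap ε hε]
    exact exists_isTransit hsep (γ ε) (hde ε hε)
  choose! Q hQ using hT
  set σ : ℝ → ℝ → ℝ := fun ε c => max (-1) (min ((c - ε) / δ) 1) with hσdef
  have hσcont : ∀ ε, Continuous (σ ε) := fun ε => by
    simp only [hσdef]
    fun_prop
  have hσmem : ∀ ε c, σ ε c ∈ Set.Icc (-1 : ℝ) 1 := fun ε c =>
    ⟨le_max_left _ _, max_le (by norm_num) (min_le_right _ _)⟩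
  have hσhi : ∀ ε c, δ ≤ c - ε → σ ε c = 1 := by
    intro ε c hc
    have : 1 ≤ (c - ε) / δ := by rwa [le_div_iff₀ hδ, one_mul]
    simp only [hσdef, min_eq_right this]
    norm_num
  have hσlo : ∀ ε c, c - ε ≤ -δ → σ ε c = -1 := by
    intro ε c hc
    have : (c - ε) / δ ≤ -1 := by rw [div_le_iff₀ hδ]; linarith
    exact max_eq_left ((min_le_left _ _).trans this)
  have hσpos : ∀ ε c, 0 < c - ε → 0 < σ ε c := fun ε c hc =>
    lt_max_of_lt_right (lt_min (div_pos hc hδ) one_pos)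
  have hσneg : ∀ ε c, c - ε < 0 → σ ε c < 0 := fun ε c hc =>
    max_lt (by norm_num) ((min_le_left _ _).trans_lt (div_neg_of_neg_of_pos hc hδ))
  have hσzero : ∀ ε, σ ε ε = 0 := fun ε => by simp [hσdef]
  set κ : ℝ → ℝ := fun v => max 0 (min v 1) with hκ
  have hκcont : Continuous κ := by
    simp only [hκ]
    fun_prop
  have hκmem : ∀ v, κ v ∈ Set.Icc (0 : ℝ) 1 := fun v =>
    ⟨le_max_left _ _, max_le (by norm_num) (min_le_right _ _)⟩
  have hκid : ∀ v ∈ Set.Icc (0 : ℝ) 1, κ v = v := fun v hv => by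
    simp only [hκ, min_eq_left hv.2, max_eq_right hv.1]
  -- The permutations near an event
  have hγabove : ∀ ε ∈ E, ∀ c, 0 ≤ c - ε → c - ε < 2 * δ → γ c = γ ε := by
    intro ε hε c h0 h1
    refine (hloc ε c (by linarith) fun ε' hε' hlt => ?_).symm
    have := hE ε hε ε' hε' hlt.ne
    rw [abs_of_neg (by linarith)] at this
    linarith
  have hγbelow : ∀ ε ∈ E, ∀ c, c - ε < 0 → -(2 * δ) < c - ε → γ c = γ' ε := by
    intro ε hε c h0 h1
    refine hbelow c ε hε (by linarith) fun ε' hε' hlt => ?_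
    by_contra hcon
    have := hE ε hε ε' hε' (by rintro rfl; exact hcon le_rfl)
    rw [abs_of_pos (by linarith)] at this
    linarith
  have hnotE : ∀ ε ∈ E, ∀ c, c ≠ ε → |c - ε| < 2 * δ → c ∉ E := by
    intro ε hε c hne hlt hc
    linarith [hE c hc ε hε hne]
  have huniq : ∀ ε ∈ E, ∀ ε' ∈ E, ∀ c, |c - ε| < 2 * δ → |c - ε'| < 2 * δ → ε = ε' := by
    intro ε hε ε' hε' c h1 h2
    by_contra hne
    have h3 := hE ε hε ε' hε' hne
    have h4 := abs_sub_le ε c ε'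
    rw [abs_sub_comm ε c] at h4
    linarith
  set C : Φ → ℝ → ℂ := fun ω c => if hc : ∃ ε ∈ E, |c - ε| < 2 * δ then
    transitCentre h (γ' hc.choose) (γ hc.choose) ω (σ hc.choose c) else h (cycleSet (γ c) ω) with hC
  set B : Φ → ℝ → ℝ → ℂ := fun ω c v => if hc : ∃ ε ∈ E, |c - ε| < 2 * δ then
    Q hc.choose ω (σ hc.choose c) (κ v) -
      transitCentre h (γ' hc.choose) (γ hc.choose) ω (σ hc.choose c)
    else homeDir (γ c) ω (κ v) with hB
  have hnear : ∀ ε ∈ E, ∀ c, |c - ε| < 2 * δ → ∀ ω,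
      C ω c = transitCentre h (γ' ε) (γ ε) ω (σ ε c) ∧ ∀ v,
      B ω c v = Q ε ω (σ ε c) (κ v) - transitCentre h (γ' ε) (γ ε) ω (σ ε c) := by
    intro ε hε c hlt ω
    have hex : ∃ ε ∈ E, |c - ε| < 2 * δ := ⟨ε, hε, hlt⟩
    have heq : hex.choose = ε := huniq _ hex.choose_spec.1 _ hε c hex.choose_spec.2 hlt
    simp only [hC, hB, dif_pos hex, heq]
    exact ⟨trivial, fun _ => trivial⟩
  have hfar : ∀ c, (∀ ε ∈ E, δ ≤ |c - ε|) → ∀ ω,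
      C ω c = h (cycleSet (γ c) ω) ∧ ∀ v, B ω c v = homeDir (γ c) ω (κ v) := by
    intro c hc ω
    by_cases hex : ∃ ε ∈ E, |c - ε| < 2 * δ
    · obtain ⟨ε, hε, hlt⟩ := hex
      obtain ⟨h1, h2⟩ := hnear ε hε c hlt ω
      rw [abs_lt] at hlt
      rcases le_abs'.1 (hc ε hε) with h3 | h3
      · have hCC : C ω c = h (cycleSet (γ c) ω) := by
          rw [h1, hσlo ε c h3, hγbelow ε hε c (by linarith) hlt.1, transitCentre]
          norm_num
        refine ⟨hCC, fun v => ?_⟩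
        rw [h2, ← h1, hCC, hσlo ε c h3, (hQ ε hε).bot ω _ (hκmem v),
          hγbelow ε hε c (by linarith) hlt.1, add_sub_cancel_left]
      · have hCC : C ω c = h (cycleSet (γ c) ω) := by
          rw [h1, hσhi ε c h3, hγabove ε hε c (by linarith) hlt.2, transitCentre]
          norm_num
        refine ⟨hCC, fun v => ?_⟩
        rw [h2, ← h1, hCC, hσhi ε c h3, (hQ ε hε).top ω _ (hκmem v),
          hγabove ε hε c (by linarith) hlt.2, add_sub_cancel_left]
    · simp only [hC, hB, dif_neg hex]
      exact ⟨trivial, fun _ => trivial⟩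
  have hconst : ∀ c, (∀ ε ∈ E, 2 * δ ≤ |c - ε|) → ∀ c', |c' - c| < δ →
      γ c' = γ c ∧ ∀ ε ∈ E, δ ≤ |c' - ε| := by
    intro c hc c' hlt
    have hno : ∀ ε ∈ E, δ ≤ |c' - ε| := by
      intro ε hε
      have h3 := abs_sub_le c c' ε
      rw [abs_sub_comm c c'] at h3
      linarith [hc ε hε]
    refine ⟨?_, hno⟩
    rw [abs_lt] at hlt
    rcases le_total c' c with hle | hle
    · refine hloc c' c hle fun ε hε h1 => ?_
      rcases le_abs'.1 (hc ε hε) with h2 | h2 <;> linarith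
    · refine (hloc c c' hle fun ε hε h1 => ?_).symm
      rcases le_abs'.1 (hc ε hε) with h2 | h2 <;> linarith
  have hnhds : ∀ c a : ℝ, 0 < a → ∀ᶠ c' in nhds c, |c' - c| < a := fun c a ha => by
    filter_upwards [Metric.ball_mem_nhds c ha] with c' hc'
    exact hc'
  have hnhds' : ∀ c ε a : ℝ, |c - ε| < a → ∀ᶠ c' in nhds c, |c' - ε| < a := fun c ε a ha =>
    (by fun_prop : Continuous fun c' : ℝ => |c' - ε|).continuousAt.eventually_lt_const ha
  refine ⟨C, B, fun ω => ?_, fun ω => ?_, fun c => ?_⟩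
  · rw [continuous_iff_continuousAt]
    intro c
    by_cases hex : ∃ ε ∈ E, |c - ε| < 2 * δ
    · obtain ⟨ε, hε, hlt⟩ := hex
      have hev : C ω =ᶠ[nhds c] fun c => transitCentre h (γ' ε) (γ ε) ω (σ ε c) := by
        filter_upwards [hnhds' c ε _ hlt] with c' hc'
        exact (hnear ε hε c' hc' ω).1
      refine ContinuousAt.congr ?_ hev.symm
      have := hσcont ε
      unfold transitCentre
      fun_prop
    · push Not at hex
      have hev : C ω =ᶠ[nhds c] fun _ => h (cycleSet (γ c) ω) := by
        filter_upwards [hnhds c δ hδ] with c' hc'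
        obtain ⟨h1, h2⟩ := hconst c hex c' hc'
        rw [(hfar c' h2 ω).1, h1]
      exact continuousAt_const.congr hev.symm
  · rw [continuous_iff_continuousAt]
    rintro ⟨c, v⟩
    by_cases hex : ∃ ε ∈ E, |c - ε| < 2 * δ
    · obtain ⟨ε, hε, hlt⟩ := hex
      have hev : (fun p : ℝ × ℝ => B ω p.1 p.2) =ᶠ[nhds (c, v)] fun p =>
          Q ε ω (σ ε p.1) (κ p.2) - transitCentre h (γ' ε) (γ ε) ω (σ ε p.1) := by
        filter_upwards [continuousAt_fst.eventually (hnhds' c ε _ hlt)] with p hp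
        exact (hnear ε hε p.1 hp ω).2 p.2
      refine ContinuousAt.congr (Continuous.continuousAt (Continuous.sub ?_ ?_)) hev.symm
      · exact ((hQ ε hε).cont ω).comp
          (((hσcont ε).comp continuous_fst).prodMk (hκcont.comp continuous_snd))
      · have := hσcont ε
        unfold transitCentre
        fun_prop
    · push Not at hex
      have hev : (fun p : ℝ × ℝ => B ω p.1 p.2) =ᶠ[nhds (c, v)] fun p =>
          homeDir (γ c) ω (κ p.2) := by
        filter_upwards [continuousAt_fst.eventually (hnhds c δ hδ)] with p hp
        obtain ⟨h1, h2⟩ := hconst c hex p.1 hp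
        rw [(hfar p.1 h2 ω).2, h1]
      refine ContinuousAt.congr ?_ hev.symm
      exact ((continuous_homeDir (γ c) ω).comp (hκcont.comp continuous_snd)).continuousAt
  · by_cases hex : ∃ ε ∈ E, |c - ε| < 2 * δ
    · obtain ⟨ε, hε, hlt⟩ := hex
      have hset : {ω | ∃ ε ∈ E, |c - ε| < 2 * δ ∧
          ((γ ε).SameCycle (d ε) ω ∨ (γ ε).SameCycle (e ε) ω)} =
          {ω | (γ ε).SameCycle (d ε) ω ∨ (γ ε).SameCycle (e ε) ω} := by
        ext ω
        constructor
        · rintro ⟨ε', hε', hlt', h1⟩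
          rwa [huniq ε' hε' ε hε c hlt' hlt] at h1
        · exact fun h1 => ⟨ε, hε, hlt, h1⟩
      rw [hset]
      have hcfg : (0 < σ ε c ∧ γ c = γ ε ∧ γ' c = γ ε) ∨ (σ ε c = 0 ∧ γ c = γ ε ∧ γ' c = γ' ε) ∨
          (σ ε c < 0 ∧ γ c = γ' ε ∧ γ' c = γ' ε) := by
        have hlt' := abs_lt.1 hlt
        rcases lt_trichotomy c ε with h1 | h1 | h1
        · have h2 := hγbelow ε hε c (by linarith) hlt'.1
          exact Or.inr (Or.inr ⟨hσneg ε c (by linarith), h2,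
            (hnot c (hnotE ε hε c h1.ne hlt)).trans h2⟩)
        · subst h1
          exact Or.inr (Or.inl ⟨hσzero c, rfl, rfl⟩)
        · have h2 := hγabove ε hε c (by linarith) hlt'.2
          exact Or.inl ⟨hσpos ε c (by linarith), h2,
            (hnot c (hnotE ε hε c h1.ne' hlt)).trans h2⟩
      refine ((hQ ε hε).isConfig hsep (hσmem ε c) hcfg).congr
        (fun ω => (hnear ε hε c hlt ω).1) fun ω v hv => ?_
      rw [(hnear ε hε c hlt ω).2, hκid v hv]
    · push Not at hex
      have hcE : c ∉ E := fun hc => by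
        have := hex c hc
        rw [sub_self, abs_zero] at this
        linarith
      rw [hnot c hcE]
      have hex' : ∀ ε ∈ E, δ ≤ |c - ε| := fun ε hε => by linarith [hex ε hε]
      refine (isConfig_home hsep (γ c) _).congr (fun ω => (hfar c hex' ω).1) fun ω v hv => ?_
      rw [(hfar c hex' ω).2, hκid v hv]

end Levels

/-- The flags of an oriented triangulated surface: the barycentric triangles with their three
reflections and their orientation sign. -/
structure FlagSystem (Φ : Type*) where
  r₀ : Φ → Φ
  r₁ : Φ → Φ
  r₂ : Φ → Φ
  sgn : Φ → Bool
  r₀_r₀ : ∀ ω, r₀ (r₀ ω) = ω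
  r₁_r₁ : ∀ ω, r₁ (r₁ ω) = ω
  r₂_r₂ : ∀ ω, r₂ (r₂ ω) = ω
  sgn_r₀ : ∀ ω, sgn (r₀ ω) = !sgn ω
  sgn_r₁ : ∀ ω, sgn (r₁ ω) = !sgn ω
  sgn_r₂ : ∀ ω, sgn (r₂ ω) = !sgn ω
  comm : ∀ ω, r₂ (r₀ ω) = r₀ (r₂ ω)
  ne : ∀ ω, r₀ ω ≠ r₂ ω

/-- The parameter domain of a barycentric triangle. -/
def flagTriangle : Set (ℝ × ℝ) := {p | 0 ≤ p.2 ∧ p.2 ≤ p.1 ∧ p.1 ≤ 1}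

namespace FlagSystem

variable {Φ : Type*}

/-- Adjacent barycentric triangles are glued along their common side. -/
def Step (F : FlagSystem Φ) (x y : Φ × (ℝ × ℝ)) : Prop :=
  y.2 = x.2 ∧ ((x.2.2 = 0 ∧ y.1 = F.r₀ x.1) ∨ (x.2.1 = x.2.2 ∧ y.1 = F.r₁ x.1) ∨
    (x.2.1 = 1 ∧ y.1 = F.r₂ x.1))

/-- Turn around faces outside `P` and around vertices inside `P`. -/
noncomputable def turn (F : FlagSystem Φ) (P : Φ → Prop) (ω : Φ) : Φ :=
  open scoped Classical in
  if F.sgn ω then (if P ω then F.r₂ ω else F.r₀ ω) else F.r₁ ω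

theorem turn_injective (F : FlagSystem Φ) {P : Φ → Prop} (h₀ : ∀ ω, P (F.r₀ ω) ↔ P ω)
    (h₂ : ∀ ω, P (F.r₂ ω) ↔ P ω) : Function.Injective (F.turn P) := by
  have hs : ∀ ω, F.sgn (F.turn P ω) = !F.sgn ω := by
    intro ω
    unfold turn
    split_ifs
    exacts [F.sgn_r₂ ω, F.sgn_r₀ ω, F.sgn_r₁ ω]
  have hP : ∀ ω, F.sgn ω = true → (P (F.turn P ω) ↔ P ω) := by
    intro ω hω
    unfold turn
    rw [if_pos hω]
    split_ifs
    exacts [h₂ ω, h₀ ω]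
  intro x y hxy
  have hsxy : F.sgn x = F.sgn y := by
    have := congrArg F.sgn hxy
    rw [hs, hs] at this
    simpa using this
  by_cases hx : F.sgn x = true
  · have hy := hsxy ▸ hx
    have hPxy : P x ↔ P y := by rw [← hP x hx, ← hP y hy, hxy]
    unfold turn at hxy
    rw [if_pos hx, if_pos hy] at hxy
    by_cases hpx : P x
    · rw [if_pos hpx, if_pos (hPxy.1 hpx)] at hxy
      rw [← F.r₂_r₂ x, hxy, F.r₂_r₂]
    · rw [if_neg hpx, if_neg (fun h => hpx (hPxy.2 h))] at hxy
      rw [← F.r₀_r₀ x, hxy, F.r₀_r₀]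
  · have hy : ¬F.sgn y = true := hsxy ▸ hx
    unfold turn at hxy
    rw [if_neg hx, if_neg hy] at hxy
    rw [← F.r₁_r₁ x, hxy, F.r₁_r₁]

/-- A Morse-like height function: faces are high, vertices are low and the heights of the edges are
distinct. -/
structure IsHeight (F : FlagSystem Φ) (AF Ae Av : Φ → ℝ) : Prop where
  AF_r₀ : ∀ ω, AF (F.r₀ ω) = AF ω
  AF_r₁ : ∀ ω, AF (F.r₁ ω) = AF ω
  Ae_r₀ : ∀ ω, Ae (F.r₀ ω) = Ae ω
  Ae_r₂ : ∀ ω, Ae (F.r₂ ω) = Ae ω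
  Av_r₁ : ∀ ω, Av (F.r₁ ω) = Av ω
  Av_r₂ : ∀ ω, Av (F.r₂ ω) = Av ω
  Ae_lt : ∀ ω, Ae ω < AF ω
  Av_lt : ∀ ω, Av ω < Ae ω
  AF_le : ∀ ω, AF ω ≤ 1
  le_Av : ∀ ω, -1 ≤ Av ω
  Ae_inj : ∀ ω ω', Ae ω = Ae ω' → F.sgn ω = F.sgn ω' → ω' = ω ∨ ω' = F.r₀ (F.r₂ ω)

end FlagSystem

/-- The height of a point of a barycentric triangle. -/
def flagLevel {Φ : Type*} (AF Ae Av : Φ → ℝ) (ω : Φ) (p : ℝ × ℝ) : ℝ :=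
  (1 - p.1) * AF ω + (p.1 - p.2) * Ae ω + p.2 * Av ω

namespace FlagSystem

variable {Φ : Type*}

theorem Step.flagLevel_eq {F : FlagSystem Φ} {AF Ae Av : Φ → ℝ} (hA : F.IsHeight AF Ae Av)
    {x y : Φ × (ℝ × ℝ)} (h : F.Step x y) :
    flagLevel AF Ae Av y.1 y.2 = flagLevel AF Ae Av x.1 x.2 := by
  obtain ⟨h1, ⟨h2, h3⟩ | ⟨h2, h3⟩ | ⟨h2, h3⟩⟩ := h
  · simp only [flagLevel, h1, h3, h2, hA.AF_r₀, hA.Ae_r₀]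
    ring
  · simp only [flagLevel, h1, h3, h2, hA.AF_r₁, hA.Av_r₁]
    ring
  · simp only [flagLevel, h1, h3, h2, hA.Ae_r₂, hA.Av_r₂]
    ring

end FlagSystem

/-- The angular coordinate in a barycentric triangle, away from its face and vertex corners. -/
noncomputable def flagAngle (p : ℝ × ℝ) : ℝ := 1 - min (p.2 / p.1) ((1 - p.1) / (1 - p.2))

theorem flagAngle_mem {p : ℝ × ℝ} (hp : p ∈ flagTriangle) : flagAngle p ∈ Set.Icc (0 : ℝ) 1 := by
  obtain ⟨h1, h2, h3⟩ := hp
  have h4 : p.2 / p.1 ≤ 1 := div_le_one_of_le₀ h2 (h1.trans h2)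
  have h5 : 0 ≤ p.2 / p.1 := div_nonneg h1 (h1.trans h2)
  have h6 : 0 ≤ (1 - p.1) / (1 - p.2) := div_nonneg (by linarith) (by linarith)
  exact ⟨by unfold flagAngle; linarith [min_le_left (p.2 / p.1) ((1 - p.1) / (1 - p.2))],
    by unfold flagAngle; linarith [le_min h5 h6]⟩

theorem flagAngle_eq_one_iff {p : ℝ × ℝ} (hp : p ∈ flagTriangle) (h0 : 0 < p.1) (h1 : p.2 < 1) :
    flagAngle p = 1 ↔ p.2 = 0 ∨ p.1 = 1 := by
  obtain ⟨h2, h3, h4⟩ := hp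
  have h5 : 0 ≤ p.2 / p.1 := div_nonneg h2 h0.le
  have h6 : 0 ≤ (1 - p.1) / (1 - p.2) := div_nonneg (by linarith) (by linarith)
  have h7 : flagAngle p = 1 ↔ min (p.2 / p.1) ((1 - p.1) / (1 - p.2)) = 0 := by
    unfold flagAngle
    constructor <;> intro h <;> linarith
  have h8 : p.2 / p.1 = 0 ↔ p.2 = 0 := by simp [h0.ne']
  have h9 : (1 - p.1) / (1 - p.2) = 0 ↔ p.1 = 1 := by
    rw [div_eq_zero_iff, sub_eq_zero, or_iff_left (by linarith : 1 - p.2 ≠ 0), eq_comm]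
  rw [h7, ← h8, ← h9]
  constructor
  · intro h
    rcases min_choice (p.2 / p.1) ((1 - p.1) / (1 - p.2)) with hm | hm <;> rw [hm] at h
    exacts [Or.inl h, Or.inr h]
  · rintro (h | h)
    · rw [h, min_eq_left h6]
    · rw [h, min_eq_right h5]

theorem flagAngle_eq_zero_iff {p : ℝ × ℝ} (hp : p ∈ flagTriangle) (h0 : 0 < p.1) (h1 : p.2 < 1) :
    flagAngle p = 0 ↔ p.1 = p.2 := by
  obtain ⟨h2, h3, h4⟩ := hp
  have h5 : p.2 / p.1 ≤ 1 := div_le_one_of_le₀ h3 h0.le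
  unfold flagAngle
  constructor
  · intro h
    have h6 : 1 ≤ p.2 / p.1 := by
      linarith [min_le_left (p.2 / p.1) ((1 - p.1) / (1 - p.2))]
    rw [le_div_iff₀ h0] at h6
    linarith
  · intro h
    rw [← h, div_self h0.ne', div_self (by linarith), min_self, sub_self]

theorem eq_of_flagAngle_eq {x y : ℝ} (hx : 0 < x) (hy : 0 < y) {p q : ℝ × ℝ}
    (hp : p ∈ flagTriangle) (hq : q ∈ flagTriangle) (hp0 : 0 < p.1) (hp1 : p.2 < 1)
    (hq0 : 0 < q.1) (hq1 : q.2 < 1) (hτ : flagAngle p = flagAngle q)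
    (hl : p.1 * x + p.2 * y = q.1 * x + q.2 * y) : p = q := by
  have key : ∀ p q : ℝ × ℝ, p ∈ flagTriangle → q ∈ flagTriangle → 0 < p.1 → p.2 < 1 → 0 < q.1 →
      q.2 < 1 → flagAngle p = flagAngle q → p.1 * x + p.2 * y = q.1 * x + q.2 * y →
      ¬ p.1 < q.1 := by
    intro p q hp hq hp0 hp1 hq0 hq1 hτ hl hlt
    have hb : q.2 < p.2 := by nlinarith
    have h1 : q.2 / q.1 < p.2 / p.1 := by
      rw [div_lt_div_iff₀ hq0 hp0]
      nlinarith [hq.1]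
    have h2 : (1 - q.1) / (1 - q.2) < (1 - p.1) / (1 - p.2) := by
      rw [div_lt_div_iff₀ (by linarith) (by linarith)]
      nlinarith [hq.2.2]
    have h3 := min_lt_min h1 h2
    unfold flagAngle at hτ
    linarith
  have h1 : p.1 = q.1 := le_antisymm (not_lt.1 (key q p hq hp hq0 hq1 hp0 hp1 hτ.symm hl.symm))
    (not_lt.1 (key p q hp hq hp0 hp1 hq0 hq1 hτ hl))
  have h2 : p.2 = q.2 := by
    rw [h1, add_right_inj] at hl
    exact mul_right_cancel₀ hy.ne' hl
  exact Prod.ext h1 h2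

theorem sameCycle_mem_of_forall {Φ : Type*} [Finite Φ] {γ : Equiv.Perm Φ} {S : Set Φ}
    (hS : ∀ x ∈ S, γ x ∈ S) {x y : Φ} (hx : x ∈ S) (h : γ.SameCycle x y) : y ∈ S := by
  obtain ⟨n, rfl⟩ := h.exists_nat_pow_eq
  induction n with
  | zero => exact hx
  | succ n ih =>
    rw [pow_succ', Equiv.Perm.mul_apply]
    exact hS _ (ih ⟨n, by simp⟩)

theorem IsConfig.mono {Φ : Type*} {γ γ' : Equiv.Perm Φ} {Act Act' : Set Φ} {C : Φ → ℂ}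
    {B : Φ → ℝ → ℂ} (H : IsConfig γ γ' Act C B) (hA : Act ⊆ Act') : IsConfig γ γ' Act' C B where
  glue ω r hr := H.glue ω r (hr.imp_right fun h h' => h (hA h'))
  glue' ω r hr := H.glue' ω r (hr.imp_right fun h h' => h (hA h'))
  inj ω ω' r hr r' hr' v hv v' hv' h h' := H.inj ω ω' r hr r' hr' v hv v' hv'
    (h.imp_right fun h h' => h (hA h')) (h'.imp_right fun h h' => h (hA h'))

theorem exists_pos_forall_le_of_finite {ι : Type*} [Finite ι] {f : ι → ℝ} (hf : ∀ i, 0 < f i) :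
    ∃ δ > 0, ∀ i, δ ≤ f i := by
  cases isEmpty_or_nonempty ι
  · exact ⟨1, one_pos, fun i => isEmptyElim i⟩
  · obtain ⟨i, hi⟩ := Finite.exists_min f
    exact ⟨f i, hf i, hi⟩

theorem exists_pos_forall_le_abs_sub {ι : Type*} [Finite ι] (f : ι → ℝ) :
    ∃ δ > 0, ∀ i j, f i ≠ f j → δ ≤ |f i - f j| := by
  obtain ⟨δ, hδ, h⟩ := exists_pos_forall_le_of_finite
    (f := fun p : {p : ι × ι // f p.1 ≠ f p.2} => |f p.1.1 - f p.1.2|)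
    (fun p => abs_pos.2 (sub_ne_zero.2 p.2))
  exact ⟨δ, hδ, fun i j hne => h ⟨(i, j), hne⟩⟩

namespace FlagSystem

variable {Φ : Type*}

theorem turn_congr (F : FlagSystem Φ) {P P' : Φ → Prop} (ω : Φ)
    (h : F.sgn ω = true → (P ω ↔ P' ω)) : F.turn P ω = F.turn P' ω := by
  unfold turn
  split_ifs <;> simp_all

section Turns

variable [Finite Φ] {F : FlagSystem Φ} {AF Ae Av : Φ → ℝ}

/-- The boundary permutation just above a level. -/
noncomputable def IsHeight.up (hA : F.IsHeight AF Ae Av) (c : ℝ) : Equiv.Perm Φ :=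
  Equiv.ofBijective (F.turn fun ω => c < Ae ω) (Finite.injective_iff_bijective.1
    (F.turn_injective (fun ω => by rw [hA.Ae_r₀]) (fun ω => by rw [hA.Ae_r₂])))

/-- The boundary permutation just below a level. -/
noncomputable def IsHeight.down (hA : F.IsHeight AF Ae Av) (c : ℝ) : Equiv.Perm Φ :=
  Equiv.ofBijective (F.turn fun ω => c ≤ Ae ω) (Finite.injective_iff_bijective.1
    (F.turn_injective (fun ω => by rw [hA.Ae_r₀]) (fun ω => by rw [hA.Ae_r₂])))

theorem IsHeight.up_apply (hA : F.IsHeight AF Ae Av) (c : ℝ) (ω : Φ) :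
    hA.up c ω = F.turn (fun ω => c < Ae ω) ω := rfl

theorem IsHeight.down_apply (hA : F.IsHeight AF Ae Av) (c : ℝ) (ω : Φ) :
    hA.down c ω = F.turn (fun ω => c ≤ Ae ω) ω := rfl

theorem IsHeight.exists_isConfig (hA : F.IsHeight AF Ae Av) {δ₀ : ℝ} (hδ₀ : 0 < δ₀) :
    ∃ (C : Φ → ℝ → ℂ) (B : Φ → ℝ → ℝ → ℂ), (∀ ω, Continuous (C ω)) ∧
      (∀ ω, Continuous fun p : ℝ × ℝ => B ω p.1 p.2) ∧
      ∀ c, IsConfig (hA.up c) (hA.down c)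
        {ω | ∃ ω₀, |c - Ae ω₀| < δ₀ ∧ (hA.up (Ae ω₀)).SameCycle ω₀ ω}
        (fun ω => C ω c) (fun ω => B ω c) := by
  classical
  obtain ⟨δ₁, hδ₁, hsep⟩ := exists_pos_forall_le_abs_sub Ae
  have hδ : 0 < min (δ₁ / 4) (δ₀ / 2) := by positivity
  have hd : ∀ ε, ε ∈ Set.range Ae → ∃ ω, Ae ω = ε ∧ F.sgn ω = true := by
    rintro _ ⟨ω, rfl⟩
    by_cases h : F.sgn ω = true
    · exact ⟨ω, rfl, h⟩
    · exact ⟨F.r₀ ω, hA.Ae_r₀ ω, by simp [F.sgn_r₀, h]⟩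
  by_cases hne : Nonempty Φ
  swap
  · have hΦ : IsEmpty Φ := not_nonempty_iff.1 hne
    exact ⟨fun ω => isEmptyElim ω, fun ω => isEmptyElim ω, fun ω => isEmptyElim ω,
      fun ω => isEmptyElim ω, fun c => ⟨fun ω => isEmptyElim ω, fun ω => isEmptyElim ω,
        fun ω => isEmptyElim ω⟩⟩
  choose! d hdA hds using hd
  obtain ⟨C, B, hC, hB, hcfg⟩ := exists_isConfig_family (γ := hA.up) (γ' := hA.down)
    (E := Set.range Ae) hδ (d := d) (e := fun ε => F.r₀ (F.r₂ (d ε)))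
    (by
      rintro _ ⟨x, rfl⟩ _ ⟨y, rfl⟩ hne
      have := hsep x y hne
      linarith [min_le_left (δ₁ / 4) (δ₀ / 2)])
    (fun ε hε h => F.ne (d ε) (by
      have h2 := congrArg F.r₀ h
      rwa [F.r₀_r₀] at h2))
    (fun ε hε => by
      ext ω
      rw [Equiv.Perm.mul_apply]
      have hse : F.sgn (F.r₀ (F.r₂ (d ε))) = true := by
        rw [F.sgn_r₀, F.sgn_r₂, hds ε hε]; rfl
      have hAe : Ae (F.r₀ (F.r₂ (d ε))) = ε := by rw [hA.Ae_r₀, hA.Ae_r₂, hdA ε hε]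
      by_cases h1 : ω = d ε
      · subst h1
        rw [Equiv.swap_apply_left, hA.up_apply, hA.down_apply]
        unfold turn
        rw [if_pos (hds ε hε), if_pos (hdA ε hε).ge, if_pos hse, if_neg hAe.le.not_gt, F.r₀_r₀]
      by_cases h2 : ω = F.r₀ (F.r₂ (d ε))
      · subst h2
        rw [Equiv.swap_apply_right, hA.up_apply, hA.down_apply]
        unfold turn
        rw [if_pos (hds ε hε), if_neg (hdA ε hε).le.not_gt, if_pos hse, if_pos hAe.ge, F.comm,
          F.r₂_r₂]
      rw [Equiv.swap_apply_of_ne_of_ne h1 h2, hA.up_apply, hA.down_apply]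
      refine F.turn_congr ω fun hs => ?_
      refine ⟨fun h => h.lt_of_ne fun h3 => ?_, fun h => le_of_lt h⟩
      rcases hA.Ae_inj (d ε) ω ((hdA ε hε).trans h3) ((hds ε hε).trans hs.symm) with h4 | h4
      exacts [h1 h4, h2 h4])
    (fun c hc => by
      ext ω
      rw [hA.up_apply, hA.down_apply]
      exact F.turn_congr ω fun _ => ⟨fun h => h.lt_of_ne fun h3 => hc ⟨ω, h3.symm⟩, le_of_lt⟩)
    (fun c c' hcc h => by
      ext ω
      rw [hA.up_apply, hA.up_apply]
      exact F.turn_congr ω fun _ => ⟨fun h1 => h _ ⟨ω, rfl⟩ h1, fun h1 => hcc.trans_lt h1⟩)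
    (fun c ε hε hcε h => by
      ext ω
      rw [hA.up_apply, hA.down_apply]
      exact F.turn_congr ω fun _ => ⟨fun h1 => h _ ⟨ω, rfl⟩ h1, fun h1 => hcε.trans_le h1⟩)
  refine ⟨C, B, hC, hB, fun c => (hcfg c).mono ?_⟩
  rintro ω ⟨ε, hε, hlt, h⟩
  have hlt' : |c - ε| < δ₀ := by linarith [min_le_right (δ₁ / 4) (δ₀ / 2)]
  rcases h with h | h
  · exact ⟨d ε, by rwa [hdA ε hε], by rwa [hdA ε hε]⟩
  · have hAe : Ae (F.r₀ (F.r₂ (d ε))) = ε := by rw [hA.Ae_r₀, hA.Ae_r₂, hdA ε hε]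
    exact ⟨F.r₀ (F.r₂ (d ε)), by rwa [hAe], by rwa [hAe]⟩

/-- Above all edges of a face the boundary permutation turns around this face. -/
theorem IsHeight.sameCycle_face (hA : F.IsHeight AF Ae Av) {c : ℝ} {ω ω' : Φ}
    (h : (hA.up c).SameCycle ω ω') (hc : ∀ x, AF x = AF ω → Ae x ≤ c) :
    AF ω' = AF ω ∧ Relation.EqvGen F.Step (ω, (0, 0)) (ω', (0, 0)) := by
  refine sameCycle_mem_of_forall (S := {x | AF x = AF ω ∧
    Relation.EqvGen F.Step (ω, (0, 0)) (x, (0, 0))}) ?_ ⟨rfl, .refl _⟩ h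
  rintro x ⟨hx, hx'⟩
  rw [hA.up_apply]
  unfold turn
  rw [if_neg (hc x hx).not_gt]
  split_ifs
  · exact ⟨(hA.AF_r₀ x).trans hx, hx'.trans _ _ _ (.rel _ _ ⟨rfl, Or.inl ⟨rfl, rfl⟩⟩)⟩
  · exact ⟨(hA.AF_r₁ x).trans hx, hx'.trans _ _ _ (.rel _ _ ⟨rfl, Or.inr (Or.inl ⟨rfl, rfl⟩)⟩)⟩

/-- Below all edges of a vertex the boundary permutation turns around this vertex. -/
theorem IsHeight.sameCycle_vertex (hA : F.IsHeight AF Ae Av) {c : ℝ} {ω ω' : Φ}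
    (h : (hA.up c).SameCycle ω ω') (hc : ∀ x, Av x = Av ω → c < Ae x) :
    Av ω' = Av ω ∧ Relation.EqvGen F.Step (ω, (1, 1)) (ω', (1, 1)) := by
  refine sameCycle_mem_of_forall (S := {x | Av x = Av ω ∧
    Relation.EqvGen F.Step (ω, (1, 1)) (x, (1, 1))}) ?_ ⟨rfl, .refl _⟩ h
  rintro x ⟨hx, hx'⟩
  rw [hA.up_apply]
  unfold turn
  rw [if_pos (hc x hx)]
  split_ifs
  · exact ⟨(hA.Av_r₂ x).trans hx,
      hx'.trans _ _ _ (.rel _ _ ⟨rfl, Or.inr (Or.inr ⟨rfl, rfl⟩)⟩)⟩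
  · exact ⟨(hA.Av_r₁ x).trans hx, hx'.trans _ _ _ (.rel _ _ ⟨rfl, Or.inr (Or.inl ⟨rfl, rfl⟩)⟩)⟩

theorem IsHeight.not_active (hA : F.IsHeight AF Ae Av) {δ₀ : ℝ}
    (hF : ∀ x, Ae x + δ₀ ≤ AF x) (hV : ∀ x, Av x + δ₀ ≤ Ae x) {ω : Φ} {p : ℝ × ℝ}
    (hp : p ∈ flagTriangle) (h : p.1 < δ₀ / 4 ∨ 1 - p.2 < δ₀ / 4) :
    ω ∉ {ω' | ∃ ω₀, |flagLevel AF Ae Av ω p - Ae ω₀| < δ₀ / 2 ∧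
      (hA.up (Ae ω₀)).SameCycle ω₀ ω'} := by
  rintro ⟨ω₀, hlt, hs⟩
  obtain ⟨h1, h2, h3⟩ := hp
  have hAF := hA.AF_le ω
  have hAv := hA.le_Av ω
  have hAe := hA.Ae_lt ω
  have hAe' := hA.Av_lt ω
  rw [abs_lt] at hlt
  have hlevel : flagLevel AF Ae Av ω p = (1 - p.1) * AF ω + (p.1 - p.2) * Ae ω + p.2 * Av ω := rfl
  rcases h with h | h
  · have hc : AF ω - δ₀ / 2 < flagLevel AF Ae Av ω p := by
      rw [hlevel]
      nlinarith
    have := (hA.sameCycle_face hs.symm fun x hx => by linarith [hF x]).1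
    linarith [hF ω₀]
  · have hc : flagLevel AF Ae Av ω p < Av ω + δ₀ / 2 := by
      rw [hlevel]
      nlinarith
    have := (hA.sameCycle_vertex hs.symm fun x hx => by linarith [hV x]).1
    linarith [hV ω₀]

end Turns

end FlagSystem

/-- The radial coordinate in a barycentric triangle, measured from its face and vertex corners. -/
noncomputable def flagRadius (η : ℝ) (p : ℝ × ℝ) : ℝ := min 1 (min p.1 (1 - p.2) / η)

theorem flagRadius_mem {η : ℝ} (hη : 0 < η) {p : ℝ × ℝ} (hp : p ∈ flagTriangle) :
    flagRadius η p ∈ Set.Icc (0 : ℝ) 1 := by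
  obtain ⟨h1, h2, h3⟩ := hp
  exact ⟨le_min zero_le_one (div_nonneg (le_min (by linarith) (by linarith)) hη.le),
    min_le_left _ _⟩

theorem flagRadius_eq_one_or {η : ℝ} (hη : 0 < η) (p : ℝ × ℝ) :
    flagRadius η p = 1 ∨ (p.1 < η ∨ 1 - p.2 < η) := by
  by_cases h : p.1 < η ∨ 1 - p.2 < η
  · exact Or.inr h
  · push Not at h
    exact Or.inl (min_eq_left (by rw [le_div_iff₀ hη, one_mul]; exact le_min h.1 h.2))

theorem flagRadius_eq_zero_iff {η : ℝ} (hη : 0 < η) {p : ℝ × ℝ} (hp : p ∈ flagTriangle) :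
    flagRadius η p = 0 ↔ p = (0, 0) ∨ p = (1, 1) := by
  obtain ⟨h1, h2, h3⟩ := hp
  constructor
  · intro h
    have h4 : ¬ 0 < min p.1 (1 - p.2) := fun h0 => by
      have : 0 < flagRadius η p := lt_min one_pos (div_pos h0 hη)
      linarith
    rw [lt_min_iff, not_and_or] at h4
    rcases h4 with h4 | h4
    · exact Or.inl (Prod.ext (by simp; linarith) (by simp; linarith))
    · exact Or.inr (Prod.ext (by simp; linarith) (by simp; linarith))
  · rintro (rfl | rfl) <;> simp [flagRadius]

theorem continuous_flagRadius (η : ℝ) : Continuous (flagRadius η) := by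
  unfold flagRadius
  fun_prop

theorem flagRadius_pos_iff {η : ℝ} (hη : 0 < η) {p : ℝ × ℝ} :
    0 < flagRadius η p ↔ 0 < p.1 ∧ p.2 < 1 := by
  unfold flagRadius
  rw [lt_min_iff, div_pos_iff_of_pos_right hη, lt_min_iff, sub_pos]
  simp

namespace FlagSystem

variable {Φ : Type*}

/-- The coordinate along the boundary arc belonging to a flag, oriented by the sign. -/
noncomputable def arcCoord (F : FlagSystem Φ) (ω : Φ) (p : ℝ × ℝ) : ℝ :=
  if F.sgn ω then flagAngle p else 1 - flagAngle p

theorem arcCoord_mem (F : FlagSystem Φ) (ω : Φ) {p : ℝ × ℝ} (hp : p ∈ flagTriangle) :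
    F.arcCoord ω p ∈ Set.Icc (0 : ℝ) 1 := by
  obtain ⟨h1, h2⟩ := flagAngle_mem hp
  unfold arcCoord
  split_ifs
  · exact ⟨h1, h2⟩
  · exact ⟨by linarith, by linarith⟩

theorem arcCoord_of_sgn_eq (F : FlagSystem Φ) {ω ω' : Φ} (h : F.sgn ω' = !F.sgn ω) (p : ℝ × ℝ) :
    F.arcCoord ω' p = 1 - F.arcCoord ω p := by
  unfold arcCoord
  rw [h]
  cases F.sgn ω <;> simp

theorem continuousAt_arcCoord (F : FlagSystem Φ) (ω : Φ) {p : ℝ × ℝ} (h0 : 0 < p.1) (h1 : p.2 < 1) :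
    ContinuousAt (F.arcCoord ω) p := by
  have h2 : ContinuousAt flagAngle p := by
    unfold flagAngle
    have h3 : (1 : ℝ) - p.2 ≠ 0 := by linarith
    have h4 := h0.ne'
    fun_prop (disch := assumption)
  unfold arcCoord
  split_ifs
  · exact h2
  · exact continuousAt_const.sub h2

theorem sgn_turn (F : FlagSystem Φ) (P : Φ → Prop) (ω : Φ) : F.sgn (F.turn P ω) = !F.sgn ω := by
  unfold turn
  split_ifs
  exacts [F.sgn_r₂ ω, F.sgn_r₀ ω, F.sgn_r₁ ω]

theorem Step.symm {F : FlagSystem Φ} {x y : Φ × (ℝ × ℝ)} (h : F.Step x y) : F.Step y x := by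
  obtain ⟨h1, h2⟩ := h
  refine ⟨h1.symm, ?_⟩
  rw [h1]
  rcases h2 with ⟨h2, h3⟩ | ⟨h2, h3⟩ | ⟨h2, h3⟩
  · exact Or.inl ⟨h2, by rw [h3, F.r₀_r₀]⟩
  · exact Or.inr (Or.inl ⟨h2, by rw [h3, F.r₁_r₁]⟩)
  · exact Or.inr (Or.inr ⟨h2, by rw [h3, F.r₂_r₂]⟩)

theorem Step.sgn_eq {F : FlagSystem Φ} {x y : Φ × (ℝ × ℝ)} (h : F.Step x y) :
    F.sgn y.1 = !F.sgn x.1 := by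
  obtain ⟨h1, ⟨h2, h3⟩ | ⟨h2, h3⟩ | ⟨h2, h3⟩⟩ := h <;> rw [h3]
  exacts [F.sgn_r₀ _, F.sgn_r₁ _, F.sgn_r₂ _]

theorem IsHeight.flagLevel_mem {F : FlagSystem Φ} {AF Ae Av : Φ → ℝ} (hA : F.IsHeight AF Ae Av)
    (ω : Φ) {p : ℝ × ℝ} (hp : p ∈ flagTriangle) : flagLevel AF Ae Av ω p ∈ Set.Icc (-1 : ℝ) 1 := by
  obtain ⟨h1, h2, h3⟩ := hp
  have := hA.AF_le ω
  have := hA.le_Av ω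
  have := hA.Ae_lt ω
  have := hA.Av_lt ω
  unfold flagLevel
  constructor <;> nlinarith

theorem continuous_flagLevel (AF Ae Av : Φ → ℝ) (ω : Φ) : Continuous (flagLevel AF Ae Av ω) := by
  unfold flagLevel
  fun_prop

theorem IsHeight.step_turn {F : FlagSystem Φ} {AF Ae Av : Φ → ℝ} (hA : F.IsHeight AF Ae Av)
    {P : Φ → Prop} {c : ℝ} {ω : Φ} (hP : P ω → c ≤ Ae ω) (hP' : ¬ P ω → Ae ω ≤ c) {p : ℝ × ℝ}
    (hp : p ∈ flagTriangle) (h0 : 0 < p.1) (h1 : p.2 < 1) (hv : F.arcCoord ω p = 1)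
    (hc : flagLevel AF Ae Av ω p = c ∨ flagLevel AF Ae Av (F.turn P ω) p = c) :
    F.Step (ω, p) (F.turn P ω, p) := by
  unfold arcCoord at hv
  by_cases hs : F.sgn ω = true
  · rw [if_pos hs, flagAngle_eq_one_iff hp h0 h1] at hv
    unfold turn at hc ⊢
    rw [if_pos hs] at hc ⊢
    by_cases hPω : P ω
    · rw [if_pos hPω] at hc ⊢
      refine ⟨rfl, Or.inr (Or.inr ⟨?_, rfl⟩)⟩
      by_contra h3
      have h2 := hv.resolve_right h3
      have h3 : p.1 < 1 := hp.2.2.lt_of_ne h3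
      have h4 := hA.Ae_lt ω
      have h5 := hA.Ae_lt (F.r₂ ω)
      rw [hA.Ae_r₂] at h5
      simp only [flagLevel, h2, hA.Ae_r₂] at hc
      have h6 := hP hPω
      rcases hc with hc | hc <;> nlinarith
    · rw [if_neg hPω] at hc ⊢
      refine ⟨rfl, Or.inl ⟨?_, rfl⟩⟩
      by_contra h3
      have h2 := hv.resolve_left h3
      have h3 : 0 < p.2 := hp.1.lt_of_ne (Ne.symm h3)
      have h4 := hA.Av_lt ω
      have h5 := hA.Av_lt (F.r₀ ω)
      rw [hA.Ae_r₀] at h5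
      simp only [flagLevel, h2, hA.Ae_r₀] at hc
      have h6 := hP' hPω
      rcases hc with hc | hc <;> nlinarith
  · rw [if_neg hs] at hv
    have h2 : flagAngle p = 0 := by linarith
    rw [flagAngle_eq_zero_iff hp h0 h1] at h2
    unfold turn
    rw [if_neg hs]
    exact ⟨rfl, Or.inr (Or.inl ⟨h2, rfl⟩)⟩

theorem Step.exists_turn {F : FlagSystem Φ} {AF Ae Av : Φ → ℝ} [Finite Φ]
    (hA : F.IsHeight AF Ae Av) {ω ω' : Φ} {p : ℝ × ℝ} (hp : p ∈ flagTriangle)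
    (h : F.Step (ω, p) (ω', p)) (hs : F.sgn ω = true) :
    ((ω' = hA.up (flagLevel AF Ae Av ω p) ω ∨ ω' = hA.down (flagLevel AF Ae Av ω p) ω) ∧
      (0 < p.1 → p.2 < 1 → F.arcCoord ω p = 1)) ∨
    (ω = hA.up (flagLevel AF Ae Av ω p) ω' ∧ (0 < p.1 → p.2 < 1 → F.arcCoord ω' p = 1)) := by
  have hs' : F.sgn ω' = false := by rw [h.sgn_eq, hs]; rfl
  have h4 := hA.Ae_lt ω
  have h5 := hA.Av_lt ω
  obtain ⟨-, ⟨h2, h3⟩ | ⟨h2, h3⟩ | ⟨h2, h3⟩⟩ := h <;> dsimp only at h2 h3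
  · refine Or.inl ⟨Or.inl ?_, fun h0 h1 => ?_⟩
    · have : Ae ω ≤ flagLevel AF Ae Av ω p := by
        simp only [flagLevel, h2]
        nlinarith [hp.2.2]
      rw [hA.up_apply, turn, if_pos hs, if_neg this.not_gt, h3]
    · rw [arcCoord, if_pos hs, flagAngle_eq_one_iff hp h0 h1]
      exact Or.inl h2
  · refine Or.inr ⟨?_, fun h0 h1 => ?_⟩
    · rw [hA.up_apply, turn, if_neg (by rw [hs']; simp), h3, F.r₁_r₁]
    · rw [arcCoord, if_neg (by rw [hs']; simp), (flagAngle_eq_zero_iff hp h0 h1).2 h2, sub_zero]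
  · refine Or.inl ⟨Or.inr ?_, fun h0 h1 => ?_⟩
    · have : flagLevel AF Ae Av ω p ≤ Ae ω := by
        simp only [flagLevel, h2]
        nlinarith [hp.1]
      rw [hA.down_apply, turn, if_pos hs, if_pos this, h3]
    · rw [arcCoord, if_pos hs, flagAngle_eq_one_iff hp h0 h1]
      exact Or.inr h2

/-- A point of a barycentric triangle away from the corners lies on a given level and has a given
position on the boundary arc. -/
structure Represents (F : FlagSystem Φ) (AF Ae Av : Φ → ℝ) (c : ℝ) (z : Φ × ℝ)
    (x : Φ × (ℝ × ℝ)) : Prop where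
  flag : x.1 = z.1
  mem : x.2 ∈ flagTriangle
  fst_pos : 0 < x.2.1
  snd_lt : x.2.2 < 1
  level : flagLevel AF Ae Av x.1 x.2 = c
  arc : F.arcCoord x.1 x.2 = z.2

theorem Represents.unique {F : FlagSystem Φ} {AF Ae Av : Φ → ℝ} (hA : F.IsHeight AF Ae Av) {c : ℝ}
    {z : Φ × ℝ} {x y : Φ × (ℝ × ℝ)} (hx : F.Represents AF Ae Av c z x)
    (hy : F.Represents AF Ae Av c z y) : x = y := by
  obtain ⟨ω, p⟩ := x
  obtain ⟨ω', q⟩ := y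
  obtain rfl : ω = ω' := hx.flag.trans hy.flag.symm
  have hl := hx.level.trans hy.level.symm
  have hv := hx.arc.trans hy.arc.symm
  refine Prod.ext rfl (eq_of_flagAngle_eq (sub_pos.2 (hA.Ae_lt ω)) (sub_pos.2 (hA.Av_lt ω))
    hx.mem hy.mem hx.fst_pos hx.snd_lt hy.fst_pos hy.snd_lt ?_ ?_)
  · simp only [arcCoord] at hv
    split_ifs at hv
    · exact hv
    · linarith
  · simp only [flagLevel] at hl
    linarith

theorem Represents.eqvGen [Finite Φ] {F : FlagSystem Φ} {AF Ae Av : Φ → ℝ}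
    (hA : F.IsHeight AF Ae Av) {c : ℝ} {z z' : Φ × ℝ}
    (h : Relation.EqvGen (fun p p' => CircleGlue (hA.up c) p p' ∨ CircleGlue (hA.down c) p p') z z') :
    (∀ x, F.Represents AF Ae Av c z x →
      ∃ x', F.Represents AF Ae Av c z' x' ∧ Relation.EqvGen F.Step x x') ∧
    (∀ x', F.Represents AF Ae Av c z' x' →
      ∃ x, F.Represents AF Ae Av c z x ∧ Relation.EqvGen F.Step x x') := by
  induction h with
  | rel z z' h =>
    have key : ∃ P : Φ → Prop, (P z.1 → c ≤ Ae z.1) ∧ (¬ P z.1 → Ae z.1 ≤ c) ∧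
        z.2 = 1 ∧ z'.2 = 0 ∧ z'.1 = F.turn P z.1 := by
      rcases h with ⟨h1, h2, h3⟩ | ⟨h1, h2, h3⟩
      · exact ⟨fun ω => c < Ae ω, le_of_lt, le_of_not_gt, h1, h2, h3⟩
      · exact ⟨fun ω => c ≤ Ae ω, id, le_of_not_ge, h1, h2, h3⟩
    obtain ⟨P, hP, hP', h1, h2, h3⟩ := key
    constructor
    · rintro ⟨ω, p⟩ ⟨rfl, hmem, h0, hlt, hl, hv⟩
      have hstep := hA.step_turn hP hP' hmem h0 hlt (hv.trans h1) (Or.inl hl)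
      refine ⟨(F.turn P z.1, p), ⟨h3.symm, hmem, h0, hlt, ?_, ?_⟩, .rel _ _ hstep⟩
      · exact (hstep.flagLevel_eq hA).trans hl
      · change F.arcCoord (F.turn P z.1) p = _
        rw [F.arcCoord_of_sgn_eq (F.sgn_turn P z.1), h2, hv.trans h1, sub_self]
    · rintro ⟨ω', p⟩ ⟨rfl, hmem, h0, hlt, hl, hv⟩
      have hv1 : F.arcCoord z.1 p = 1 := by
        have := F.arcCoord_of_sgn_eq (F.sgn_turn P z.1) p
        rw [← h3, hv.trans h2] at this
        linarith
      have hstep := hA.step_turn hP hP' hmem h0 hlt hv1 (Or.inr (by rw [← h3]; exact hl))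
      rw [← h3] at hstep
      exact ⟨(z.1, p), ⟨rfl, hmem, h0, hlt, (hstep.flagLevel_eq hA).symm.trans hl,
        hv1.trans h1.symm⟩, .rel _ _ hstep⟩
  | refl z => exact ⟨fun x hx => ⟨x, hx, .refl x⟩, fun x hx => ⟨x, hx, .refl x⟩⟩
  | symm z z' _ ih =>
    refine ⟨fun x hx => ?_, fun x hx => ?_⟩
    · obtain ⟨y, hy, hxy⟩ := ih.2 x hx
      exact ⟨y, hy, hxy.symm⟩
    · obtain ⟨y, hy, hxy⟩ := ih.1 x hx
      exact ⟨y, hy, hxy.symm⟩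
  | trans z z' z'' _ _ ih₁ ih₂ =>
    refine ⟨fun x hx => ?_, fun x hx => ?_⟩
    · obtain ⟨y, hy, hxy⟩ := ih₁.1 x hx
      obtain ⟨w, hw, hyw⟩ := ih₂.1 y hy
      exact ⟨w, hw, hxy.trans _ _ _ hyw⟩
    · obtain ⟨y, hy, hxy⟩ := ih₂.2 x hx
      obtain ⟨w, hw, hyw⟩ := ih₁.2 y hy
      exact ⟨w, hw, hyw.trans _ _ _ hxy⟩

/-- The level sets of the height function embed simultaneously and continuously in the plane. -/
theorem IsHeight.exists_levelwise_embedding [Finite Φ] {F : FlagSystem Φ} {AF Ae Av : Φ → ℝ}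
    (hA : F.IsHeight AF Ae Av) :
    ∃ H : Φ → ℝ × ℝ → ℂ, (∀ ω, ContinuousOn (H ω) flagTriangle) ∧
      (∀ ω ω' p, p ∈ flagTriangle → F.Step (ω, p) (ω', p) → H ω p = H ω' p) ∧
      ∀ ω ω', ∀ p ∈ flagTriangle, ∀ p' ∈ flagTriangle,
        flagLevel AF Ae Av ω p = flagLevel AF Ae Av ω' p' → H ω p = H ω' p' →
        Relation.EqvGen F.Step (ω, p) (ω', p') := by
  obtain ⟨δ₁, hδ₁, hF⟩ := exists_pos_forall_le_of_finite fun ω => sub_pos.2 (hA.Ae_lt ω)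
  obtain ⟨δ₂, hδ₂, hV⟩ := exists_pos_forall_le_of_finite fun ω => sub_pos.2 (hA.Av_lt ω)
  obtain ⟨δ₀, hδ₀, hF, hV⟩ : ∃ δ₀ > 0, (∀ x, Ae x + δ₀ ≤ AF x) ∧ (∀ x, Av x + δ₀ ≤ Ae x) :=
    ⟨min δ₁ δ₂, lt_min hδ₁ hδ₂, fun x => by linarith [hF x, min_le_left δ₁ δ₂],
      fun x => by linarith [hV x, min_le_right δ₁ δ₂]⟩
  obtain ⟨C, B, hC, hB, hcfg⟩ := hA.exists_isConfig (half_pos hδ₀)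
  set η := δ₀ / 4 with hη
  have hη0 : 0 < η := by positivity
  have hact : ∀ ω, ∀ p ∈ flagTriangle, flagRadius η p = 1 ∨
      ω ∉ {ω' | ∃ ω₀, |flagLevel AF Ae Av ω p - Ae ω₀| < δ₀ / 2 ∧
        (hA.up (Ae ω₀)).SameCycle ω₀ ω'} := fun ω p hp =>
    (flagRadius_eq_one_or hη0 p).imp_right fun h => hA.not_active hF hV hp h
  refine ⟨fun ω p => C ω (flagLevel AF Ae Av ω p) +
    flagRadius η p * B ω (flagLevel AF Ae Av ω p) (F.arcCoord ω p), ?_, ?_, ?_⟩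
  · intro ω p hp
    have hlev := continuous_flagLevel AF Ae Av ω
    refine ContinuousWithinAt.add ((hC ω).comp hlev).continuousWithinAt ?_
    have hrad : ContinuousWithinAt (fun p => (flagRadius η p : ℂ)) flagTriangle p :=
      (Complex.continuous_ofReal.comp (continuous_flagRadius η)).continuousWithinAt
    by_cases h01 : 0 < p.1 ∧ p.2 < 1
    · refine hrad.mul (ContinuousAt.continuousWithinAt ?_)
      exact ContinuousAt.comp (g := fun p : ℝ × ℝ => B ω p.1 p.2) (hB ω).continuousAt
        (hlev.continuousAt.prodMk (F.continuousAt_arcCoord ω h01.1 h01.2))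
    · have hr0 : flagRadius η p = 0 := by
        rw [← flagRadius_pos_iff hη0] at h01
        exact le_antisymm (not_lt.1 h01) (flagRadius_mem hη0 hp).1
      obtain ⟨M, hM⟩ := (isCompact_Icc.prod isCompact_Icc :
        IsCompact (Set.Icc (-1 : ℝ) 1 ×ˢ Set.Icc (0 : ℝ) 1)).exists_bound_of_continuousOn
          (hB ω).continuousOn
      unfold ContinuousWithinAt at hrad ⊢
      beta_reduce at hrad ⊢
      rw [hr0, Complex.ofReal_zero] at hrad ⊢
      rw [zero_mul]
      refine hrad.zero_mul_isBoundedUnder_le ⟨M, ?_⟩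
      rw [Filter.eventually_map]
      filter_upwards [self_mem_nhdsWithin] with q hq
      exact hM (flagLevel AF Ae Av ω q, F.arcCoord ω q)
        ⟨hA.flagLevel_mem ω hq, F.arcCoord_mem ω hq⟩
  · have key : ∀ ω ω' p, p ∈ flagTriangle → ∀ c, flagLevel AF Ae Av ω p = c →
        flagLevel AF Ae Av ω' p = c → (ω' = hA.up c ω ∨ ω' = hA.down c ω) →
        (0 < p.1 → p.2 < 1 → F.arcCoord ω p = 1) →
        C ω c + flagRadius η p * B ω c (F.arcCoord ω p) =
          C ω' c + flagRadius η p * B ω' c (F.arcCoord ω' p) := by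
      intro ω ω' p hp c hl hl' hω' hv
      have hs : F.sgn ω' = !F.sgn ω := by
        rcases hω' with rfl | rfl
        exacts [F.sgn_turn (fun ω => c < Ae ω) ω, F.sgn_turn (fun ω => c ≤ Ae ω) ω]
      have hglue : C ω c + flagRadius η p * B ω c 1 = C ω' c + flagRadius η p * B ω' c 0 := by
        have := hact ω p hp
        rw [hl] at this
        rcases hω' with rfl | rfl
        exacts [(hcfg c).glue ω _ this, (hcfg c).glue' ω _ this]
      by_cases h01 : 0 < p.1 ∧ p.2 < 1
      · rw [F.arcCoord_of_sgn_eq hs, hv h01.1 h01.2, sub_self, hglue]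
      · have hr0 : flagRadius η p = 0 := by
          rw [← flagRadius_pos_iff hη0] at h01
          exact le_antisymm (not_lt.1 h01) (flagRadius_mem hη0 hp).1
        rw [hr0] at hglue ⊢
        simpa using hglue
    have key' : ∀ ω ω' p, p ∈ flagTriangle → F.Step (ω, p) (ω', p) → F.sgn ω = true →
        C ω (flagLevel AF Ae Av ω p) +
          flagRadius η p * B ω (flagLevel AF Ae Av ω p) (F.arcCoord ω p) =
        C ω' (flagLevel AF Ae Av ω' p) +
          flagRadius η p * B ω' (flagLevel AF Ae Av ω' p) (F.arcCoord ω' p) := by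
      intro ω ω' p hp h hs
      have hl := h.flagLevel_eq hA
      dsimp only at hl
      rw [hl]
      rcases h.exists_turn hA hp hs with ⟨h1, h2⟩ | ⟨h1, h2⟩
      · exact key ω ω' p hp _ rfl hl h1 h2
      · exact (key ω' ω p hp _ hl rfl (Or.inl h1) h2).symm
    intro ω ω' p hp h
    by_cases hs : F.sgn ω = true
    · exact key' ω ω' p hp h hs
    · have hs' := h.sgn_eq
      dsimp only at hs'
      exact (key' ω' ω p hp h.symm (by rw [hs']; simpa using hs)).symm
  · intro ω ω' p hp p' hp' hl he
    dsimp only at he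
    have ha := hact ω p hp
    have ha' := hact ω' p' hp'
    rw [← hl] at he ha'
    set c := flagLevel AF Ae Av ω p with hc
    rcases (hcfg c).inj ω ω' _ (flagRadius_mem hη0 hp) _ (flagRadius_mem hη0 hp') _
      (F.arcCoord_mem ω hp) _ (F.arcCoord_mem ω' hp') ha ha' he with ⟨h1, h2, h3⟩ | ⟨h1, h2, h3⟩
    · rw [flagRadius_eq_zero_iff hη0 hp] at h1
      rw [flagRadius_eq_zero_iff hη0 hp'] at h2
      have hc0 : ∀ ω, flagLevel AF Ae Av ω (0, 0) = AF ω := fun ω => by simp [flagLevel]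
      have hc1 : ∀ ω, flagLevel AF Ae Av ω (1, 1) = Av ω := fun ω => by simp [flagLevel]
      have hlt : ∀ ω, Av ω < AF ω := fun ω => (hA.Av_lt ω).trans (hA.Ae_lt ω)
      rcases h1 with rfl | rfl
      · rw [hc0] at hc
        obtain ⟨h4, h5⟩ := hA.sameCycle_face h3 fun x hx => by
          rw [hc, ← hx]
          exact (hA.Ae_lt x).le
        rcases h2 with rfl | rfl
        · exact h5
        · rw [hc1] at hl
          linarith [hlt ω']
      · rw [hc1] at hc
        obtain ⟨h4, h5⟩ := hA.sameCycle_vertex h3 fun x hx => by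
          rw [hc, ← hx]
          exact hA.Av_lt x
        rcases h2 with rfl | rfl
        · rw [hc0] at hl
          linarith [hlt ω']
        · exact h5
    · rw [flagRadius_pos_iff hη0] at h1 h2
      obtain ⟨x, hx, hxe⟩ := (Represents.eqvGen hA h3).1 (ω, p)
        ⟨rfl, hp, h1.1, h1.2, rfl, rfl⟩
      have hx' : F.Represents AF Ae Av c (ω', F.arcCoord ω' p') (ω', p') :=
        ⟨rfl, hp', h2.1, h2.2, hl.symm, rfl⟩
      rwa [hx.unique hA hx'] at hxe

end FlagSystem

section Pillow

/-- The pillow: two squares glued along their boundary. -/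
noncomputable def pillow (s : Bool) (p : ℝ × ℝ) : EuclideanSpace ℝ (Fin 3) :=
  !₂[p.1, p.2, (if s then 1 else -1) * (1 - max |p.1| |p.2|)]

theorem pillow_ne_zero (s : Bool) (p : ℝ × ℝ) : pillow s p ≠ 0 := by
  intro h
  have h0 : p.1 = 0 := by simpa [pillow] using congrArg (fun x => x 0) h
  have h1 : p.2 = 0 := by simpa [pillow] using congrArg (fun x => x 1) h
  have h2 := congrArg (fun x => x 2) h
  cases s <;> simp [pillow, h0, h1] at h2

theorem continuous_pillow (s : Bool) : Continuous (pillow s) := by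
  unfold pillow
  refine (PiLp.continuous_toLp 2 _).comp ?_
  refine continuous_pi fun i => ?_
  cases s <;> fin_cases i <;> simp <;> fun_prop

/-- The pillow projected to the unit sphere. -/
noncomputable def spherePillow (s : Bool) (p : ℝ × ℝ) :
    Metric.sphere (0 : EuclideanSpace ℝ (Fin 3)) 1 :=
  ⟨‖pillow s p‖⁻¹ • pillow s p, by
    rw [mem_sphere_zero_iff_norm, norm_smul, norm_inv, norm_norm,
      inv_mul_cancel₀ (norm_ne_zero_iff.2 (pillow_ne_zero s p))]⟩

theorem continuous_spherePillow (s : Bool) : Continuous (spherePillow s) := by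
  refine Continuous.subtype_mk (((continuous_pillow s).norm.inv₀ fun p => ?_).smul
    (continuous_pillow s)) _
  exact norm_ne_zero_iff.2 (pillow_ne_zero s p)

theorem spherePillow_congr {p : ℝ × ℝ} (hp : max |p.1| |p.2| = 1) (s s' : Bool) :
    spherePillow s p = spherePillow s' p := by
  have : pillow s p = pillow s' p := by simp [pillow, hp]
  unfold spherePillow
  simp only [this]

theorem eq_of_spherePillow_eq {s s' : Bool} {p p' : ℝ × ℝ} (hp : max |p.1| |p.2| ≤ 1)
    (hp' : max |p'.1| |p'.2| ≤ 1) (h : spherePillow s p = spherePillow s' p') :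
    p = p' ∧ (s = s' ∨ max |p.1| |p.2| = 1) := by
  have h0 : ‖pillow s p‖⁻¹ • pillow s p = ‖pillow s' p'‖⁻¹ • pillow s' p' := congrArg Subtype.val h
  have hpos : 0 < ‖pillow s p‖⁻¹ := inv_pos.2 (norm_pos_iff.2 (pillow_ne_zero s p))
  have hpos' : 0 < ‖pillow s' p'‖⁻¹ := inv_pos.2 (norm_pos_iff.2 (pillow_ne_zero s' p'))
  generalize ‖pillow s p‖⁻¹ = t at h0 hpos
  generalize ‖pillow s' p'‖⁻¹ = t' at h0 hpos'
  have e0 : t * p.1 = t' * p'.1 := by simpa [pillow] using congrArg (fun x => x 0) h0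
  have e1 : t * p.2 = t' * p'.2 := by simpa [pillow] using congrArg (fun x => x 1) h0
  have e2 : t * ((if s then 1 else -1) * (1 - max |p.1| |p.2|)) =
      t' * ((if s' then 1 else -1) * (1 - max |p'.1| |p'.2|)) := by
    simpa [pillow] using congrArg (fun x => x 2) h0
  have hsgn : ∀ s : Bool, |if s then (1 : ℝ) else -1| = 1 := fun s => by cases s <;> simp
  have e3 : t * max |p.1| |p.2| = t' * max |p'.1| |p'.2| := by
    rw [mul_max_of_nonneg _ _ hpos.le, mul_max_of_nonneg _ _ hpos'.le, ← abs_of_pos hpos,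
      ← abs_of_pos hpos', ← abs_mul, ← abs_mul, ← abs_mul, ← abs_mul, e0, e1]
  have e4 : t * (1 - max |p.1| |p.2|) = t' * (1 - max |p'.1| |p'.2|) := by
    have := congrArg abs e2
    rwa [abs_mul, abs_mul, abs_mul, abs_mul, hsgn, hsgn, one_mul, one_mul, abs_of_pos hpos,
      abs_of_pos hpos', abs_of_nonneg (sub_nonneg.2 hp), abs_of_nonneg (sub_nonneg.2 hp')] at this
  have ht : t = t' := by linarith
  subst ht
  have hpp : p = p' := Prod.ext (mul_left_cancel₀ hpos.ne' e0) (mul_left_cancel₀ hpos.ne' e1)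
  refine ⟨hpp, ?_⟩
  subst hpp
  by_contra hcon
  push Not at hcon
  have h1 : (1 - max |p.1| |p.2|) ≠ 0 := sub_ne_zero.2 (Ne.symm hcon.2)
  have e5 := mul_right_cancel₀ h1 (mul_left_cancel₀ hpos.ne' e2)
  apply hcon.1
  cases s <;> cases s' <;> first | rfl | norm_num at e5

theorem exists_spherePillow_eq (z : Metric.sphere (0 : EuclideanSpace ℝ (Fin 3)) 1) :
    ∃ s p, max |p.1| |p.2| ≤ 1 ∧ spherePillow s p = z := by
  obtain ⟨z, hz⟩ := z
  rw [mem_sphere_zero_iff_norm] at hz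
  set N := max |z 0| |z 1| + |z 2| with hN
  have hN0 : 0 < N := by
    by_contra hcon
    have h0 := abs_nonneg (z 0)
    have h1 := abs_nonneg (z 1)
    have h2 := abs_nonneg (z 2)
    have h3 := le_max_left |z 0| |z 1|
    have h4 := le_max_right |z 0| |z 1|
    have e0 : z 0 = 0 := abs_eq_zero.1 (by linarith)
    have e1 : z 1 = 0 := abs_eq_zero.1 (by linarith)
    have e2 : z 2 = 0 := abs_eq_zero.1 (by linarith)
    have : z = 0 := by
      ext i
      fin_cases i <;> simpa
    rw [this, norm_zero] at hz
    exact zero_ne_one hz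
  have hmax : max |z 0 / N| |z 1 / N| = max |z 0| |z 1| / N := by
    rw [abs_div, abs_div, abs_of_pos hN0, max_div_div_right hN0.le]
  refine ⟨decide (0 ≤ z 2), (z 0 / N, z 1 / N), ?_, ?_⟩
  · rw [hmax, div_le_one hN0]
    linarith [abs_nonneg (z 2)]
  · have hP : pillow (decide (0 ≤ z 2)) (z 0 / N, z 1 / N) = N⁻¹ • z := by
      have h2 : (if 0 ≤ z 2 then (1 : ℝ) else -1) * |z 2| = z 2 := by
        split_ifs with h
        · rw [one_mul, abs_of_nonneg h]
        · rw [abs_of_neg (not_le.1 h)]; ring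
      ext i
      fin_cases i
      · simp [pillow, div_eq_inv_mul]
      · simp [pillow, div_eq_inv_mul]
      · have : (1 : ℝ) - max |z 0| |z 1| / N = |z 2| / N := by
          rw [eq_div_iff hN0.ne', sub_mul, div_mul_cancel₀ _ hN0.ne']
          linarith
        simp only [pillow, hmax, this, decide_eq_true_eq]
        simp only [← mul_div_assoc, h2]
        simp [div_eq_inv_mul]
    apply Subtype.ext
    change ‖pillow _ _‖⁻¹ • pillow _ _ = z
    rw [hP, norm_smul, hz, mul_one, norm_inv, Real.norm_eq_abs, abs_of_pos hN0, inv_inv, smul_smul,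
      mul_inv_cancel₀ hN0.ne', one_smul]

end Pillow

section Grid

variable {m : ℕ}

/-- The position of a point in a half-cell of a subdivided interval. -/
noncomputable def gridPos (d : Fin m × Bool) (α : ℝ) : ℝ :=
  (2 * d.1 + 1 + (if d.2 then α else -α)) / m - 1

/-- The half-cell on the other side of the endpoint of a half-cell. -/
def gridMove (d : Fin m × Bool) : Option (Fin m × Bool) :=
  if d.2 then (if h : d.1 + 1 < m then some (⟨d.1 + 1, h⟩, false) else none)
  else (if 0 < d.1.1 then some (⟨d.1 - 1, by omega⟩, true) else none)

theorem gridMove_eq_some {d d' : Fin m × Bool} :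
    gridMove d = some d' ↔ d'.2 = (!d.2) ∧
      ((d.2 = true ∧ d'.1.1 = d.1 + 1) ∨ (d.2 = false ∧ d'.1.1 + 1 = d.1)) := by
  obtain ⟨i, s⟩ := d
  obtain ⟨i', s'⟩ := d'
  unfold gridMove
  cases s <;> cases s' <;> simp [Fin.ext_iff] <;> omega

theorem gridMove_eq_none {d : Fin m × Bool} :
    gridMove d = none ↔ (d.2 = true ∧ d.1.1 + 1 = m) ∨ (d.2 = false ∧ d.1.1 = 0) := by
  obtain ⟨i, s⟩ := d
  unfold gridMove
  cases s <;> simp <;> omega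

theorem gridMove_symm {d d' : Fin m × Bool} (h : gridMove d = some d') :
    gridMove d' = some d := by
  rw [gridMove_eq_some] at h ⊢
  obtain ⟨i, s⟩ := d
  obtain ⟨i', s'⟩ := d'
  cases s <;> cases s' <;> simp at h ⊢ <;> omega

theorem continuous_gridPos (d : Fin m × Bool) : Continuous (gridPos d) := by
  unfold gridPos
  split_ifs <;> fun_prop

theorem gridPos_flip (d : Fin m × Bool) : gridPos (d.1, !d.2) 0 = gridPos d 0 := by
  simp [gridPos]

theorem gridPos_move {d d' : Fin m × Bool} (h : gridMove d = some d') :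
    gridPos d' 1 = gridPos d 1 := by
  rw [gridMove_eq_some] at h
  obtain ⟨i, s⟩ := d
  obtain ⟨i', s'⟩ := d'
  unfold gridPos
  dsimp only at h ⊢
  rcases h with ⟨rfl, ⟨rfl, h2⟩ | ⟨rfl, h2⟩⟩
  · rw [h2]
    push_cast
    simp
    ring
  · rw [← h2]
    push_cast
    simp
    ring

theorem abs_gridPos_of_move {d : Fin m × Bool} (h : gridMove d = none) : |gridPos d 1| = 1 := by
  rw [gridMove_eq_none] at h
  obtain ⟨i, s⟩ := d
  have hm : (m : ℝ) ≠ 0 := by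
    have := i.pos
    positivity
  unfold gridPos
  dsimp only at h ⊢
  rcases h with ⟨rfl, h⟩ | ⟨rfl, h⟩
  · have : (m : ℝ) = i + 1 := by exact_mod_cast h.symm
    have h2 : (2 * (i : ℝ) + 1 + 1) / m = 2 := by rw [div_eq_iff hm]; linarith
    simp [h2]
    norm_num
  · simp [h]

theorem gridPos_bounds {d : Fin m × Bool} {α : ℝ} (hα : α ∈ Set.Icc (0 : ℝ) 1) :
    |gridPos d α| ≤ 1 ∧ (|gridPos d α| = 1 → α = 1 ∧ gridMove d = none) := by
  obtain ⟨i, s⟩ := d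
  have hm : (0 : ℝ) < m := by exact_mod_cast i.pos
  have hi : (i : ℝ) + 1 ≤ m := by exact_mod_cast i.2
  have hi0 : (0 : ℝ) ≤ i := by positivity
  obtain ⟨h0, h1⟩ := hα
  rw [gridMove_eq_none]
  unfold gridPos
  cases s
  all_goals
    simp only [if_true, Bool.false_eq_true, if_false, false_and, true_and, false_or]
    refine ⟨?_, fun h => ?_⟩
  · rw [abs_le]
    constructor
    · have : 0 ≤ (2 * (i : ℝ) + 1 + -α) / m := div_nonneg (by linarith) hm.le
      linarith
    · have : (2 * (i : ℝ) + 1 + -α) / m ≤ 2 := by rw [div_le_iff₀ hm]; linarith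
      linarith
  · rcases eq_or_eq_neg_of_abs_eq h with h | h
    · have : (2 * (i : ℝ) + 1 + -α) / m = 2 := by linarith
      rw [div_eq_iff hm.ne'] at this
      linarith
    · have : (2 * (i : ℝ) + 1 + -α) / m = 0 := by linarith
      rw [div_eq_iff hm.ne'] at this
      refine ⟨by linarith, ?_⟩
      have : (i : ℝ) = 0 := by linarith
      exact_mod_cast this
  · rw [abs_le]
    constructor
    · have : 0 ≤ (2 * (i : ℝ) + 1 + α) / m := div_nonneg (by linarith) hm.le
      linarith
    · have : (2 * (i : ℝ) + 1 + α) / m ≤ 2 := by rw [div_le_iff₀ hm]; linarith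
      linarith
  · rcases eq_or_eq_neg_of_abs_eq h with h | h
    · have : (2 * (i : ℝ) + 1 + α) / m = 2 := by linarith
      rw [div_eq_iff hm.ne'] at this
      refine ⟨by linarith, ?_⟩
      have : (i : ℝ) + 1 = m := by linarith
      exact Or.inl (by exact_mod_cast this)
    · have : (2 * (i : ℝ) + 1 + α) / m = 0 := by linarith
      rw [div_eq_iff hm.ne'] at this
      linarith

theorem eq_of_gridPos_eq {d d' : Fin m × Bool} {α α' : ℝ} (hα : α ∈ Set.Icc (0 : ℝ) 1)
    (hα' : α' ∈ Set.Icc (0 : ℝ) 1) (h : gridPos d α = gridPos d' α') :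
    α = α' ∧ (d' = d ∨ (α = 0 ∧ d' = (d.1, !d.2)) ∨ (α = 1 ∧ gridMove d = some d')) := by
  obtain ⟨i, s⟩ := d
  obtain ⟨i', s'⟩ := d'
  have hm : (m : ℝ) ≠ 0 := by
    have := i.pos
    positivity
  obtain ⟨h0, h1⟩ := hα
  obtain ⟨h0', h1'⟩ := hα'
  rw [gridMove_eq_some]
  unfold gridPos at h
  rw [sub_left_inj, div_left_inj' hm] at h
  dsimp only at h ⊢
  simp only [Prod.mk.injEq, Fin.ext_iff]
  have hlt : (i : ℤ) - i' < 2 ∧ (i' : ℤ) - i < 2 ∨ (2 : ℝ) ≤ (i : ℝ) - i' ∨ (2 : ℝ) ≤ (i' : ℝ) - i := by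
    by_cases h2 : (2 : ℤ) ≤ (i : ℤ) - i'
    · exact Or.inr (Or.inl (by exact_mod_cast h2))
    by_cases h3 : (2 : ℤ) ≤ (i' : ℤ) - i
    · exact Or.inr (Or.inr (by exact_mod_cast h3))
    exact Or.inl ⟨by linarith, by linarith⟩
  rcases hlt with ⟨h2, h3⟩ | h2 | h2
  · obtain h4 | h4 | h4 : (i' : ℕ) = i ∨ (i' : ℕ) = i + 1 ∨ (i : ℕ) = i' + 1 := by omega
    all_goals
      rw [h4] at h
      push_cast at h
      cases s <;> cases s' <;>
        simp only [Bool.false_eq_true, if_true, if_false] at h <;>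
        first
        | (exfalso; linarith)
        | exact ⟨by linarith, Or.inl ⟨h4, rfl⟩⟩
        | exact ⟨by linarith, Or.inr (Or.inl ⟨by linarith, h4, rfl⟩)⟩
        | exact ⟨by linarith, Or.inr (Or.inr ⟨by linarith, rfl, Or.inl ⟨rfl, h4⟩⟩)⟩
        | exact ⟨by linarith, Or.inr (Or.inr ⟨by linarith, rfl, Or.inr ⟨rfl, h4.symm⟩⟩)⟩
  · exfalso
    split_ifs at h <;> linarith
  · exfalso
    split_ifs at h <;> linarith

theorem exists_gridPos_eq (hm : 0 < m) {u : ℝ} (hu : |u| ≤ 1) :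
    ∃ (d : Fin m × Bool) (α : ℝ), α ∈ Set.Icc (0 : ℝ) 1 ∧ gridPos d α = u := by
  rw [abs_le] at hu
  have hm' : (0 : ℝ) < m := by exact_mod_cast hm
  set X := (u + 1) * m / 2 with hX
  have hX0 : 0 ≤ X := by
    have : 0 ≤ u + 1 := by linarith
    positivity
  have hXm : X ≤ m := by
    rw [hX]
    nlinarith
  obtain ⟨i, hi0, hi1⟩ : ∃ i : Fin m, (i : ℝ) ≤ X ∧ X ≤ i + 1 := by
    rcases hXm.lt_or_eq with h | h
    · exact ⟨⟨⌊X⌋₊, (Nat.floor_lt hX0).2 h⟩, Nat.floor_le hX0, (Nat.lt_floor_add_one X).le⟩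
    · refine ⟨⟨m - 1, by omega⟩, ?_⟩
      have : ((m - 1 : ℕ) : ℝ) = m - 1 := by rw [Nat.cast_sub hm]; simp
      simp only [this]
      constructor <;> linarith
  have hu' : ∀ y : ℝ, y = 2 * X → y / m - 1 = u := by
    intro y hy
    rw [sub_eq_iff_eq_add, div_eq_iff hm'.ne', hy, hX]
    ring
  rcases le_total (i + 1 / 2 : ℝ) X with h | h
  · refine ⟨(i, true), 2 * X - 2 * i - 1, ⟨by linarith, by linarith⟩, ?_⟩
    exact hu' _ (by rw [if_pos rfl]; ring)
  · refine ⟨(i, false), 2 * i + 1 - 2 * X, ⟨by linarith, by linarith⟩, ?_⟩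
    exact hu' _ (by rw [if_neg Bool.false_ne_true]; ring)

theorem dist_gridPos_le (d : Fin m × Bool) {α α' : ℝ} (hα : α ∈ Set.Icc (0 : ℝ) 1)
    (hα' : α' ∈ Set.Icc (0 : ℝ) 1) : dist (gridPos d α) (gridPos d α') ≤ 1 / m := by
  have hm : (0 : ℝ) < m := by exact_mod_cast d.1.pos
  obtain ⟨h0, h1⟩ := hα
  obtain ⟨h0', h1'⟩ := hα'
  have : gridPos d α - gridPos d α' = ((if d.2 then α else -α) - (if d.2 then α' else -α')) / m := by
    unfold gridPos
    ring
  rw [Real.dist_eq, this, abs_div, abs_of_pos hm]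
  refine div_le_div_of_nonneg_right ?_ hm.le
  split_ifs <;> rw [abs_le] <;> constructor <;> linarith

end Grid

section GridFlag

variable {m : ℕ}

/-- The half-cell and sheet on the other side of the endpoint of a half-cell. -/
def gridCross (s : Bool) (d : Fin m × Bool) : Bool × (Fin m × Bool) :=
  match gridMove d with
  | some d' => (s, d')
  | none => (!s, d)

theorem gridCross_of_some {d d' : Fin m × Bool} (h : gridMove d = some d') (s : Bool) :
    gridCross s d = (s, d') := by
  simp [gridCross, h]

theorem gridCross_of_none {d : Fin m × Bool} (h : gridMove d = none) (s : Bool) :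
    gridCross s d = (!s, d) := by
  simp [gridCross, h]

theorem gridCross_gridCross (s : Bool) (d : Fin m × Bool) :
    gridCross (gridCross s d).1 (gridCross s d).2 = (s, d) := by
  rcases h : gridMove d with _ | d'
  · simp [gridCross_of_none h]
  · simp [gridCross_of_some h, gridCross_of_some (gridMove_symm h)]

theorem xor_gridCross (s : Bool) (d : Fin m × Bool) :
    ((gridCross s d).1 ^^ (gridCross s d).2.2) = !(s ^^ d.2) := by
  rcases h : gridMove d with _ | d'
  · simp [gridCross_of_none h]
  · have := (gridMove_eq_some.1 h).1
    simp [gridCross_of_some h, this]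

/-- The flags of the subdivided pillow. -/
abbrev GridFlag (m : ℕ) := Bool × (Fin m × Bool) × (Fin m × Bool) × Bool

/-- The flag system of the subdivided pillow. -/
def gridFlagSystem (m : ℕ) : FlagSystem (GridFlag m) where
  r₀ ω := if ω.2.2.2 then (ω.1, (ω.2.1.1, !ω.2.1.2), ω.2.2.1, ω.2.2.2)
    else (ω.1, ω.2.1, (ω.2.2.1.1, !ω.2.2.1.2), ω.2.2.2)
  r₁ ω := (ω.1, ω.2.1, ω.2.2.1, !ω.2.2.2)
  r₂ ω := if ω.2.2.2 then
      ((gridCross ω.1 ω.2.2.1).1, ω.2.1, (gridCross ω.1 ω.2.2.1).2, ω.2.2.2)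
    else ((gridCross ω.1 ω.2.1).1, (gridCross ω.1 ω.2.1).2, ω.2.2.1, ω.2.2.2)
  sgn ω := ω.1 ^^ ω.2.1.2 ^^ ω.2.2.1.2 ^^ ω.2.2.2
  r₀_r₀ := by rintro ⟨s, dx, dy, _ | _⟩ <;> simp
  r₁_r₁ := by rintro ⟨s, dx, dy, _ | _⟩ <;> simp
  r₂_r₂ := by rintro ⟨s, dx, dy, _ | _⟩ <;> simp [gridCross_gridCross]
  sgn_r₀ := by rintro ⟨s, dx, dy, _ | _⟩ <;> simp
  sgn_r₁ := by rintro ⟨s, dx, dy, _ | _⟩ <;> simp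
  sgn_r₂ := by
    rintro ⟨s, dx, dy, _ | _⟩
    · have := xor_gridCross s dx
      simp only [Bool.false_eq_true, if_false]
      rw [this]
      simp
    · have := xor_gridCross s dy
      simp only [if_true]
      rw [Bool.xor_right_comm _ dx.2, this, Bool.xor_right_comm s]
      simp
  comm := by rintro ⟨s, dx, dy, _ | _⟩ <;> simp
  ne := by
    rintro ⟨s, dx, dy, _ | _⟩ h
    · have := congrArg (fun ω : GridFlag m => ω.2.2.1.2) h
      simp at this
    · have := congrArg (fun ω : GridFlag m => ω.2.1.2) h
      simp at this

/-- The point of the sphere with given coordinates in a flag triangle. -/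
noncomputable def gridPoint (ω : GridFlag m) (p : ℝ × ℝ) :
    Metric.sphere (0 : EuclideanSpace ℝ (Fin 3)) 1 :=
  spherePillow ω.1 (gridPos ω.2.1 (if ω.2.2.2 then p.2 else p.1),
    gridPos ω.2.2.1 (if ω.2.2.2 then p.1 else p.2))

theorem continuous_gridPoint (ω : GridFlag m) : Continuous (gridPoint ω) := by
  obtain ⟨s, dx, dy, _ | _⟩ := ω
  · exact (continuous_spherePillow s).comp
      (((continuous_gridPos dx).comp continuous_fst).prodMk
        ((continuous_gridPos dy).comp continuous_snd))
  · exact (continuous_spherePillow s).comp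
      (((continuous_gridPos dx).comp continuous_snd).prodMk
        ((continuous_gridPos dy).comp continuous_fst))

theorem spherePillow_gridCross_left (s : Bool) (d : Fin m × Bool) {v : ℝ} (hv : |v| ≤ 1) :
    spherePillow (gridCross s d).1 (gridPos (gridCross s d).2 1, v) =
      spherePillow s (gridPos d 1, v) := by
  rcases h : gridMove d with _ | d'
  · rw [gridCross_of_none h]
    apply spherePillow_congr
    simp only [abs_gridPos_of_move h, max_eq_left hv]
  · rw [gridCross_of_some h, gridPos_move h]

theorem spherePillow_gridCross_right (s : Bool) (d : Fin m × Bool) {v : ℝ} (hv : |v| ≤ 1) :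
    spherePillow (gridCross s d).1 (v, gridPos (gridCross s d).2 1) =
      spherePillow s (v, gridPos d 1) := by
  rcases h : gridMove d with _ | d'
  · rw [gridCross_of_none h]
    apply spherePillow_congr
    simp only [abs_gridPos_of_move h, max_eq_right hv]
  · rw [gridCross_of_some h, gridPos_move h]

theorem mem_Icc_of_mem_flagTriangle {p : ℝ × ℝ} (hp : p ∈ flagTriangle) :
    p.1 ∈ Set.Icc (0 : ℝ) 1 ∧ p.2 ∈ Set.Icc (0 : ℝ) 1 := by
  obtain ⟨h0, h1, h2⟩ := hp
  exact ⟨⟨h0.trans h1, h2⟩, ⟨h0, h1.trans h2⟩⟩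

theorem gridPoint_eq_of_step {ω ω' : GridFlag m} {p : ℝ × ℝ} (hp : p ∈ flagTriangle)
    (h : (gridFlagSystem m).Step (ω, p) (ω', p)) : gridPoint ω' p = gridPoint ω p := by
  obtain ⟨s, dx, dy, _ | _⟩ := ω <;> obtain ⟨h1, h2⟩ := mem_Icc_of_mem_flagTriangle hp <;>
    obtain ⟨-, ⟨h, rfl⟩ | ⟨h, rfl⟩ | ⟨h, rfl⟩⟩ := h <;> dsimp only at h <;>
    simp only [gridPoint, gridFlagSystem, h, if_true, if_false, Bool.false_eq_true, Bool.not_true,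
      Bool.not_false]
  · rw [gridPos_flip]
  · exact spherePillow_gridCross_left s dx (gridPos_bounds h2).1
  · rw [gridPos_flip]
  · exact spherePillow_gridCross_right s dy (gridPos_bounds h2).1

theorem exists_gridPoint_eq (hm : 0 < m) (z : Metric.sphere (0 : EuclideanSpace ℝ (Fin 3)) 1) :
    ∃ ω : GridFlag m, ∃ p ∈ flagTriangle, gridPoint ω p = z := by
  obtain ⟨s, ⟨u, v⟩, huv, rfl⟩ := exists_spherePillow_eq z
  obtain ⟨dx, a, ha, rfl⟩ := exists_gridPos_eq hm ((le_max_left _ _).trans huv)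
  obtain ⟨dy, b, hb, rfl⟩ := exists_gridPos_eq hm ((le_max_right _ _).trans huv)
  rcases le_total b a with h | h
  · exact ⟨(s, dx, dy, false), (a, b), ⟨hb.1, h, ha.2⟩, by simp [gridPoint]⟩
  · exact ⟨(s, dx, dy, true), (b, a), ⟨ha.1, h, hb.2⟩, by simp [gridPoint]⟩

theorem eqvGen_gridStep_swap (s : Bool) (dx dy : Fin m × Bool) (a a' : Bool) {p : ℝ × ℝ}
    (hp : p.1 = p.2) : Relation.EqvGen (gridFlagSystem m).Step ((s, dx, dy, a), p)
      ((s, dx, dy, a'), p) := by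
  by_cases h : a' = a
  · rw [h]
    exact .refl _
  · refine .rel _ _ ⟨rfl, Or.inr (Or.inl ⟨hp, ?_⟩)⟩
    have : a' = !a := by cases a <;> cases a' <;> simp_all
    simp [gridFlagSystem, this]

theorem eqvGen_gridStep_flip_left (s : Bool) (dx dy : Fin m × Bool) (a : Bool) {p : ℝ × ℝ}
    (hp : p ∈ flagTriangle) (h : (if a then p.2 else p.1) = 0) :
    Relation.EqvGen (gridFlagSystem m).Step ((s, dx, dy, a), p)
      ((s, (dx.1, !dx.2), dy, a), p) := by
  obtain ⟨h0, h1, h2⟩ := hp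
  have key : p.2 = 0 → Relation.EqvGen (gridFlagSystem m).Step ((s, dx, dy, true), p)
      ((s, (dx.1, !dx.2), dy, true), p) :=
    fun h => .rel _ _ ⟨rfl, Or.inl ⟨h, by simp [gridFlagSystem]⟩⟩
  cases a
  · simp only [Bool.false_eq_true, if_false] at h
    have hb : p.2 = 0 := le_antisymm (h ▸ h1) h0
    have hab : p.1 = p.2 := by rw [h, hb]
    exact ((eqvGen_gridStep_swap _ _ _ _ _ hab).trans _ _ _ (key hb)).trans _ _ _
      (eqvGen_gridStep_swap _ _ _ _ _ hab)
  · exact key (by simpa using h)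

theorem eqvGen_gridStep_flip_right (s : Bool) (dx dy : Fin m × Bool) (a : Bool) {p : ℝ × ℝ}
    (hp : p ∈ flagTriangle) (h : (if a then p.1 else p.2) = 0) :
    Relation.EqvGen (gridFlagSystem m).Step ((s, dx, dy, a), p)
      ((s, dx, (dy.1, !dy.2), a), p) := by
  obtain ⟨h0, h1, h2⟩ := hp
  have key : p.2 = 0 → Relation.EqvGen (gridFlagSystem m).Step ((s, dx, dy, false), p)
      ((s, dx, (dy.1, !dy.2), false), p) :=
    fun h => .rel _ _ ⟨rfl, Or.inl ⟨h, by simp [gridFlagSystem]⟩⟩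
  cases a
  · exact key (by simpa using h)
  · simp only [if_true] at h
    have hb : p.2 = 0 := le_antisymm (h ▸ h1) h0
    have hab : p.1 = p.2 := by rw [h, hb]
    exact ((eqvGen_gridStep_swap _ _ _ _ _ hab).trans _ _ _ (key hb)).trans _ _ _
      (eqvGen_gridStep_swap _ _ _ _ _ hab)

theorem eqvGen_gridStep_cross_left (s : Bool) (dx dy : Fin m × Bool) (a : Bool) {p : ℝ × ℝ}
    (hp : p ∈ flagTriangle) (h : (if a then p.2 else p.1) = 1) :
    Relation.EqvGen (gridFlagSystem m).Step ((s, dx, dy, a), p)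
      (((gridCross s dx).1, (gridCross s dx).2, dy, a), p) := by
  obtain ⟨h0, h1, h2⟩ := hp
  have key : p.1 = 1 → Relation.EqvGen (gridFlagSystem m).Step ((s, dx, dy, false), p)
      (((gridCross s dx).1, (gridCross s dx).2, dy, false), p) :=
    fun h => .rel _ _ ⟨rfl, Or.inr (Or.inr ⟨h, by simp [gridFlagSystem]⟩)⟩
  cases a
  · exact key (by simpa using h)
  · simp only [if_true] at h
    have hb : p.1 = 1 := le_antisymm h2 (h ▸ h1)
    have hab : p.1 = p.2 := by rw [h, hb]
    exact ((eqvGen_gridStep_swap _ _ _ _ _ hab).trans _ _ _ (key hb)).trans _ _ _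
      (eqvGen_gridStep_swap _ _ _ _ _ hab)

theorem eqvGen_gridStep_cross_right (s : Bool) (dx dy : Fin m × Bool) (a : Bool) {p : ℝ × ℝ}
    (hp : p ∈ flagTriangle) (h : (if a then p.1 else p.2) = 1) :
    Relation.EqvGen (gridFlagSystem m).Step ((s, dx, dy, a), p)
      (((gridCross s dy).1, dx, (gridCross s dy).2, a), p) := by
  obtain ⟨h0, h1, h2⟩ := hp
  have key : p.1 = 1 → Relation.EqvGen (gridFlagSystem m).Step ((s, dx, dy, true), p)
      (((gridCross s dy).1, dx, (gridCross s dy).2, true), p) :=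
    fun h => .rel _ _ ⟨rfl, Or.inr (Or.inr ⟨h, by simp [gridFlagSystem]⟩)⟩
  cases a
  · simp only [Bool.false_eq_true, if_false] at h
    have hb : p.1 = 1 := le_antisymm h2 (h ▸ h1)
    have hab : p.1 = p.2 := by rw [h, hb]
    exact ((eqvGen_gridStep_swap _ _ _ _ _ hab).trans _ _ _ (key hb)).trans _ _ _
      (eqvGen_gridStep_swap _ _ _ _ _ hab)
  · exact key (by simpa using h)

theorem eqvGen_gridStep_of_gridPoint_eq {ω ω' : GridFlag m} {p p' : ℝ × ℝ}
    (hp : p ∈ flagTriangle) (hp' : p' ∈ flagTriangle) (h : gridPoint ω p = gridPoint ω' p') :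
    Relation.EqvGen (gridFlagSystem m).Step (ω, p) (ω', p') := by
  obtain ⟨s, dx, dy, a⟩ := ω
  obtain ⟨s', dx', dy', a'⟩ := ω'
  obtain ⟨h1, h2⟩ := mem_Icc_of_mem_flagTriangle hp
  obtain ⟨h1', h2'⟩ := mem_Icc_of_mem_flagTriangle hp'
  simp only [gridPoint] at h
  have hx : (if a then p.2 else p.1) ∈ Set.Icc (0 : ℝ) 1 := by split_ifs <;> assumption
  have hy : (if a then p.1 else p.2) ∈ Set.Icc (0 : ℝ) 1 := by split_ifs <;> assumption
  have hx' : (if a' then p'.2 else p'.1) ∈ Set.Icc (0 : ℝ) 1 := by split_ifs <;> assumption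
  have hy' : (if a' then p'.1 else p'.2) ∈ Set.Icc (0 : ℝ) 1 := by split_ifs <;> assumption
  obtain ⟨e, hs⟩ := eq_of_spherePillow_eq (max_le (gridPos_bounds hx).1 (gridPos_bounds hy).1)
    (max_le (gridPos_bounds hx').1 (gridPos_bounds hy').1) h
  dsimp only at hs
  obtain ⟨ex, hdx⟩ := eq_of_gridPos_eq hx hx' (congrArg Prod.fst e)
  obtain ⟨ey, hdy⟩ := eq_of_gridPos_eq hy hy' (congrArg Prod.snd e)
  obtain ⟨rfl, haa⟩ : p = p' ∧ (a = a' ∨ p.1 = p.2) := by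
    obtain ⟨-, k1, -⟩ := hp
    obtain ⟨-, k1', -⟩ := hp'
    cases a <;> cases a' <;> simp only [if_true, if_false, Bool.false_eq_true] at ex ey
    · exact ⟨Prod.ext ex ey, Or.inl rfl⟩
    · exact ⟨Prod.ext (by linarith) (by linarith), Or.inr (by linarith)⟩
    · exact ⟨Prod.ext (by linarith) (by linarith), Or.inr (by linarith)⟩
    · exact ⟨Prod.ext ey ex, Or.inl rfl⟩
  have E1 : Relation.EqvGen (gridFlagSystem m).Step ((s, dx, dy, a), p) ((s', dx, dy, a), p) := by
    by_cases hss : s = s'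
    · rw [hss]
      exact .refl _
    have hs' : s' = !s := by cases s <;> cases s' <;> simp_all
    replace hs := hs.resolve_left hss
    rcases max_choice |gridPos dx (if a then p.2 else p.1)| |gridPos dy (if a then p.1 else p.2)|
      with hc | hc
    · obtain ⟨k1, k2⟩ := (gridPos_bounds hx).2 (hc ▸ hs)
      have := eqvGen_gridStep_cross_left s dx dy a hp k1
      rwa [gridCross_of_none k2, ← hs'] at this
    · obtain ⟨k1, k2⟩ := (gridPos_bounds hy).2 (hc ▸ hs)
      have := eqvGen_gridStep_cross_right s dx dy a hp k1
      rwa [gridCross_of_none k2, ← hs'] at this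
  have E2 : Relation.EqvGen (gridFlagSystem m).Step ((s', dx, dy, a), p)
      ((s', dx', dy, a), p) := by
    rcases hdx with rfl | ⟨k, rfl⟩ | ⟨k, k2⟩
    · exact .refl _
    · exact eqvGen_gridStep_flip_left s' dx dy a hp k
    · have := eqvGen_gridStep_cross_left s' dx dy a hp k
      rwa [gridCross_of_some k2] at this
  have E3 : Relation.EqvGen (gridFlagSystem m).Step ((s', dx', dy, a), p)
      ((s', dx', dy', a), p) := by
    rcases hdy with rfl | ⟨k, rfl⟩ | ⟨k, k2⟩
    · exact .refl _
    · exact eqvGen_gridStep_flip_right s' dx' dy a hp k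
    · have := eqvGen_gridStep_cross_right s' dx' dy a hp k
      rwa [gridCross_of_some k2] at this
  have E4 : Relation.EqvGen (gridFlagSystem m).Step ((s', dx', dy', a), p)
      ((s', dx', dy', a'), p) := by
    rcases haa with rfl | haa
    · exact .refl _
    · exact eqvGen_gridStep_swap _ _ _ _ _ haa
  exact ((E1.trans _ _ _ E2).trans _ _ _ E3).trans _ _ _ E4

theorem exists_dist_gridPoint_lt {δ : ℝ} (hδ : 0 < δ) :
    ∃ m : ℕ, 0 < m ∧ ∀ ω : GridFlag m, ∀ p ∈ flagTriangle, ∀ p' ∈ flagTriangle,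
      dist (gridPoint ω p) (gridPoint ω p') < δ := by
  have huc : ∀ s : Bool, ∃ θ > 0, ∀ x ∈ Set.Icc (-1 : ℝ) 1 ×ˢ Set.Icc (-1 : ℝ) 1,
      ∀ y ∈ Set.Icc (-1 : ℝ) 1 ×ˢ Set.Icc (-1 : ℝ) 1,
      dist x y < θ → dist (spherePillow s x) (spherePillow s y) < δ := by
    intro s
    have hK : IsCompact (Set.Icc (-1 : ℝ) 1 ×ˢ Set.Icc (-1 : ℝ) 1) := isCompact_Icc.prod isCompact_Icc
    obtain ⟨θ, hθ, h⟩ := Metric.uniformContinuousOn_iff.1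
      (hK.uniformContinuousOn_of_continuous (continuous_spherePillow s).continuousOn) δ hδ
    exact ⟨θ, hθ, h⟩
  choose θ hθ h using huc
  obtain ⟨n, hn⟩ := exists_nat_one_div_lt (lt_min (hθ true) (hθ false))
  refine ⟨n + 1, n.succ_pos, ?_⟩
  rintro ⟨s, dx, dy, a⟩ p hp p' hp'
  obtain ⟨h1, h2⟩ := mem_Icc_of_mem_flagTriangle hp
  obtain ⟨h1', h2'⟩ := mem_Icc_of_mem_flagTriangle hp'
  have hx : (if a then p.2 else p.1) ∈ Set.Icc (0 : ℝ) 1 := by split_ifs <;> assumption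
  have hy : (if a then p.1 else p.2) ∈ Set.Icc (0 : ℝ) 1 := by split_ifs <;> assumption
  have hx' : (if a then p'.2 else p'.1) ∈ Set.Icc (0 : ℝ) 1 := by split_ifs <;> assumption
  have hy' : (if a then p'.1 else p'.2) ∈ Set.Icc (0 : ℝ) 1 := by split_ifs <;> assumption
  refine h s _ ⟨abs_le.1 (gridPos_bounds hx).1, abs_le.1 (gridPos_bounds hy).1⟩ _
    ⟨abs_le.1 (gridPos_bounds hx').1, abs_le.1 (gridPos_bounds hy').1⟩ ?_
  have hn' : (1 : ℝ) / ((n + 1 : ℕ) : ℝ) < θ s := by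
    push_cast
    cases s
    · exact hn.trans_le (min_le_right _ _)
    · exact hn.trans_le (min_le_left _ _)
  rw [Prod.dist_eq]
  exact (max_le (dist_gridPos_le dx hx hx') (dist_gridPos_le dy hy hy')).trans_lt hn'

end GridFlag

/-- The sphere has flag decompositions of arbitrarily small mesh. -/
theorem exists_flag_parametrization {δ : ℝ} (hδ : 0 < δ) :
    ∃ (Φ : Type) (_ : Finite Φ) (F : FlagSystem Φ)
      (q : Φ → ℝ × ℝ → Metric.sphere (0 : EuclideanSpace ℝ (Fin 3)) 1),
      (∀ ω, Continuous (q ω)) ∧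
      (∀ z, ∃ ω, ∃ p ∈ flagTriangle, q ω p = z) ∧
      (∀ ω ω', ∀ p ∈ flagTriangle, F.Step (ω, p) (ω', p) → q ω' p = q ω p) ∧
      (∀ ω ω', ∀ p ∈ flagTriangle, ∀ p' ∈ flagTriangle, q ω p = q ω' p' →
        Relation.EqvGen F.Step (ω, p) (ω', p')) ∧
      ∀ ω, ∀ p ∈ flagTriangle, ∀ p' ∈ flagTriangle, dist (q ω p) (q ω p') < δ := by
  obtain ⟨m, hm, h⟩ := exists_dist_gridPoint_lt hδ
  exact ⟨GridFlag m, inferInstance, gridFlagSystem m, gridPoint, continuous_gridPoint,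
    exists_gridPoint_eq hm, fun _ _ _ hp hs => gridPoint_eq_of_step hp hs,
    fun _ _ _ hp _ hp' e => eqvGen_gridStep_of_gridPoint_eq hp hp' e, h⟩

theorem exists_injective_near {ι : Type*} [Finite ι] (g : ι → ℝ) {θ : ℝ} (hθ : 0 < θ) :
    ∃ A : ι → ℝ, Function.Injective A ∧ ∀ i, |A i - g i| < θ := by
  obtain ⟨n, ⟨e⟩⟩ := Finite.exists_equiv_fin ι
  have hae : ∀ᵐ t : ℝ, ∀ i j, i ≠ j → g i + t * (e i : ℝ) ≠ g j + t * (e j : ℝ) := by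
    rw [MeasureTheory.ae_all_iff]
    intro i
    rw [MeasureTheory.ae_all_iff]
    intro j
    by_cases hij : i = j
    · simp [hij]
    have hne : (e i : ℝ) - e j ≠ 0 := by
      rw [sub_ne_zero]
      intro h
      exact hij (e.injective (Fin.ext (by exact_mod_cast h)))
    filter_upwards [MeasureTheory.Measure.ae_ne MeasureTheory.volume ((g j - g i) / (e i - e j))]
      with t ht _ h
    apply ht
    rw [eq_div_iff hne]
    linarith
  obtain ⟨t, ht, ht'⟩ := (MeasureTheory.Measure.dense_of_ae hae).exists_mem_open
    (isOpen_Ioo (a := (0 : ℝ)) (b := θ / (n + 1))) ⟨θ / (n + 1) / 2, by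
      have : 0 < θ / (n + 1) := by positivity
      constructor <;> linarith⟩
  refine ⟨fun i => g i + t * e i, fun i j h => by_contra fun hij => ht i j hij h, fun i => ?_⟩
  have h1 : (e i : ℝ) < n + 1 := by
    have : ((e i : ℕ) : ℝ) < n := by exact_mod_cast (e i).2
    linarith
  have h2 : t * (n + 1) < θ := (lt_div_iff₀ (by positivity)).1 ht'.2
  have h3 : t * (e i : ℝ) ≤ t * (n + 1) := mul_le_mul_of_nonneg_left h1.le ht'.1.le
  have h4 : 0 ≤ t * (e i : ℝ) := mul_nonneg ht'.1.le (by positivity)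
  rw [add_sub_cancel_left, abs_of_nonneg h4]
  linarith

theorem exists_ne_zero_near (w : ℂ) {ν : ℝ} (hν : 0 < ν) : ∃ y : ℂ, y ≠ 0 ∧ ‖y - w‖ < ν := by
  obtain ⟨y, hy, hy'⟩ := (dense_compl_singleton (0 : ℂ)).exists_dist_lt w hν
  exact ⟨y, hy, by rwa [← dist_eq_norm, dist_comm]⟩

theorem exists_transverse_near {ι : Type*} [Finite ι] (z : ι → ℂ) (hz : ∀ i, z i ≠ 0) (w : ℂ)
    {ν : ℝ} (hν : 0 < ν) : ∃ y : ℂ, (∀ i, (conj (z i) * y).im ≠ 0) ∧ ‖y - w‖ < ν := by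
  have hae : ∀ᵐ y : ℂ, ∀ i, (conj (z i) * y).im ≠ 0 := by
    rw [MeasureTheory.ae_all_iff]
    intro i
    let l : ℂ →ₗ[ℝ] ℝ := Complex.imLm ∘ₗ (LinearMap.mulLeft ℝ (conj (z i)))
    have hl : LinearMap.ker l ≠ ⊤ := by
      intro h
      have : (z i * Complex.I) ∈ LinearMap.ker l := h ▸ Submodule.mem_top
      have h2 : (conj (z i) * (z i * Complex.I)).im = 0 := this
      rw [← mul_assoc, mul_comm (conj (z i)), Complex.mul_conj] at h2
      simp [hz i] at h2
    have := MeasureTheory.Measure.addHaar_submodule MeasureTheory.volume _ hl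
    filter_upwards [MeasureTheory.compl_mem_ae_iff.2 this] with y hy h
    exact hy h
  obtain ⟨y, hy, hy'⟩ := (MeasureTheory.Measure.dense_of_ae hae).exists_dist_lt w hν
  exact ⟨y, hy, by rwa [← dist_eq_norm, dist_comm]⟩

theorem eq_zero_of_combination_eq_zero {z y : ℂ} (h : (conj z * y).im ≠ 0) {s t : ℝ}
    (hst : (s : ℂ) * y + t * z = 0) : s = 0 ∧ t = 0 := by
  have h1 : (conj z * ((s : ℂ) * y + t * z)).im = s * (conj z * y).im := by
    simp
    ring
  rw [hst, mul_zero, Complex.zero_im] at h1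
  have hs : s = 0 := (mul_eq_zero.1 h1.symm).resolve_right h
  refine ⟨hs, ?_⟩
  rw [hs, Complex.ofReal_zero, zero_mul, zero_add, mul_eq_zero] at hst
  rcases hst with hst | hst
  · exact_mod_cast hst
  · simp [hst] at h

theorem continuousOn_smul_direction {α : Type*} [TopologicalSpace α] {S : Set α} {R : α → ℝ}
    {y : α → ℂ} (hR : ContinuousOn R S) (hy : ContinuousOn y S) (h : ∀ p ∈ S, y p = 0 → R p = 0) :
    ContinuousOn (fun p => R p • (‖y p‖⁻¹ • y p)) S := by
  intro p hp
  by_cases h0 : y p = 0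
  · have hR0 := h p hp h0
    unfold ContinuousWithinAt
    simp only [h0, smul_zero]
    refine squeeze_zero_norm (a := fun p => |R p|) (fun x => ?_) ?_
    · rw [norm_smul, Real.norm_eq_abs, norm_smul, norm_inv, norm_norm]
      exact mul_le_of_le_one_right (abs_nonneg _) inv_mul_le_one
    · have := (hR p hp).abs
      unfold ContinuousWithinAt at this
      simpa [hR0] using this
  · exact (hR p hp).smul (((hy p hp).norm.inv₀ (norm_ne_zero_iff.2 h0)).smul (hy p hp))

theorem abs_sqrt_sub_le {a b d : ℝ} (ha : 0 ≤ a) (hb : 0 ≤ b) (h : |a ^ 2 - b ^ 2| ≤ d) :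
    |a - b| ≤ √d := by
  apply Real.le_sqrt_of_sq_le
  refine le_trans ?_ h
  rw [sq_abs]
  rcases le_total a b with hab | hab
  · rw [abs_of_nonpos (by nlinarith)]
    nlinarith
  · rw [abs_of_nonneg (by nlinarith)]
    nlinarith

/-- The barycentric interpolation over a flag triangle. -/
def flagInterp {Φ : Type*} (YF Ye Yv : Φ → ℂ) (ω : Φ) (p : ℝ × ℝ) : ℂ :=
  ((1 - p.1 : ℝ) : ℂ) * YF ω + ((p.1 - p.2 : ℝ) : ℂ) * Ye ω + ((p.2 : ℝ) : ℂ) * Yv ω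

theorem continuous_flagInterp {Φ : Type*} (YF Ye Yv : Φ → ℂ) (ω : Φ) :
    Continuous (flagInterp YF Ye Yv ω) := by
  unfold flagInterp
  fun_prop

theorem norm_flagInterp_sub_le {Φ : Type*} {YF Ye Yv : Φ → ℂ} {ω : Φ} {p : ℝ × ℝ}
    (hp : p ∈ flagTriangle) {u : ℂ} {d : ℝ} (hF : ‖YF ω - u‖ ≤ d) (he : ‖Ye ω - u‖ ≤ d)
    (hv : ‖Yv ω - u‖ ≤ d) : ‖flagInterp YF Ye Yv ω p - u‖ ≤ d := by
  obtain ⟨h0, h1, h2⟩ := hp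
  have : flagInterp YF Ye Yv ω p - u = ((1 - p.1 : ℝ) : ℂ) * (YF ω - u) +
      ((p.1 - p.2 : ℝ) : ℂ) * (Ye ω - u) + ((p.2 : ℝ) : ℂ) * (Yv ω - u) := by
    unfold flagInterp
    push_cast
    ring
  rw [this]
  refine (norm_add₃_le).trans ?_
  rw [norm_mul, norm_mul, norm_mul, Complex.norm_of_nonneg (by linarith),
    Complex.norm_of_nonneg (by linarith), Complex.norm_of_nonneg h0]
  have e1 := mul_le_mul_of_nonneg_left hF (by linarith : 0 ≤ 1 - p.1)
  have e2 := mul_le_mul_of_nonneg_left he (by linarith : 0 ≤ p.1 - p.2)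
  have e3 := mul_le_mul_of_nonneg_left hv h0
  linarith

theorem abs_flagLevel_sub_le {Φ : Type*} {AF Ae Av : Φ → ℝ} {ω : Φ} {p : ℝ × ℝ}
    (hp : p ∈ flagTriangle) {u d : ℝ} (hF : |AF ω - u| ≤ d) (he : |Ae ω - u| ≤ d)
    (hv : |Av ω - u| ≤ d) : |flagLevel AF Ae Av ω p - u| ≤ d := by
  obtain ⟨h0, h1, h2⟩ := hp
  rw [abs_le] at *
  unfold flagLevel
  have h3 : 0 ≤ 1 - p.1 := by linarith
  have h4 : 0 ≤ p.1 - p.2 := by linarith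
  constructor <;> nlinarith

namespace FlagSystem

theorem eqvGen_step_edge {Φ : Type*} {F : FlagSystem Φ} {x y : Φ × (ℝ × ℝ)}
    (h : Relation.EqvGen F.Step x y) : x.2 = y.2 ∧ (x.2 = (1, 0) →
      y.1 = x.1 ∨ y.1 = F.r₀ x.1 ∨ y.1 = F.r₂ x.1 ∨ y.1 = F.r₀ (F.r₂ x.1)) := by
  induction h with
  | rel x y h =>
    obtain ⟨h1, h2⟩ := h
    refine ⟨h1.symm, fun hx => ?_⟩
    rw [hx] at h2
    rcases h2 with h2 | h2 | h2
    · exact Or.inr (Or.inl h2.2)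
    · exact absurd h2.1 one_ne_zero
    · exact Or.inr (Or.inr (Or.inl h2.2))
  | refl x => exact ⟨rfl, fun _ => Or.inl rfl⟩
  | symm x y _ ih =>
    refine ⟨ih.1.symm, fun hy => ?_⟩
    rcases ih.2 (ih.1 ▸ hy) with h | h | h | h
    · exact Or.inl h.symm
    · exact Or.inr (Or.inl (by rw [h, F.r₀_r₀]))
    · exact Or.inr (Or.inr (Or.inl (by rw [h, F.r₂_r₂])))
    · exact Or.inr (Or.inr (Or.inr (by rw [h, F.comm, F.r₀_r₀, F.r₂_r₂])))
  | trans x y z _ _ ih ih' =>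
    refine ⟨ih.1.trans ih'.1, fun hx => ?_⟩
    rcases ih.2 hx with h | h | h | h <;> rcases ih'.2 (ih.1 ▸ hx) with h' | h' | h' | h' <;>
      rw [h'] <;> rw [h] <;> simp [F.r₀_r₀, F.r₂_r₂, F.comm]

end FlagSystem

theorem norm_direction_le_one (y : ℂ) : ‖‖y‖⁻¹ • y‖ ≤ 1 := by
  rw [norm_smul, norm_inv, norm_norm]
  exact inv_mul_le_one

theorem abs_sqrt_sub_norm_le {U : ℂ} {V c μ : ℝ} (hUV : ‖U‖ ^ 2 + V ^ 2 = 1)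
    (hc : c ∈ Set.Icc (-1 : ℝ) 1) (h : |c - V| ≤ 4 * μ) : |√(1 - c ^ 2) - ‖U‖| ≤ √(8 * μ) := by
  have hc2 : 0 ≤ 1 - c ^ 2 := by nlinarith [hc.1, hc.2]
  apply abs_sqrt_sub_le (Real.sqrt_nonneg _) (norm_nonneg _)
  have hV : V ^ 2 ≤ 1 := by nlinarith [sq_nonneg ‖U‖]
  have hV2 := abs_le_of_sq_le_sq' (a := V) (b := 1) (by linarith) zero_le_one
  rw [Real.sq_sqrt hc2, show 1 - c ^ 2 - ‖U‖ ^ 2 = (c + V) * -(c - V) by linarith, abs_mul, abs_neg]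
  have h1 : |c + V| ≤ 2 := abs_le.2 ⟨by linarith [hc.1, hV2.1], by linarith [hc.2, hV2.2]⟩
  calc |c + V| * |c - V| ≤ 2 * (4 * μ) := mul_le_mul h1 h (abs_nonneg _) zero_le_two
    _ = 8 * μ := by ring

theorem norm_sqrt_smul_direction_sub_le {U y : ℂ} {V c μ : ℝ} (hμ : 0 ≤ μ)
    (hUV : ‖U‖ ^ 2 + V ^ 2 = 1) (hc : c ∈ Set.Icc (-1 : ℝ) 1) (h : |c - V| ≤ 4 * μ)
    (hy : (y ≠ 0 ∧ ‖y - U‖ ≤ μ / 2) ∨ ‖U‖ ^ 2 ≤ 8 * μ) :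
    ‖√(1 - c ^ 2) • (‖y‖⁻¹ • y) - U‖ ≤ 3 * √(8 * μ) + μ := by
  have key := abs_le.1 (abs_sqrt_sub_norm_le hUV hc h)
  have h8 := Real.sqrt_nonneg (8 * μ)
  rcases hy with ⟨hy, hyU⟩ | hU
  · have h1 : √(1 - c ^ 2) • (‖y‖⁻¹ • y) - U = (√(1 - c ^ 2) - ‖y‖) • (‖y‖⁻¹ • y) + (y - U) := by
      rw [sub_smul, smul_inv_smul₀ (norm_ne_zero_iff.2 hy)]
      ring
    have h2 : |‖y‖ - ‖U‖| ≤ ‖y - U‖ := abs_norm_sub_norm_le y U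
    have h3 : |√(1 - c ^ 2) - ‖y‖| ≤ √(8 * μ) + μ / 2 := by
      have := abs_le.1 (h2.trans hyU)
      exact abs_le.2 ⟨by linarith, by linarith⟩
    rw [h1]
    refine (norm_add_le _ _).trans ?_
    rw [norm_smul, Real.norm_eq_abs]
    have h4 := mul_le_mul_of_nonneg_left (norm_direction_le_one y) (abs_nonneg (√(1 - c ^ 2) - ‖y‖))
    linarith
  · have hU' : ‖U‖ ≤ √(8 * μ) := Real.le_sqrt_of_sq_le hU
    refine (norm_sub_le _ _).trans ?_
    rw [norm_smul, Real.norm_eq_abs, abs_of_nonneg (Real.sqrt_nonneg _)]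
    have h4 := mul_le_mul_of_nonneg_left (norm_direction_le_one y) (Real.sqrt_nonneg (1 - c ^ 2))
    linarith

theorem FlagSystem.Step.flagInterp_eq {Φ : Type*} {F : FlagSystem Φ} {YF Ye Yv : Φ → ℂ}
    (hF₀ : ∀ ω, YF (F.r₀ ω) = YF ω) (hF₁ : ∀ ω, YF (F.r₁ ω) = YF ω)
    (he₀ : ∀ ω, Ye (F.r₀ ω) = Ye ω) (he₂ : ∀ ω, Ye (F.r₂ ω) = Ye ω)
    (hv₁ : ∀ ω, Yv (F.r₁ ω) = Yv ω) (hv₂ : ∀ ω, Yv (F.r₂ ω) = Yv ω)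
    {x y : Φ × (ℝ × ℝ)} (h : F.Step x y) :
    flagInterp YF Ye Yv y.1 y.2 = flagInterp YF Ye Yv x.1 x.2 := by
  obtain ⟨h1, ⟨h2, h3⟩ | ⟨h2, h3⟩ | ⟨h2, h3⟩⟩ := h
  · simp [flagInterp, h1, h3, h2, hF₀, he₀]
  · simp [flagInterp, h1, h3, h2, hF₁, hv₁]
  · simp [flagInterp, h1, h3, h2, he₂, hv₂]

theorem flagInterp_ne_zero {Φ : Type*} {AF Ae Av : Φ → ℝ} {YF Ye Yv : Φ → ℂ} {ω : Φ} {p : ℝ × ℝ}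
    (hF : (YF ω = 0 ∧ AF ω = 1 ∧ (conj (Yv ω) * Ye ω).im ≠ 0) ∨
      (Yv ω = 0 ∧ Av ω = -1 ∧ (conj (YF ω) * Ye ω).im ≠ 0)) (h : flagInterp YF Ye Yv ω p = 0) :
    flagLevel AF Ae Av ω p ^ 2 = 1 := by
  unfold flagInterp at h
  rcases hF with ⟨h0, h1, h2⟩ | ⟨h0, h1, h2⟩
  · rw [h0, mul_zero, zero_add] at h
    obtain ⟨e1, e2⟩ := eq_zero_of_combination_eq_zero h2 h
    have e3 : p.1 = 0 := by linarith
    simp [flagLevel, e2, e3, h1]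
  · rw [h0, mul_zero, add_zero, add_comm] at h
    obtain ⟨e1, e2⟩ := eq_zero_of_combination_eq_zero h2 h
    have e3 : p.1 = 1 := by linarith
    have e4 : p.2 = 1 := by linarith
    simp [flagLevel, e4, e3, h1]

theorem exists_isHeight_near {X Φ : Type*} [Finite Φ] {F : FlagSystem Φ} {q : Φ → ℝ × ℝ → X}
    (hstep : ∀ ω ω', ∀ p ∈ flagTriangle, F.Step (ω, p) (ω', p) → q ω' p = q ω p)
    (hker : ∀ ω ω', ∀ p ∈ flagTriangle, ∀ p' ∈ flagTriangle, q ω p = q ω' p' →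
      Relation.EqvGen F.Step (ω, p) (ω', p'))
    {U : X → ℂ} {V : X → ℝ} (hUV : ∀ x, ‖U x‖ ^ 2 + V x ^ 2 = 1) {μ : ℝ} (hμ : 0 < μ)
    (hμ' : μ ≤ 1 / 4)
    (hU : ∀ ω, ∀ p ∈ flagTriangle, ∀ p' ∈ flagTriangle, ‖U (q ω p) - U (q ω p')‖ ≤ μ / 4)
    (hV : ∀ ω, ∀ p ∈ flagTriangle, ∀ p' ∈ flagTriangle, |V (q ω p) - V (q ω p')| ≤ μ / 4) :
    ∃ (AF Ae Av : Φ → ℝ) (YF Ye Yv : Φ → ℂ), F.IsHeight AF Ae Av ∧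
      (∀ x y, F.Step x y → flagInterp YF Ye Yv y.1 y.2 = flagInterp YF Ye Yv x.1 x.2) ∧
      ∀ ω, ∀ p ∈ flagTriangle,
        (flagInterp YF Ye Yv ω p = 0 → flagLevel AF Ae Av ω p ^ 2 = 1) ∧
        |flagLevel AF Ae Av ω p - V (q ω p)| ≤ 4 * μ ∧
        ‖√(1 - flagLevel AF Ae Av ω p ^ 2) •
            (‖flagInterp YF Ye Yv ω p‖⁻¹ • flagInterp YF Ye Yv ω p) - U (q ω p)‖ ≤
          3 * √(8 * μ) + μ := by
  have hVle : ∀ x, -1 ≤ V x ∧ V x ≤ 1 := fun x =>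
    abs_le_of_sq_le_sq' (by nlinarith [hUV x, sq_nonneg ‖U x‖]) zero_le_one
  have m00 : ((0, 0) : ℝ × ℝ) ∈ flagTriangle := ⟨le_rfl, le_rfl, zero_le_one⟩
  have m10 : ((1, 0) : ℝ × ℝ) ∈ flagTriangle := ⟨le_rfl, zero_le_one, le_rfl⟩
  have m11 : ((1, 1) : ℝ × ℝ) ∈ flagTriangle := ⟨zero_le_one, le_rfl, le_rfl⟩
  -- Invariance of the three corners of the flags.
  have F₀ : ∀ ω, q (F.r₀ ω) (0, 0) = q ω (0, 0) := fun ω =>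
    hstep _ _ _ m00 ⟨rfl, Or.inl ⟨rfl, rfl⟩⟩
  have F₁ : ∀ ω, q (F.r₁ ω) (0, 0) = q ω (0, 0) := fun ω =>
    hstep _ _ _ m00 ⟨rfl, Or.inr (Or.inl ⟨rfl, rfl⟩)⟩
  have E₀ : ∀ ω, q (F.r₀ ω) (1, 0) = q ω (1, 0) := fun ω =>
    hstep _ _ _ m10 ⟨rfl, Or.inl ⟨rfl, rfl⟩⟩
  have E₂ : ∀ ω, q (F.r₂ ω) (1, 0) = q ω (1, 0) := fun ω =>
    hstep _ _ _ m10 ⟨rfl, Or.inr (Or.inr ⟨rfl, rfl⟩)⟩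
  have V₁ : ∀ ω, q (F.r₁ ω) (1, 1) = q ω (1, 1) := fun ω =>
    hstep _ _ _ m11 ⟨rfl, Or.inr (Or.inl ⟨rfl, rfl⟩)⟩
  have V₂ : ∀ ω, q (F.r₂ ω) (1, 1) = q ω (1, 1) := fun ω =>
    hstep _ _ _ m11 ⟨rfl, Or.inr (Or.inr ⟨rfl, rfl⟩)⟩
  -- The perturbed data at the corners.
  obtain ⟨A, hAinj, hA⟩ := exists_injective_near
    (fun x : Set.range fun ω => q ω (1, 0) => max (-1 + μ) (min (1 - μ) (V x)))
    (half_pos hμ)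
  have hν : 0 < μ / 4 := by positivity
  choose y hy0 hy using fun x => exists_ne_zero_near (U x) hν
  choose ye hye0 hye using fun x => exists_transverse_near
    (fun i : Φ ⊕ Φ => i.elim (fun ω => y (q ω (0, 0))) (fun ω => y (q ω (1, 1))))
    (by rintro (ω | ω) <;> exact hy0 _) (U x) hν
  classical
  let AF : Φ → ℝ := fun ω => min 1 (V (q ω (0, 0)) + 3 * μ)
  let Ae : Φ → ℝ := fun ω => A ⟨q ω (1, 0), ω, rfl⟩
  let Av : Φ → ℝ := fun ω => max (-1) (V (q ω (1, 1)) - 3 * μ)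
  let YF : Φ → ℂ := fun ω => if 1 ≤ V (q ω (0, 0)) + 3 * μ then 0 else y (q ω (0, 0))
  let Ye : Φ → ℂ := fun ω => ye (q ω (1, 0))
  let Yv : Φ → ℂ := fun ω => if V (q ω (1, 1)) - 3 * μ ≤ -1 then 0 else y (q ω (1, 1))
  have hAe : ∀ ω, |Ae ω - max (-1 + μ) (min (1 - μ) (V (q ω (1, 0))))| < μ / 2 := fun ω =>
    hA ⟨q ω (1, 0), ω, rfl⟩
  have hAe1 : ∀ ω, Ae ω < V (q ω (1, 0)) + 3 / 2 * μ ∧ V (q ω (1, 0)) - 3 / 2 * μ < Ae ω ∧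
      Ae ω < 1 - μ / 2 ∧ -1 + μ / 2 < Ae ω := by
    intro ω
    obtain ⟨h1, h2⟩ := abs_lt.1 (hAe ω)
    obtain ⟨h3, h4⟩ := hVle (q ω (1, 0))
    generalize Ae ω = t at *
    generalize V (q ω (1, 0)) = v at *
    rcases max_cases (-1 + μ) (min (1 - μ) v) with ⟨e, e'⟩ | ⟨e, e'⟩ <;>
      rcases min_cases (1 - μ) v with ⟨g, g'⟩ | ⟨g, g'⟩ <;>
      rw [e] at h1 h2 <;> refine ⟨?_, ?_, ?_, ?_⟩ <;> linarith
  have hH : F.IsHeight AF Ae Av :=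
    { AF_r₀ := fun ω => by simp only [AF, F₀]
      AF_r₁ := fun ω => by simp only [AF, F₁]
      Ae_r₀ := fun ω => by simp only [Ae, E₀]
      Ae_r₂ := fun ω => by simp only [Ae, E₂]
      Av_r₁ := fun ω => by simp only [Av, V₁]
      Av_r₂ := fun ω => by simp only [Av, V₂]
      Ae_lt := fun ω => by
        obtain ⟨h1, h2, h3, h4⟩ := hAe1 ω
        have := abs_le.1 (hV ω _ m00 _ m10)
        exact lt_min (by linarith) (by linarith)
      Av_lt := fun ω => by
        obtain ⟨h1, h2, h3, h4⟩ := hAe1 ω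
        have := abs_le.1 (hV ω _ m11 _ m10)
        exact max_lt (by linarith) (by linarith)
      AF_le := fun ω => min_le_left _ _
      le_Av := fun ω => le_max_left _ _
      Ae_inj := fun ω ω' h hs => by
        have h1 : q ω (1, 0) = q ω' (1, 0) := congrArg Subtype.val (hAinj h)
        rcases (FlagSystem.eqvGen_step_edge (hker _ _ _ m10 _ m10 h1)).2 rfl with h | h | h | h
        · exact Or.inl h
        · dsimp only at h
          rw [h, F.sgn_r₀] at hs
          simp at hs
        · dsimp only at h
          rw [h, F.sgn_r₂] at hs
          simp at hs
        · exact Or.inr h }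
  refine ⟨AF, Ae, Av, YF, Ye, Yv, hH, fun x y h => h.flagInterp_eq (fun ω => by simp only [YF, F₀])
    (fun ω => by simp only [YF, F₁]) (fun ω => by simp only [Ye, E₀])
    (fun ω => by simp only [Ye, E₂]) (fun ω => by simp only [Yv, V₁])
    (fun ω => by simp only [Yv, V₂]), fun ω p hp => ?_⟩
  have hlev : |flagLevel AF Ae Av ω p - V (q ω p)| ≤ 4 * μ := by
    have k1 := abs_le.1 (hV ω _ m00 _ hp)
    have k2 := abs_le.1 (hV ω _ m10 _ hp)
    have k3 := abs_le.1 (hV ω _ m11 _ hp)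
    obtain ⟨h1, h2, h3, h4⟩ := hAe1 ω
    have l1 := hVle (q ω (0, 0))
    have l3 := hVle (q ω (1, 1))
    refine abs_flagLevel_sub_le hp ?_ (abs_le.2 ⟨by linarith, by linarith⟩) ?_
    · have a1 : AF ω ≤ V (q ω (0, 0)) + 3 * μ := min_le_right _ _
      have a2 : V (q ω (0, 0)) ≤ AF ω := le_min l1.2 (by linarith)
      exact abs_le.2 ⟨by linarith, by linarith⟩
    · have a1 : V (q ω (1, 1)) - 3 * μ ≤ Av ω := le_max_right _ _
      have a2 : Av ω ≤ V (q ω (1, 1)) := max_le l3.1 (by linarith)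
      exact abs_le.2 ⟨by linarith, by linarith⟩
  have hlevm := hH.flagLevel_mem ω hp
  have tF := abs_le.1 (hV ω _ m00 _ hp)
  have tv := abs_le.1 (hV ω _ m11 _ hp)
  have hz := hUV (q ω p)
  have hVz := hVle (q ω p)
  have hdist : ∀ p₀ ∈ flagTriangle, ∀ w, ‖w - U (q ω p₀)‖ < μ / 4 → ‖w - U (q ω p)‖ ≤ μ / 2 := by
    intro p₀ hp₀ w hw
    have := norm_sub_le_norm_sub_add_norm_sub w (U (q ω p₀)) (U (q ω p))
    linarith [hU ω p₀ hp₀ p hp]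
  by_cases cF : 1 ≤ V (q ω (0, 0)) + 3 * μ
  · have cv : ¬ V (q ω (1, 1)) - 3 * μ ≤ -1 := fun h => by linarith
    have hYF : YF ω = 0 := if_pos cF
    have hYv : Yv ω = y (q ω (1, 1)) := if_neg cv
    refine ⟨flagInterp_ne_zero (Or.inl ⟨hYF, min_eq_left cF, ?_⟩), hlev,
      norm_sqrt_smul_direction_sub_le hμ.le hz hlevm hlev (Or.inr (by nlinarith))⟩
    rw [hYv]
    exact hye0 (q ω (1, 0)) (Sum.inr ω)
  by_cases cv : V (q ω (1, 1)) - 3 * μ ≤ -1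
  · have hYF : YF ω = y (q ω (0, 0)) := if_neg cF
    have hYv : Yv ω = 0 := if_pos cv
    refine ⟨flagInterp_ne_zero (Or.inr ⟨hYv, max_eq_left cv, ?_⟩), hlev,
      norm_sqrt_smul_direction_sub_le hμ.le hz hlevm hlev (Or.inr (by nlinarith))⟩
    rw [hYF]
    exact hye0 (q ω (1, 0)) (Sum.inl ω)
  · have hYF : YF ω = y (q ω (0, 0)) := if_neg cF
    have hYv : Yv ω = y (q ω (1, 1)) := if_neg cv
    have hY : ‖flagInterp YF Ye Yv ω p - U (q ω p)‖ ≤ μ / 2 :=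
      norm_flagInterp_sub_le hp (by rw [hYF]; exact hdist _ m00 _ (hy _))
        (hdist _ m10 _ (hye _)) (by rw [hYv]; exact hdist _ m11 _ (hy _))
    have hne : flagInterp YF Ye Yv ω p ≠ 0 := by
      intro h0
      rw [h0, zero_sub, norm_neg] at hY
      have := norm_nonneg (U (q ω p))
      nlinarith
    exact ⟨fun h => absurd h hne, hlev,
      norm_sqrt_smul_direction_sub_le hμ.le hz hlevm hlev (Or.inl ⟨hne, hY⟩)⟩

/-- The point of `ℝ³` with given horizontal part and height. -/
noncomputable def cylPoint (w : ℂ) (c : ℝ) : EuclideanSpace ℝ (Fin 3) := !₂[w.re, w.im, c]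

theorem norm_cylPoint_sq (w : ℂ) (c : ℝ) : ‖cylPoint w c‖ ^ 2 = ‖w‖ ^ 2 + c ^ 2 := by
  rw [EuclideanSpace.norm_sq_eq, Fin.sum_univ_three, Complex.sq_norm, Complex.normSq_apply]
  simp [cylPoint]
  ring

theorem cylPoint_sub (w w' : ℂ) (c c' : ℝ) :
    cylPoint w c - cylPoint w' c' = cylPoint (w - w') (c - c') := by
  ext i
  fin_cases i <;> simp [cylPoint]

theorem cylPoint_eq (x : EuclideanSpace ℝ (Fin 3)) : cylPoint ⟨x 0, x 1⟩ (x 2) = x := by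
  ext i
  fin_cases i <;> simp [cylPoint]

theorem norm_cylPoint_le (w : ℂ) (c : ℝ) : ‖cylPoint w c‖ ≤ ‖w‖ + |c| := by
  refine le_of_sq_le_sq ?_ (by positivity)
  rw [norm_cylPoint_sq]
  nlinarith [sq_abs c, mul_nonneg (norm_nonneg w) (abs_nonneg c)]

theorem norm_le_norm_cylPoint (w : ℂ) (c : ℝ) : ‖w‖ ≤ ‖cylPoint w c‖ := by
  refine le_of_sq_le_sq ?_ (norm_nonneg _)
  rw [norm_cylPoint_sq]
  nlinarith [sq_nonneg c]

theorem abs_le_norm_cylPoint (w : ℂ) (c : ℝ) : |c| ≤ ‖cylPoint w c‖ := by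
  refine le_of_sq_le_sq ?_ (norm_nonneg _)
  rw [norm_cylPoint_sq, sq_abs]
  nlinarith [sq_nonneg ‖w‖]

theorem continuous_cylPoint : Continuous fun x : ℂ × ℝ => cylPoint x.1 x.2 := by
  unfold cylPoint
  refine (PiLp.continuous_toLp 2 _).comp (continuous_pi fun i => ?_)
  fin_cases i
  · exact Complex.continuous_re.comp continuous_fst
  · exact Complex.continuous_im.comp continuous_fst
  · exact continuous_snd

theorem norm_cylPoint_direction {y : ℂ} {c : ℝ} (hc : c ∈ Set.Icc (-1 : ℝ) 1)
    (h : y = 0 → c ^ 2 = 1) : ‖cylPoint (√(1 - c ^ 2) • (‖y‖⁻¹ • y)) c‖ = 1 := by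
  have hc2 : 0 ≤ 1 - c ^ 2 := by nlinarith [hc.1, hc.2]
  rw [← sq_eq_sq₀ (norm_nonneg _) zero_le_one, norm_cylPoint_sq, norm_smul, mul_pow,
    Real.norm_eq_abs, sq_abs, Real.sq_sqrt hc2]
  by_cases h0 : y = 0
  · simp [h0, h h0]
  · rw [norm_smul, norm_inv, norm_norm, inv_mul_cancel₀ (norm_ne_zero_iff.2 h0)]
    ring

theorem isCompact_flagTriangle : IsCompact flagTriangle := by
  refine (isCompact_Icc.prod isCompact_Icc).of_isClosed_subset ?_
    (fun p hp => ⟨(mem_Icc_of_mem_flagTriangle hp).1, (mem_Icc_of_mem_flagTriangle hp).2⟩)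
  exact (isClosed_le continuous_const continuous_snd).inter
    ((isClosed_le continuous_snd continuous_fst).inter (isClosed_le continuous_fst continuous_const))

theorem exists_small_scale {ε : ℝ} (hε : 0 < ε) :
    ∃ μ : ℝ, 0 < μ ∧ μ ≤ 1 / 4 ∧ 3 * √(8 * μ) + 5 * μ < ε := by
  have hc : Continuous fun μ : ℝ => 3 * √(8 * μ) + 5 * μ := by fun_prop
  have h1 : ∀ᶠ μ in nhdsWithin (0 : ℝ) (Set.Ioi 0), 3 * √(8 * μ) + 5 * μ < ε :=
    (hc.tendsto' 0 0 (by simp)).eventually_lt_const hε |>.filter_mono nhdsWithin_le_nhds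
  have h2 : ∀ᶠ μ in nhdsWithin (0 : ℝ) (Set.Ioi 0), μ ∈ Set.Ioc (0 : ℝ) (1 / 4) :=
    Ioc_mem_nhdsGT (by norm_num)
  obtain ⟨μ, h1, h2⟩ := (h1.and h2).exists
  exact ⟨μ, h2.1, h2.2, h1⟩

theorem FlagSystem.eqvGen_step_congr {Φ Z : Type*} {F : FlagSystem Φ} {G : Φ × (ℝ × ℝ) → Z}
    (hG : ∀ ω ω', ∀ p ∈ flagTriangle, F.Step (ω, p) (ω', p) → G (ω', p) = G (ω, p))
    {x y : Φ × (ℝ × ℝ)} (h : Relation.EqvGen F.Step x y) :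
    x.2 = y.2 ∧ (x.2 ∈ flagTriangle → G x = G y) := by
  induction h with
  | rel x y h =>
    obtain ⟨ω, p⟩ := x
    obtain ⟨ω', p'⟩ := y
    obtain rfl : p' = p := h.1
    exact ⟨rfl, fun hp => (hG _ _ _ hp h).symm⟩
  | refl x => exact ⟨rfl, fun _ => rfl⟩
  | symm x y _ ih => exact ⟨ih.1.symm, fun hp => (ih.2 (ih.1 ▸ hp)).symm⟩
  | trans x y z _ _ ih ih' =>
    exact ⟨ih.1.trans ih'.1, fun hp => (ih.2 hp).trans (ih'.2 (ih.1 ▸ hp))⟩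

/-- A family of maps on flag triangles with the same fibres as a flag parametrization descends
to a continuous injective map. -/
theorem exists_continuous_injective_descent {X Z Φ : Type*} [TopologicalSpace X] [T2Space X]
    [TopologicalSpace Z] [Finite Φ] {q : Φ → ℝ × ℝ → X} (hq : ∀ ω, Continuous (q ω))
    (hsurj : ∀ z, ∃ ω, ∃ p ∈ flagTriangle, q ω p = z) {G : Φ → ℝ × ℝ → Z}
    (hG : ∀ ω, ContinuousOn (G ω) flagTriangle)
    (hqG : ∀ ω ω', ∀ p ∈ flagTriangle, ∀ p' ∈ flagTriangle, q ω p = q ω' p' ↔ G ω p = G ω' p') :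
    ∃ g : X → Z, Continuous g ∧ Function.Injective g ∧
      ∀ ω, ∀ p ∈ flagTriangle, g (q ω p) = G ω p := by
  let _ : TopologicalSpace Φ := ⊥
  have : DiscreteTopology Φ := ⟨rfl⟩
  have : CompactSpace flagTriangle := isCompact_iff_compactSpace.1 isCompact_flagTriangle
  let Q : Φ × flagTriangle → X := fun x => q x.1 x.2
  have hQc : Continuous Q := continuous_prod_of_discrete_left.2 fun ω =>
    (hq ω).comp continuous_subtype_val
  have hQs : Function.Surjective Q := fun z => by
    obtain ⟨ω, p, hp, h⟩ := hsurj z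
    exact ⟨(ω, ⟨p, hp⟩), h⟩
  have hQ : Topology.IsQuotientMap Q := hQc.isClosedMap.isQuotientMap hQc hQs
  have hGc : Continuous fun x : Φ × flagTriangle => G x.1 x.2 :=
    continuous_prod_of_discrete_left.2 fun ω => (hG ω).domRestrict
  let g : X → Z := fun z => G (Function.surjInv hQs z).1 (Function.surjInv hQs z).2
  have hg : ∀ x, g (Q x) = G x.1 x.2 := fun x =>
    (hqG _ _ _ (Subtype.prop _) _ x.2.2).1 (Function.surjInv_eq hQs (Q x))
  refine ⟨g, ?_, ?_, fun ω p hp => hg (ω, ⟨p, hp⟩)⟩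
  · rw [hQ.continuous_iff]
    exact hGc.congr fun x => (hg x).symm
  · intro z z' h
    obtain ⟨x, rfl⟩ := hQs z
    obtain ⟨y, rfl⟩ := hQs z'
    rw [hg, hg] at h
    exact (hqG _ _ _ x.2.2 _ y.2.2).2 h

/-- Yamamoto–Akhmetiev, M = S²: every continuous self-map of S² is realizable
in ℝ⁴: its composition with the standard inclusion S² ⊂ ℝ³ × ℝ is approximable by
(topological) embeddings. -/
theorem selfmap_two_sphere_realizable
    (f : Metric.sphere (0 : EuclideanSpace ℝ (Fin 3)) 1 →
         Metric.sphere (0 : EuclideanSpace ℝ (Fin 3)) 1)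
    (hf : Continuous f) (ε : ℝ) (hε : 0 < ε) :
    ∃ g : Metric.sphere (0 : EuclideanSpace ℝ (Fin 3)) 1 → EuclideanSpace ℝ (Fin 3) × ℝ,
      Continuous g ∧ Function.Injective g ∧
      ∀ x, dist (g x) (((f x : EuclideanSpace ℝ (Fin 3)), (0 : ℝ))) < ε := by
  obtain ⟨μ, hμ, hμ', hμε⟩ := exists_small_scale (half_pos hε)
  obtain ⟨δ, hδ, hfδ⟩ := Metric.uniformContinuous_iff.1
    (CompactSpace.uniformContinuous_of_continuous hf) (μ / 4) (by positivity)
  obtain ⟨Φ, hΦ, F, q, hq, hsurj, hstep, hker, hmesh⟩ := exists_flag_parametrization hδ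
  let U : Metric.sphere (0 : EuclideanSpace ℝ (Fin 3)) 1 → ℂ := fun x => ⟨(f x).1 0, (f x).1 1⟩
  let V : Metric.sphere (0 : EuclideanSpace ℝ (Fin 3)) 1 → ℝ := fun x => (f x).1 2
  have hfUV : ∀ x, cylPoint (U x) (V x) = (f x).1 := fun x => cylPoint_eq _
  have hUV : ∀ x, ‖U x‖ ^ 2 + V x ^ 2 = 1 := fun x => by
    rw [← norm_cylPoint_sq, hfUV, mem_sphere_zero_iff_norm.1 (f x).2, one_pow]
  have hdist : ∀ ω, ∀ p ∈ flagTriangle, ∀ p' ∈ flagTriangle,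
      ‖cylPoint (U (q ω p) - U (q ω p')) (V (q ω p) - V (q ω p'))‖ ≤ μ / 4 := by
    intro ω p hp p' hp'
    rw [← cylPoint_sub, hfUV, hfUV, ← dist_eq_norm]
    exact (hfδ (hmesh ω p hp p' hp')).le
  obtain ⟨AF, Ae, Av, YF, Ye, Yv, hA, hYstep, hest⟩ := exists_isHeight_near hstep hker hUV hμ hμ'
    (fun ω p hp p' hp' => (norm_le_norm_cylPoint _ _).trans (hdist ω p hp p' hp'))
    (fun ω p hp p' hp' => (abs_le_norm_cylPoint _ _).trans (hdist ω p hp p' hp'))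
  obtain ⟨H, hHc, hHstep, hHinj⟩ := hA.exists_levelwise_embedding
  choose C hC using fun ω => isCompact_flagTriangle.exists_bound_of_continuousOn (hHc ω)
  obtain ⟨B, hB⟩ := (Set.finite_range C).bddAbove
  replace hB : ∀ ω, ∀ p ∈ flagTriangle, ‖H ω p‖ ≤ |B| := fun ω p hp =>
    (hC ω p hp).trans ((hB ⟨ω, rfl⟩).trans (le_abs_self B))
  let η : ℝ := min (1 / 2) (ε / 2) / (|B| + 1)
  have hη : 0 < η := by positivity
  have hηH : ∀ ω, ∀ p ∈ flagTriangle, η * ‖H ω p‖ < min (1 / 2) (ε / 2) := by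
    intro ω p hp
    have h1 : η * (|B| + 1) = min (1 / 2) (ε / 2) := div_mul_cancel₀ _ (by positivity)
    have h2 := mul_le_mul_of_nonneg_left (hB ω p hp) hη.le
    linarith
  let K : Φ → ℝ × ℝ → EuclideanSpace ℝ (Fin 3) := fun ω p =>
    cylPoint (√(1 - flagLevel AF Ae Av ω p ^ 2) •
      (‖flagInterp YF Ye Yv ω p‖⁻¹ • flagInterp YF Ye Yv ω p)) (flagLevel AF Ae Av ω p)
  have hKnorm : ∀ ω, ∀ p ∈ flagTriangle, ‖K ω p‖ = 1 := fun ω p hp =>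
    norm_cylPoint_direction (hA.flagLevel_mem ω hp) (hest ω p hp).1
  have hKc : ∀ ω, ContinuousOn (K ω) flagTriangle := by
    intro ω
    have hc := FlagSystem.continuous_flagLevel AF Ae Av ω
    refine continuous_cylPoint.comp_continuousOn (ContinuousOn.prodMk
      (continuousOn_smul_direction (by fun_prop) (continuous_flagInterp YF Ye Yv ω).continuousOn
        fun p hp h0 => ?_) hc.continuousOn)
    rw [(hest ω p hp).1 h0, sub_self, Real.sqrt_zero]
  let G : Φ → ℝ × ℝ → EuclideanSpace ℝ (Fin 3) × ℝ := fun ω p =>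
    ((1 + η * (H ω p).re) • K ω p, η * (H ω p).im)
  have hGc : ∀ ω, ContinuousOn (G ω) flagTriangle := fun ω =>
    ((continuousOn_const.add (continuousOn_const.mul
      (Complex.continuous_re.comp_continuousOn (hHc ω)))).smul (hKc ω)).prodMk
      (continuousOn_const.mul (Complex.continuous_im.comp_continuousOn (hHc ω)))
  have hpos : ∀ ω, ∀ p ∈ flagTriangle, 0 < 1 + η * (H ω p).re := by
    intro ω p hp
    have h1 := (abs_le.1 (Complex.abs_re_le_norm (H ω p))).1
    have h2 := mul_le_mul_of_nonneg_left h1 hη.le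
    have h3 := (hηH ω p hp).trans_le (min_le_left _ _)
    linarith
  have hGstep : ∀ ω ω', ∀ p ∈ flagTriangle, F.Step (ω, p) (ω', p) → G ω' p = G ω p := by
    intro ω ω' p hp h
    have e1 : flagInterp YF Ye Yv ω' p = flagInterp YF Ye Yv ω p := hYstep _ _ h
    have e2 : flagLevel AF Ae Av ω' p = flagLevel AF Ae Av ω p :=
      FlagSystem.Step.flagLevel_eq hA h
    simp only [G, K, e1, e2, hHstep ω ω' p hp h]
  obtain ⟨g, hg, hginj, hgG⟩ := exists_continuous_injective_descent hq hsurj hGc (by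
    intro ω ω' p hp p' hp'
    constructor
    · intro h
      exact (FlagSystem.eqvGen_step_congr (G := fun x => G x.1 x.2) hGstep
        (hker ω ω' p hp p' hp' h)).2 hp
    · intro h
      obtain ⟨h1, h2⟩ := Prod.ext_iff.1 h
      have hre : 1 + η * (H ω p).re = 1 + η * (H ω' p').re := by
        have := congrArg norm h1
        simpa [G, norm_smul, hKnorm ω p hp, hKnorm ω' p' hp', abs_of_pos (hpos ω p hp),
          abs_of_pos (hpos ω' p' hp')] using this
      have hH : H ω p = H ω' p' := Complex.ext
        (mul_left_cancel₀ hη.ne' (add_left_cancel hre)) (mul_left_cancel₀ hη.ne' h2)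
      have hK : K ω p = K ω' p' := by
        have : (1 + η * (H ω p).re) • K ω p = (1 + η * (H ω' p').re) • K ω' p' := h1
        rw [hre] at this
        exact smul_right_injective _ (hpos ω' p' hp').ne' this
      have hlev : flagLevel AF Ae Av ω p = flagLevel AF Ae Av ω' p' := by
        have := congrArg (fun x => x 2) hK
        simpa [K, cylPoint] using this
      exact (FlagSystem.eqvGen_step_congr (G := fun x => q x.1 x.2) hstep
        (hHinj ω ω' p hp p' hp' hlev hH)).2 hp)
  refine ⟨g, hg, hginj, fun x => ?_⟩
  obtain ⟨ω, p, hp, rfl⟩ := hsurj x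
  rw [hgG ω p hp]
  have hηε := (hηH ω p hp).trans_le (min_le_right _ _)
  have hre := mul_le_mul_of_nonneg_left (Complex.abs_re_le_norm (H ω p)) hη.le
  have him := mul_le_mul_of_nonneg_left (Complex.abs_im_le_norm (H ω p)) hη.le
  have hKf : ‖K ω p - (f (q ω p)).1‖ ≤ 3 * √(8 * μ) + 5 * μ := by
    rw [← hfUV, cylPoint_sub]
    refine (norm_cylPoint_le _ _).trans ?_
    linarith [(hest ω p hp).2.1, (hest ω p hp).2.2]
  refine max_lt ?_ ?_
  · have e : (1 + η * (H ω p).re) • K ω p - (f (q ω p)).1 =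
        (K ω p - (f (q ω p)).1) + (η * (H ω p).re) • K ω p := by
      rw [add_smul, one_smul]
      abel
    rw [dist_eq_norm, e]
    refine (norm_add_le _ _).trans_lt ?_
    rw [norm_smul, hKnorm ω p hp, mul_one, Real.norm_eq_abs, abs_mul, abs_of_pos hη]
    linarith
  · rw [Real.dist_eq, sub_zero, abs_mul, abs_of_pos hη]
    linarith
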